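/- arXiv:math/9701224 — 3 statements merged into one kernel-verified Lean document; each statement's English description precedes it below -/
import Mathlib

section
/- Let X be a vertex-reinforced random walk on ℤ started at 0 and let R be its range. Then P(|R| = 5) > 0 and P(|R| < ∞) = 1; that is, with positive probability the walk visits exactly 5 sites, and almost surely it visits only finitely many sites. -/
/-!
The proof is a potential (supermartingale) argument.

Fix a site `k` and let `L`, `x`, `y`, `w` be the occupation numbers of `k - 1`, `k`, `k + 1`,
`k + 2`. Apart from the visits to `k + 1` coming from `k + 2`, and likewise on the left, the pair
`(L, y)` is a Pólya urn driven by the steps out of `k`, so functions such as `y / (L + y)` or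
`L y / ((L + y)(L + y + 1))` are martingales at these steps. If the urn is not too unbalanced, then
`w` grows only like a power of `x` smaller than one, and `w / (x + w)`, with small corrections when
the walk is at `k + 1` or `k + 2`, is a supermartingale (`centre_ineq`, `one_ineq`). The corrections
absorb the changes of the urn caused by visits to `k + 2` and also pay for the probability
`1 / (y + 1)` of stepping from `k + 2` to the fresh site `k + 3` (`two_ineq`). Hence the sum of an
urn martingale and `S`, truncated at one, bounds the probability of ever reaching `k + 3`.

*Finiteness.* The potential `U₁` uses the urn martingale `2 y / (L + y)`, which decreases in `L`;
therefore what happens to the left of `k` can only help, and `U₁` is a supermartingale from the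
first visit to `k > 0` on, whatever the past (`drift_U₁`). While `k + 1` is unvisited, the bound
`H₁ = 1 - min x 200 / 400` is used instead; it equals `199 / 200` at the first visit to `k`. So
`P(hit k + 3) ≤ 199 / 200 * P(hit k)` (`measure_hit_le`), and the walk is almost surely bounded
above; by reflection it is bounded below.

*Range of size five.* The potential `U₂` around `0` uses a symmetric urn martingale `Q2` and one
copy of `S` on each side, and is a supermartingale until `3` or `-3` is visited (`drift_U₂`). With
positive probability the walk visits `±2` once and then oscillates around `0` five hundred times
(`exists_state`). Then `U₂ ≤ 1 / 2`, so with conditional probability at least `1 / 2` the walk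
never leaves `{-2, …, 2}` (`trap_potential`), all of which has been visited.
-/

open MeasureTheory Filter Set

/-- Augmented occupation number: one plus the number of visits of `X` to `w` up through
time `n`. -/
noncomputable def occ {Ω : Type*} (X : ℕ → Ω → ℤ) (n : ℕ) (w : ℤ) (ω : Ω) : ℝ :=
  1 + ((Finset.range (n + 1)).filter (fun i => X i ω = w)).card

/-- Vertex-reinforced random walk on `ℤ` started at `v`: adapted, starts at `v`, and the
conditional probability of moving to `x` is `1_{|x - Xₙ| = 1} Z(n,x)/(Z(n,Xₙ-1)+Z(n,Xₙ+1))`. -/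
def IsVRRW {Ω : Type*} {mΩ : MeasurableSpace Ω} (μ : Measure Ω)
    (ℱ : Filtration ℕ mΩ) (v : ℤ) (X : ℕ → Ω → ℤ) : Prop :=
  Adapted ℱ X ∧ (∀ ω, X 0 ω = v) ∧
    ∀ n x, (μ[fun ω => if X (n + 1) ω = x then (1 : ℝ) else 0 | ℱ n]) =ᵐ[μ]
      fun ω => if |x - X n ω| = 1 then
        occ X n x ω / (occ X n (X n ω - 1) ω + occ X n (X n ω + 1) ω) else 0

/-! ### Means over one step of the walk -/

section Step

variable {Ω : Type*} {mΩ : MeasurableSpace Ω} {μ : Measure Ω} {ℱ : Filtration ℕ mΩ} {v : ℤ}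
  {X : ℕ → Ω → ℤ}

/-- The profile of occupation numbers after one more visit to `z`. -/
def up (Z : ℤ → ℝ) (z : ℤ) : ℤ → ℝ := fun i => Z i + if i = z then 1 else 0

/-- The mean of `f` after one step of the walk from `p` with occupation numbers `Z`. -/
noncomputable def drift (Z : ℤ → ℝ) (p : ℤ) (f : ℤ → ℝ) : ℝ :=
  Z (p + 1) / (Z (p - 1) + Z (p + 1)) * f (p + 1) + Z (p - 1) / (Z (p - 1) + Z (p + 1)) * f (p - 1)

lemma one_le_occ (n : ℕ) (w : ℤ) (ω : Ω) : 1 ≤ occ X n w ω := by simp [occ]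

lemma occ_succ (n : ℕ) (ω : Ω) :
    (fun w => occ X (n + 1) w ω) = up (fun w => occ X n w ω) (X (n + 1) ω) := by
  funext w
  simp only [occ, up]
  rw [Finset.range_add_one (n := n + 1), Finset.filter_insert]
  by_cases h : X (n + 1) ω = w
  · simp [h]; ring
  · rw [if_neg h, if_neg (Ne.symm h), add_zero]

lemma occ_zero (w : ℤ) (ω : Ω) : occ X 0 w ω = up (fun _ => 1) (X 0 ω) w := by
  by_cases h : X 0 ω = w
  · simp [occ, up, h, Finset.filter_singleton]
  · simp [occ, up, h, Ne.symm h, Finset.filter_singleton]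

lemma occ_self (n : ℕ) (ω : Ω) : 2 ≤ occ X n (X n ω) ω := by
  have : 0 < ((Finset.range (n + 1)).filter (fun i => X i ω = X n ω)).card :=
    Finset.card_pos.2 ⟨n, by simp⟩
  have : (1 : ℝ) ≤ ((Finset.range (n + 1)).filter (fun i => X i ω = X n ω)).card := by
    exact_mod_cast this
  simp only [occ]; linarith

lemma occ_eq_one_iff (n : ℕ) (w : ℤ) (ω : Ω) : occ X n w ω = 1 ↔ ∀ i ≤ n, X i ω ≠ w := by
  simp [occ, Finset.filter_eq_empty_iff]

/-- A quantity determined by the first `n + 1` positions is `ℱ n`-measurable, because the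
positions take countably many values. -/
lemma measurable_of_hist {β : Type*} [MeasurableSpace β] [Nonempty β] (hX : Adapted ℱ X) (n : ℕ)
    {f : Ω → β} (hf : ∀ ω ω', (∀ i ≤ n, X i ω = X i ω') → f ω = f ω') : Measurable[ℱ n] f := by
  let H : Ω → (Fin (n + 1) → ℤ) := fun ω i => X i ω
  have hH : Measurable[ℱ n] H := by
    rw [@measurable_pi_iff]
    intro i
    exact (hX i).mono (ℱ.mono (Nat.lt_succ_iff.1 i.2)) le_rfl
  have hfac : Function.FactorsThrough f H := by
    intro ω ω' h
    exact hf ω ω' fun i hi => congrFun h ⟨i, Nat.lt_succ_iff.2 hi⟩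
  obtain ⟨e, rfl⟩ := (Function.factorsThrough_iff f).1 hfac
  exact Measurable.of_discrete.comp hH

lemma occ_congr {n : ℕ} {ω ω' : Ω} (h : ∀ i ≤ n, X i ω = X i ω') (w : ℤ) :
    occ X n w ω = occ X n w ω' := by
  simp only [occ]
  congr 3
  apply Finset.filter_congr
  intro i hi
  rw [h i (Nat.lt_succ_iff.1 (Finset.mem_range.1 hi))]

/-- The transition probability from the position at time `n` to `x`. -/
noncomputable def stepProb (X : ℕ → Ω → ℤ) (n : ℕ) (x : ℤ) (ω : Ω) : ℝ :=
  if |x - X n ω| = 1 then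
    occ X n x ω / (occ X n (X n ω - 1) ω + occ X n (X n ω + 1) ω) else 0

lemma stepProb_nonneg (n : ℕ) (x : ℤ) (ω : Ω) : 0 ≤ stepProb X n x ω := by
  unfold stepProb
  have := one_le_occ (X := X) n x ω
  have := one_le_occ (X := X) n (X n ω - 1) ω
  have := one_le_occ (X := X) n (X n ω + 1) ω
  split_ifs
  · positivity
  · exact le_rfl

lemma measurable_stepProb (hX : Adapted ℱ X) (n : ℕ) (x : ℤ) :
    Measurable[ℱ n] (stepProb X n x) := by
  apply measurable_of_hist hX
  intro ω ω' h
  simp only [stepProb, h n le_rfl, occ_congr h]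

lemma measurableSet_pos_eq (hX : Adapted ℱ X) (n : ℕ) (z : ℤ) : MeasurableSet {ω | X n ω = z} :=
  (hX n).mono (ℱ.le n) le_rfl (measurableSet_singleton z)

lemma measure_inter_step [IsProbabilityMeasure μ] (hX : IsVRRW μ ℱ v X) (n : ℕ) (z : ℤ)
    {A : Set Ω} (hA : MeasurableSet[ℱ n] A) :
    μ (A ∩ {ω | X (n + 1) ω = z}) = ∫⁻ ω in A, ENNReal.ofReal (stepProb X n z ω) ∂μ := by
  have hA' := ℱ.le n A hA
  have hB := measurableSet_pos_eq hX.1 (n + 1) z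
  have hf_int : Integrable (fun ω => if X (n + 1) ω = z then (1 : ℝ) else 0) μ := by
    have : (fun ω => if X (n + 1) ω = z then (1 : ℝ) else 0)
        = {ω | X (n + 1) ω = z}.indicator (fun _ => 1) := by
      funext ω; simp [Set.indicator_apply]
    rw [this]
    exact (integrable_const 1).indicator hB
  have hq := hX.2.2 n z
  have hti : Integrable (stepProb X n z) μ := integrable_condExp.congr hq
  have h1 := setIntegral_condExp (ℱ.le n) hf_int hA
  have h2 : ∫ ω in A, (μ[fun ω => if X (n + 1) ω = z then (1 : ℝ) else 0 | ℱ n]) ω ∂μ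
      = ∫ ω in A, stepProb X n z ω ∂μ := integral_congr_ae (ae_restrict_of_ae hq)
  rw [h2] at h1
  rw [← ofReal_integral_eq_lintegral_ofReal hti.integrableOn
    (Eventually.of_forall fun ω => stepProb_nonneg n z ω), h1,
    ofReal_integral_eq_lintegral_ofReal hf_int.integrableOn
    (Eventually.of_forall fun ω => by dsimp; split_ifs <;> norm_num)]
  have : (fun ω => ENNReal.ofReal (if X (n + 1) ω = z then (1 : ℝ) else 0))
        = {ω | X (n + 1) ω = z}.indicator (fun _ => 1) := by
      funext ω; simp only [Set.indicator_apply, Set.mem_ofPred_eq]; split_ifs <;> simp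
  rw [this, Set.inter_comm, ← Measure.restrict_apply hB]
  exact (lintegral_indicator_one hB).symm

lemma lintegral_step_single [IsProbabilityMeasure μ] (hX : IsVRRW μ ℱ v X) (n : ℕ) (z : ℤ)
    {g : Ω → ENNReal} (hg : Measurable[ℱ n] g) :
    ∫⁻ ω in {ω | X (n + 1) ω = z}, g ω ∂μ = ∫⁻ ω, ENNReal.ofReal (stepProb X n z ω) * g ω ∂μ := by
  have hq : Measurable (fun ω => ENNReal.ofReal (stepProb X n z ω)) :=
    ((measurable_stepProb hX.1 n z).mono (ℱ.le n) le_rfl).ennreal_ofReal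
  have key : (μ.restrict {ω | X (n + 1) ω = z}).trim (ℱ.le n)
      = (μ.withDensity fun ω => ENNReal.ofReal (stepProb X n z ω)).trim (ℱ.le n) := by
    refine @Measure.ext _ (ℱ n) _ _ fun A hA => ?_
    rw [trim_measurableSet_eq (ℱ.le n) hA, trim_measurableSet_eq (ℱ.le n) hA,
      Measure.restrict_apply (ℱ.le n A hA), withDensity_apply _ (ℱ.le n A hA),
      measure_inter_step hX n z hA]
  rw [← lintegral_trim (ℱ.le n) hg, key, lintegral_trim (ℱ.le n) hg,
    lintegral_withDensity_eq_lintegral_mul _ hq (hg.mono (ℱ.le n) le_rfl)]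
  rfl

/-- One step of the walk: the mean of a functional of the past and the next position. -/
lemma lintegral_step [IsProbabilityMeasure μ] (hX : IsVRRW μ ℱ v X) (n : ℕ) (f : Ω → ℤ → ℝ)
    (hf : ∀ z, Measurable[ℱ n] (fun ω => f ω z)) (hf0 : ∀ ω z, 0 ≤ f ω z) :
    ∫⁻ ω, ENNReal.ofReal (f ω (X (n + 1) ω)) ∂μ
      = ∫⁻ ω, ENNReal.ofReal (drift (fun w => occ X n w ω) (X n ω) (f ω)) ∂μ := by
  have hm : ∀ z, Measurable fun ω => ENNReal.ofReal (f ω z) := fun z =>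
    ((hf z).mono (ℱ.le n) le_rfl).ennreal_ofReal
  have hq : ∀ z, Measurable (fun ω => ENNReal.ofReal (stepProb X n z ω)) := fun z =>
    ((measurable_stepProb hX.1 n z).mono (ℱ.le n) le_rfl).ennreal_ofReal
  have h1 : ∀ ω, ENNReal.ofReal (f ω (X (n + 1) ω))
      = ∑' z, {ω | X (n + 1) ω = z}.indicator (fun ω => ENNReal.ofReal (f ω z)) ω := by
    intro ω
    rw [tsum_eq_single (X (n + 1) ω)]
    · simp
    · intro z hz
      simp [Ne.symm hz]
  have h2 : ∀ ω, ENNReal.ofReal (drift (fun w => occ X n w ω) (X n ω) (f ω))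
      = ∑' z, ENNReal.ofReal (stepProb X n z ω) * ENNReal.ofReal (f ω z) := by
    intro ω
    have hne : X n ω + 1 ≠ X n ω - 1 := by omega
    rw [tsum_eq_sum (s := {X n ω + 1, X n ω - 1}), Finset.sum_pair hne]
    · have a1 : stepProb X n (X n ω + 1) ω = occ X n (X n ω + 1) ω
          / (occ X n (X n ω - 1) ω + occ X n (X n ω + 1) ω) := by simp [stepProb]
      have a2 : stepProb X n (X n ω - 1) ω = occ X n (X n ω - 1) ω
          / (occ X n (X n ω - 1) ω + occ X n (X n ω + 1) ω) := by simp [stepProb]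
      rw [← ENNReal.ofReal_mul (stepProb_nonneg _ _ _), ← ENNReal.ofReal_mul (stepProb_nonneg _ _ _),
        ← ENNReal.ofReal_add (mul_nonneg (stepProb_nonneg _ _ _) (hf0 _ _))
          (mul_nonneg (stepProb_nonneg _ _ _) (hf0 _ _)), a1, a2]
      rfl
    · intro z hz
      have : ¬ |z - X n ω| = 1 := by
        intro h
        apply hz
        rw [Finset.mem_insert, Finset.mem_singleton]
        rcases (abs_eq zero_le_one).1 h with h | h <;> omega
      simp [stepProb, this]
  simp_rw [h1, h2]
  rw [lintegral_tsum, lintegral_tsum]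
  · congr 1
    funext z
    rw [lintegral_indicator (measurableSet_pos_eq hX.1 (n + 1) z),
      lintegral_step_single hX n z (hf z).ennreal_ofReal]
  · exact fun z => ((hq z).mul (hm z)).aemeasurable
  · exact fun z => ((hm z).indicator (measurableSet_pos_eq hX.1 (n + 1) z)).aemeasurable

/-- Almost surely, every step of the walk is to a nearest neighbour. -/
lemma ae_nn [IsProbabilityMeasure μ] (hX : IsVRRW μ ℱ v X) :
    ∀ᵐ ω ∂μ, ∀ n, |X (n + 1) ω - X n ω| = 1 := by
  rw [ae_all_iff]
  intro n
  have h := lintegral_step hX n (fun ω z => if |z - X n ω| = 1 then 0 else 1)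
    (fun z => measurable_of_hist hX.1 n fun ω ω' h => by simp only [h n le_rfl])
    (fun ω z => by split_ifs <;> norm_num)
  have h0 : ∀ ω, drift (fun w => occ X n w ω) (X n ω) (fun z => if |z - X n ω| = 1 then 0 else 1)
      = 0 := by intro ω; simp [drift]
  simp only [h0, ENNReal.ofReal_zero, lintegral_zero] at h
  rw [lintegral_eq_zero_iff] at h
  · filter_upwards [h] with ω hω
    by_contra hc
    simp [hc] at hω
  · have : Measurable[ℱ (n + 1)] fun ω => ENNReal.ofReal
        (if |X (n + 1) ω - X n ω| = 1 then 0 else 1) :=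
      measurable_of_hist hX.1 (n + 1) fun ω ω' h => by
        simp only [h n (Nat.le_succ n), h (n + 1) le_rfl]
    exact this.mono (ℱ.le _) le_rfl

/-- The reflection of a vertex-reinforced random walk is again one. -/
lemma IsVRRW.neg (hX : IsVRRW μ ℱ 0 X) : IsVRRW μ ℱ 0 (fun n ω => - X n ω) := by
  have hocc : ∀ n x ω, occ (fun n ω => - X n ω) n x ω = occ X n (-x) ω := by
    intro n x ω
    simp only [occ, neg_eq_iff_eq_neg]
  refine ⟨fun n => (hX.1 n).neg, fun ω => by simp [hX.2.1 ω], fun n x => ?_⟩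
  have h := hX.2.2 n (-x)
  simp only [neg_eq_iff_eq_neg]
  refine h.trans (Eventually.of_forall fun ω => ?_)
  have : |x - -X n ω| = |-x - X n ω| := by rw [← abs_neg]; congr 1; ring
  dsimp only
  rw [this, hocc, hocc, hocc, add_comm]
  congr 4 <;> ring

end Step

/-! ### Scalar inequalities -/

/-- The supermartingale property of `S` at `k`, where `L`, `x`, `y`, `w` are the occupation numbers of
`k - 1`, `k`, `k + 1`, `k + 2`. The last hypothesis will follow from `y ≤ 3 L` and the relations
between occupation numbers in `Inv₁` and `Inv₂`. -/
lemma centre_ineq {L x y w : ℝ} (hL : 0 < L) (hx : 0 < x) (hy : 0 < y) (hw : 0 < w)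
    (h : x + w + 1 ≤ 7 * L) :
    y / (L + y) * (70 * w / (x + w) + 10 * w / ((x + w) * (y + 1)))
      + L / (L + y) * (70 * w / (x + 1 + w)) ≤ 70 * w / (x + w) := by
  have e : 70 * w / (x + w) - (y / (L + y) * (70 * w / (x + w) + 10 * w / ((x + w) * (y + 1)))
      + L / (L + y) * (70 * w / (x + 1 + w)))
      = 10 * w * (7 * L * (y + 1) - y * (x + w + 1)) /
        ((L + y) * (x + w) * (x + 1 + w) * (y + 1)) := by
    field_simp
    ring
  have : 0 ≤ 10 * w * (7 * L * (y + 1) - y * (x + w + 1)) /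
        ((L + y) * (x + w) * (x + 1 + w) * (y + 1)) := by
    apply div_nonneg _ (by positivity)
    apply mul_nonneg (by positivity)
    nlinarith
  linarith

/-- The supermartingale property of `Q + S` at `k + 1`, where the urn term changes from `Q` on a further
visit to `k + 1`, which is due after a step to `k + 2`; the correction at `k + 1` absorbs the
increment of the urn term. -/
lemma one_ineq {Q Q' x y w : ℝ} (hx : 0 < x) (hy : 0 < y) (hw : 0 < w)
    (hQ : y * (Q' - Q) ≤ 4) (h : w + 1 ≤ x) :
    w / (x + w) * (Q' + (70 * (w + 1) / (x + (w + 1))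
        + 10 * (w + 1) / ((x + (w + 1)) * (y + 1)) + 1 / (y + 1)))
      + x / (x + w) * (Q + 70 * w / (x + 1 + w))
      ≤ Q + (70 * w / (x + w) + 10 * w / ((x + w) * y)) := by
  have e : Q + (70 * w / (x + w) + 10 * w / ((x + w) * y)) -
      (w / (x + w) * (Q' + (70 * (w + 1) / (x + (w + 1))
        + 10 * (w + 1) / ((x + (w + 1)) * (y + 1)) + 1 / (y + 1)))
      + x / (x + w) * (Q + 70 * w / (x + 1 + w)))
      = w / ((x + w) * y) * (10 - y * (Q' - Q)
          - 10 * ((w + 1) / (x + w + 1)) * (y / (y + 1)) - y / (y + 1)) := by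
    field_simp
    ring
  have h1 : (w + 1) / (x + w + 1) ≤ 1 / 2 := by
    rw [div_le_div_iff₀ (by positivity) (by positivity)]; linarith
  have h2 : y / (y + 1) ≤ 1 := by rw [div_le_one (by positivity)]; linarith
  have h3 : (w + 1) / (x + w + 1) * (y / (y + 1)) ≤ 1 / 2 * 1 := by gcongr
  have : 0 ≤ w / ((x + w) * y) * (10 - y * (Q' - Q)
          - 10 * ((w + 1) / (x + w + 1)) * (y / (y + 1)) - y / (y + 1)) := by
    apply mul_nonneg (by positivity)
    nlinarith
  linarith

/-- The supermartingale property at `k + 2`, with potential `1` once `k + 3` is reached and `R` after a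
step back to `k + 1`. -/
lemma two_ineq {R y : ℝ} (hy : 0 < y) (hR : 0 ≤ R) :
    1 / (y + 1) * 1 + y / (y + 1) * R ≤ R + 1 / (y + 1) := by
  have : y / (y + 1) ≤ 1 := by rw [div_le_one (by positivity)]; linarith
  nlinarith

/-- `2 y / (L + y)` is a martingale for the Pólya urn. -/
lemma Q1_mart {L y : ℝ} (hL : 0 < L) (hy : 0 < y) :
    y / (L + y) * (2 * (y + 1) / (L + (y + 1))) + L / (L + y) * (2 * y / (L + 1 + y))
      = 2 * y / (L + y) := by
  field_simp
  ring

lemma Q1_incr {L y : ℝ} (hL : 1 ≤ L) (hy : 1 ≤ y) :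
    y * (2 * (y + 1) / (L + (y + 1)) - 2 * y / (L + y)) ≤ 4 := by
  have e : y * (2 * (y + 1) / (L + (y + 1)) - 2 * y / (L + y))
     = 2 * L * y / ((L + (y + 1)) * (L + y)) := by
    field_simp
    ring
  rw [e, div_le_iff₀ (by positivity)]
  nlinarith [mul_nonneg (zero_le_one.trans hL) (zero_le_one.trans hy),
    mul_self_nonneg L, mul_self_nonneg y]

/-- A symmetric martingale of the Pólya urn with `L` and `y` balls: an affine function of the
probability `2 L y / ((L + y)(L + y + 1))` that the next two draws differ. It is small exactly when
the urn is large and balanced. -/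
noncomputable def Q2 (L y : ℝ) : ℝ := 4 - 16 * (L * y) / ((L + y) * (L + y + 1))

lemma Q2_comm (L y : ℝ) : Q2 L y = Q2 y L := by
  unfold Q2; rw [mul_comm L y, add_comm L y]

lemma Q2_nonneg {L y : ℝ} (hL : 0 < L) (hy : 0 < y) : 0 ≤ Q2 L y := by
  unfold Q2
  rw [sub_nonneg, div_le_iff₀ (by positivity)]
  nlinarith [sq_nonneg (L - y)]

lemma Q2_mart {L y : ℝ} (hL : 0 < L) (hy : 0 < y) :
    y / (L + y) * Q2 L (y + 1) + L / (L + y) * Q2 (L + 1) y = Q2 L y := by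
  unfold Q2
  field_simp
  ring

lemma Q2_incr {L y : ℝ} (hL : 0 < L) (hy : 0 < y) :
    y * (Q2 L (y + 1) - Q2 L y) ≤ 4 := by
  have e : y * (Q2 L (y + 1) - Q2 L y)
     = 16 * (L * y * (y - L)) / ((L + y) * (L + y + 1) * (L + y + 2)) := by
    unfold Q2
    field_simp
    ring
  rw [e, div_le_iff₀ (by positivity)]
  have : L * y * (y - L) ≤ L * y * (L + y) := by
    apply mul_le_mul_of_nonneg_left _ (by positivity); linarith
  have : 4 * (L * y) ≤ (L + y) ^ 2 := by nlinarith [sq_nonneg (L - y)]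
  have : 4 * (L * y) * (L + y) ≤ (L + y) ^ 2 * (L + y) :=
    mul_le_mul_of_nonneg_right this (by positivity)
  have : 0 ≤ (L + y) ^ 2 := by positivity
  nlinarith

lemma Q2_region {L y : ℝ} (hL : 0 < L) (hy : 0 < y) (h : Q2 L y < 1) : y ≤ 3 * L := by
  unfold Q2 at h
  have : 3 < 16 * (L * y) / ((L + y) * (L + y + 1)) := by linarith
  rw [lt_div_iff₀ (by positivity)] at this
  by_contra hc
  push Not at hc
  nlinarith [mul_pos (sub_pos.2 hc) hy, mul_pos (sub_pos.2 hc) hL]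

/-! ### The common part of the potentials -/

section Potential

/-- The part of the potential that watches the right-hand neighbourhood of a site `k`. Here `d` is
the position relative to `k`, and `x`, `y`, `w` are the occupation numbers of `k`, `k + 1`,
`k + 2`. To the left of `k` the count `x` is taken as it will be upon the return to `k`, and at
`k + 2` the count `y` as it will be upon the return to `k + 1`. -/
noncomputable def S (d : ℤ) (x y w : ℝ) : ℝ :=
  if d < 0 then 70 * w / (x + 1 + w)
  else if d = 0 then 70 * w / (x + w)
  else if d = 1 then 70 * w / (x + w) + 10 * w / ((x + w) * y)
  else 70 * w / (x + w) + 10 * w / ((x + w) * (y + 1)) + 1 / (y + 1)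

lemma S_nonneg (d : ℤ) {x y w : ℝ} (hx : 0 < x) (hy : 0 < y) (hw : 0 < w) : 0 ≤ S d x y w := by
  unfold S
  split_ifs <;> positivity

lemma S_lt_one {d : ℤ} {x y w : ℝ} (hx : 0 < x) (hy : 0 < y) (hw : 1 ≤ w) (hd : d = 1)
    (h : S d x y w < 1) : w + 1 ≤ x := by
  have e : S d x y w = 70 * w / (x + w) + 10 * w / ((x + w) * y) := by simp [S, hd]
  have : 0 ≤ 10 * w / ((x + w) * y) := by positivity
  have h2 : 70 * w / (x + w) < 1 := by linarith
  rw [div_lt_one (by positivity)] at h2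
  linarith

/-- A mean over one step of a function bounded by one is at most one. -/
lemma drift_le_one {Z : ℤ → ℝ} (hZ : ∀ i, 1 ≤ Z i) (p : ℤ) {f : ℤ → ℝ} (hf : ∀ z, f z ≤ 1) :
    drift Z p f ≤ 1 := by
  have h1 := hZ (p + 1)
  have h2 := hZ (p - 1)
  unfold drift
  have e : Z (p + 1) / (Z (p - 1) + Z (p + 1)) + Z (p - 1) / (Z (p - 1) + Z (p + 1)) = 1 := by
    field_simp; ring
  have a : Z (p + 1) / (Z (p - 1) + Z (p + 1)) * f (p + 1)
      ≤ Z (p + 1) / (Z (p - 1) + Z (p + 1)) * 1 :=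
    mul_le_mul_of_nonneg_left (hf _) (by positivity)
  have b : Z (p - 1) / (Z (p - 1) + Z (p + 1)) * f (p - 1)
      ≤ Z (p - 1) / (Z (p - 1) + Z (p + 1)) * 1 :=
    mul_le_mul_of_nonneg_left (hf _) (by positivity)
  linarith

lemma drift_mono {Z : ℤ → ℝ} (hZ : ∀ i, 1 ≤ Z i) (p : ℤ) {f : ℤ → ℝ} {a b : ℝ}
    (ha : f (p + 1) ≤ a) (hb : f (p - 1) ≤ b) :
    drift Z p f ≤ Z (p + 1) / (Z (p - 1) + Z (p + 1)) * a
      + Z (p - 1) / (Z (p - 1) + Z (p + 1)) * b := by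
  have h1 := hZ (p + 1)
  have h2 := hZ (p - 1)
  unfold drift
  gcongr

lemma drift_le_of_le {Z : ℤ → ℝ} (hZ : ∀ i, 1 ≤ Z i) (p : ℤ) {f : ℤ → ℝ} {a : ℝ}
    (ha : f (p + 1) ≤ a) (hb : f (p - 1) ≤ a) : drift Z p f ≤ a := by
  refine (drift_mono hZ p ha hb).trans (le_of_eq ?_)
  have h1 := hZ (p + 1)
  have h2 := hZ (p - 1)
  field_simp
  ring

/-! ### One-sided potential -/

/-- Potential for the event of passing from `k` to `k + 3`, before truncation: the Pólya urn fraction of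
`k + 1` among the two neighbours of `k`, plus `S`. At `k + 2` the coming return to `k + 1` is
already counted. -/
noncomputable def V₁ (k p : ℤ) (Z : ℤ → ℝ) : ℝ :=
  (if p = k + 2 then 2 * (Z (k + 1) + 1) / (Z (k - 1) + (Z (k + 1) + 1))
    else 2 * Z (k + 1) / (Z (k - 1) + Z (k + 1))) + S (p - k) (Z k) (Z (k + 1)) (Z (k + 2))

/-- Potential for the initial phase, in which `k + 1` is still unvisited. -/
noncomputable def H₁ (k p : ℤ) (Z : ℤ → ℝ) : ℝ :=
  if p ≤ k ∧ Z (k + 1) = 1 then 1 - min (Z k + if p = k then 0 else 1) 200 / 400 else 1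

/-- An upper bound for the probability of ever reaching `k + 3`. -/
noncomputable def U₁ (k p : ℤ) (Z : ℤ → ℝ) : ℝ :=
  if Z (k + 3) = 1 then min (V₁ k p Z) (H₁ k p Z) else 1

/-- Relations between occupation numbers that persist from the first visit to `k` on, as long as
`k + 3` has not been visited. -/
structure Inv₁ (k p : ℤ) (Z : ℤ → ℝ) : Prop where
  one_le : ∀ i, 1 ≤ Z i
  le_two : p ≤ k + 2
  centre : Z k + (if p = k then 0 else 1) ≤ Z (k - 1) + Z (k + 1) - 1
  right : Z (k + 2) + (if p = k + 1 then 1 else 0) ≤ Z (k + 1)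
  init : p ≤ k → Z (k + 1) = 1 → Z k + (if p = k then 0 else 1) ≤ Z (k - 1)

lemma one_le_up {Z : ℤ → ℝ} (hZ : ∀ i, 1 ≤ Z i) (q i : ℤ) : 1 ≤ up Z q i := by
  have := hZ i
  unfold up
  split_ifs <;> linarith

lemma Inv₁.step {k p q : ℤ} {Z : ℤ → ℝ} (h : Inv₁ k p Z) (hq : |q - p| = 1)
    (h3 : up Z q (k + 3) = 1) : Inv₁ k q (up Z q) := by
  obtain ⟨hZ, hp, hc, hr, hi⟩ := h
  have hq3 : q ≠ k + 3 := by
    rintro rfl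
    have := hZ (k + 3)
    simp [up] at h3
    linarith
  have hL := hZ (k - 1)
  have hy := hZ (k + 1)
  rw [abs_eq zero_le_one] at hq
  refine ⟨one_le_up hZ q, by omega, ?_, ?_, ?_⟩
  · unfold up
    split_ifs at hc ⊢ <;> first | omega | linarith
  · unfold up
    split_ifs at hr ⊢ <;> first | omega | linarith
  · intro hqk hone
    by_cases hpk : p ≤ k
    · have hy1 : Z (k + 1) = 1 := by
        simpa [up, show k + 1 ≠ q by omega] using hone
      have := hi hpk hy1
      unfold up
      split_ifs at this ⊢ <;> first | omega | linarith
    · -- coming from `k + 1`, the site `k + 1` has been visited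
      exfalso
      have : p = k + 1 := by omega
      have h2 := hZ (k + 2)
      rw [if_pos this] at hr
      simp [up, show k + 1 ≠ q by omega] at hone
      linarith

lemma H₁_le_one {k p : ℤ} {Z : ℤ → ℝ} (hZ : ∀ i, 1 ≤ Z i) : H₁ k p Z ≤ 1 := by
  have := hZ k
  unfold H₁
  split_ifs
  · have : 0 ≤ min (Z k + 0) 200 := by simp; linarith
    linarith
  · have : 0 ≤ min (Z k + 1) 200 := by simp; linarith
    linarith
  · exact le_rfl

lemma V₁_nonneg {k p : ℤ} {Z : ℤ → ℝ} (hZ : ∀ i, 1 ≤ Z i) : 0 ≤ V₁ k p Z := by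
  have h0 := hZ k
  have h1 := hZ (k - 1)
  have h2 := hZ (k + 1)
  have h3 := hZ (k + 2)
  have := S_nonneg (p - k) (x := Z k) (y := Z (k + 1)) (w := Z (k + 2)) (by linarith)
    (by linarith) (by linarith)
  unfold V₁
  split_ifs <;> positivity

lemma U₁_le_one {k p : ℤ} {Z : ℤ → ℝ} (hZ : ∀ i, 1 ≤ Z i) : U₁ k p Z ≤ 1 := by
  unfold U₁
  split_ifs
  · exact (min_le_right _ _).trans (H₁_le_one hZ)
  · exact le_rfl

lemma U₁_nonneg {k p : ℤ} {Z : ℤ → ℝ} (hZ : ∀ i, 1 ≤ Z i) : 0 ≤ U₁ k p Z := by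
  unfold U₁
  split_ifs
  · apply le_min (V₁_nonneg hZ)
    unfold H₁
    split_ifs
    · have := min_le_right (Z k + 0) 200; linarith
    · have := min_le_right (Z k + 1) 200; linarith
    · exact zero_le_one
  · exact zero_le_one

lemma U₁_le_V₁ {k p : ℤ} {Z : ℤ → ℝ} (h : Z (k + 3) = 1) : U₁ k p Z ≤ V₁ k p Z := by
  unfold U₁; rw [if_pos h]; exact min_le_left _ _

lemma U₁_le_H₁ {k p : ℤ} {Z : ℤ → ℝ} (h : Z (k + 3) = 1) : U₁ k p Z ≤ H₁ k p Z := by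
  unfold U₁; rw [if_pos h]; exact min_le_right _ _

lemma up_of_ne (Z : ℤ → ℝ) {q i : ℤ} (h : i ≠ q) : up Z q i = Z i := by simp [up, h]

lemma up_self (Z : ℤ → ℝ) (q : ℤ) : up Z q q = Z q + 1 := by simp [up]

lemma drift_U₁_le_V₁ {k p : ℤ} {Z : ℤ → ℝ} (h : Inv₁ k p Z) (h3 : Z (k + 3) = 1) :
    drift Z p (fun z => U₁ k z (up Z z)) ≤ V₁ k p Z := by
  obtain ⟨hZ, hp, hc, hr, -⟩ := h
  have hU1 : drift Z p (fun z => U₁ k z (up Z z)) ≤ 1 :=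
    drift_le_one hZ p fun z => U₁_le_one (one_le_up hZ z)
  rcases le_or_gt 1 (V₁ k p Z) with hV | hV
  · exact hU1.trans hV
  have hx := hZ k
  have hL := hZ (k - 1)
  have hy := hZ (k + 1)
  have hw := hZ (k + 2)
  have hU : ∀ q, q ≠ k + 3 → U₁ k q (up Z q) ≤ V₁ k q (up Z q) := fun q hq =>
    U₁_le_V₁ (by rw [up_of_ne Z (Ne.symm hq), h3])
  rcases lt_or_ge p k with hpk | hpk
  · -- left of `k`, the potential can only decrease
    have e : V₁ k p Z = 2 * Z (k + 1) / (Z (k - 1) + Z (k + 1))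
        + 70 * Z (k + 2) / (Z k + 1 + Z (k + 2)) := by
      simp [V₁, S, show p ≠ k + 2 by omega, hpk]
    have key : ∀ q, q ≤ k → V₁ k q (up Z q) ≤ V₁ k p Z := by
      intro q hq
      rw [e]
      rcases hq.lt_or_eq with hq | rfl
      · have e' : V₁ k q (up Z q) = 2 * Z (k + 1) / (up Z q (k - 1) + Z (k + 1))
            + 70 * Z (k + 2) / (Z k + 1 + Z (k + 2)) := by
          simp [V₁, S, show q ≠ k + 2 by omega, hq, up_of_ne Z (show k + 1 ≠ q by omega),
            up_of_ne Z (show k + 2 ≠ q by omega), up_of_ne Z (show k ≠ q by omega)]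
        have : Z (k - 1) ≤ up Z q (k - 1) := by
          unfold up; split_ifs <;> linarith
        rw [e']
        gcongr
      · simp [V₁, S, up]
    exact drift_le_of_le hZ p ((hU _ (by omega)).trans (key _ (by omega)))
      ((hU _ (by omega)).trans (key _ (by omega)))
  · obtain rfl | rfl | rfl : p = k ∨ p = k + 1 ∨ p = k + 2 := by omega
    · have e : V₁ p p Z = 2 * Z (p + 1) / (Z (p - 1) + Z (p + 1))
          + 70 * Z (p + 2) / (Z p + Z (p + 2)) := by
        simp [V₁, S]
      rw [e] at hV ⊢
      refine (drift_mono hZ p (hU _ (by omega)) (hU _ (by omega))).trans ?_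
      have e1 : V₁ p (p + 1) (up Z (p + 1)) = 2 * (Z (p + 1) + 1) / (Z (p - 1) + (Z (p + 1) + 1))
          + (70 * Z (p + 2) / (Z p + Z (p + 2))
            + 10 * Z (p + 2) / ((Z p + Z (p + 2)) * (Z (p + 1) + 1))) := by
        simp [V₁, S, up, show p - 1 ≠ p + 1 by omega]
      have e2 : V₁ p (p - 1) (up Z (p - 1)) = 2 * Z (p + 1) / (Z (p - 1) + 1 + Z (p + 1))
          + 70 * Z (p + 2) / (Z p + 1 + Z (p + 2)) := by
        simp [V₁, S, up, show p - 1 ≠ p + 2 by omega, show p + 1 ≠ p - 1 by omega,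
          show p ≠ p - 1 by omega, show p + 2 ≠ p - 1 by omega]
      rw [e1, e2]
      have hyL : Z (p + 1) ≤ Z (p - 1) := by
        have : 0 ≤ 70 * Z (p + 2) / (Z p + Z (p + 2)) := by positivity
        have h2 : 2 * Z (p + 1) / (Z (p - 1) + Z (p + 1)) < 1 := by linarith
        rw [div_lt_one (by positivity)] at h2
        linarith
      have A := centre_ineq (L := Z (p - 1)) (x := Z p) (y := Z (p + 1)) (w := Z (p + 2))
        (by linarith) (by linarith) (by linarith) (by linarith)
        (by simp at hc hr; linarith)
      have B := Q1_mart (L := Z (p - 1)) (y := Z (p + 1)) (by linarith) (by linarith)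
      refine le_trans (le_of_eq ?_) (add_le_add B.le A)
      ring
    · have e : V₁ k (k + 1) Z = 2 * Z (k + 1) / (Z (k - 1) + Z (k + 1))
          + (70 * Z (k + 2) / (Z k + Z (k + 2))
            + 10 * Z (k + 2) / ((Z k + Z (k + 2)) * Z (k + 1))) := by
        simp [V₁, S]
      have hwx : Z (k + 2) + 1 ≤ Z k := by
        refine S_lt_one (d := k + 1 - k) (y := Z (k + 1)) (by linarith) (by linarith) hw (by ring) ?_
        refine lt_of_le_of_lt ?_ hV
        have : 0 ≤ 2 * Z (k + 1) / (Z (k - 1) + Z (k + 1)) := by positivity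
        simp only [V₁, show k + 1 ≠ k + 2 by omega, if_false]
        linarith
      rw [e]
      refine (drift_mono hZ _ (hU _ (by omega)) (hU _ (by omega))).trans ?_
      have e1 : V₁ k (k + 1 + 1) (up Z (k + 1 + 1))
          = 2 * (Z (k + 1) + 1) / (Z (k - 1) + (Z (k + 1) + 1))
          + (70 * (Z (k + 2) + 1) / (Z k + (Z (k + 2) + 1))
            + 10 * (Z (k + 2) + 1) / ((Z k + (Z (k + 2) + 1)) * (Z (k + 1) + 1))
            + 1 / (Z (k + 1) + 1)) := by
        rw [show k + 1 + 1 = k + 2 by ring]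
        simp [V₁, S, up, show k - 1 ≠ k + 2 by omega]
      have e2 : V₁ k (k + 1 - 1) (up Z (k + 1 - 1)) = 2 * Z (k + 1) / (Z (k - 1) + Z (k + 1))
          + 70 * Z (k + 2) / (Z k + 1 + Z (k + 2)) := by
        rw [show k + 1 - 1 = k by ring]
        simp [V₁, S, up]
      rw [e1, e2, show k + 1 + 1 = k + 2 by ring, show k + 1 - 1 = k by ring]
      exact one_ineq (by linarith) (by linarith) (by linarith) (Q1_incr hL hy) hwx
    · have e : V₁ k (k + 2) Z = 2 * (Z (k + 1) + 1) / (Z (k - 1) + (Z (k + 1) + 1))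
          + (70 * Z (k + 2) / (Z k + Z (k + 2))
            + 10 * Z (k + 2) / ((Z k + Z (k + 2)) * (Z (k + 1) + 1))) + 1 / (Z (k + 1) + 1) := by
        simp [V₁, S]; ring
      have e2 : V₁ k (k + 2 - 1) (up Z (k + 2 - 1))
          = 2 * (Z (k + 1) + 1) / (Z (k - 1) + (Z (k + 1) + 1))
          + (70 * Z (k + 2) / (Z k + Z (k + 2))
            + 10 * Z (k + 2) / ((Z k + Z (k + 2)) * (Z (k + 1) + 1))) := by
        rw [show k + 2 - 1 = k + 1 by ring]
        simp [V₁, S, up, show k - 1 ≠ k + 1 by omega]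
      rw [e]
      refine (drift_mono hZ _ (U₁_le_one (one_le_up hZ _)) (hU _ (by omega))).trans ?_
      rw [e2, show k + 2 + 1 = k + 3 by ring, show k + 2 - 1 = k + 1 by ring, h3,
        add_comm (Z (k + 1)) 1, add_comm 1 (Z (k + 1))]
      exact two_ineq (by linarith) (by positivity)

lemma drift_U₁_le_H₁ {k p : ℤ} {Z : ℤ → ℝ} (h : Inv₁ k p Z) (h3 : Z (k + 3) = 1) :
    drift Z p (fun z => U₁ k z (up Z z)) ≤ H₁ k p Z := by
  have hV := drift_U₁_le_V₁ h h3
  obtain ⟨hZ, hp, hc, hr, hi⟩ := h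
  have hU1 : drift Z p (fun z => U₁ k z (up Z z)) ≤ 1 :=
    drift_le_one hZ p fun z => U₁_le_one (one_le_up hZ z)
  by_cases hcase : p ≤ k ∧ Z (k + 1) = 1
  swap
  · simpa [H₁, hcase] using hU1
  obtain ⟨hpk, hy1⟩ := hcase
  have hi := hi hpk hy1
  have hx := hZ k
  have hL := hZ (k - 1)
  have hw := hZ (k + 2)
  have hU : ∀ q, q ≠ k + 3 → U₁ k q (up Z q) ≤ H₁ k q (up Z q) := fun q hq =>
    U₁_le_H₁ (by rw [up_of_ne Z (Ne.symm hq), h3])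
  have eH : H₁ k p Z = 1 - min (Z k + if p = k then 0 else 1) 200 / 400 := by
    simp [H₁, hpk, hy1]
  rcases hpk.lt_or_eq with hlt | rfl
  · have key : ∀ q, q ≤ k → H₁ k q (up Z q) ≤ H₁ k p Z := by
      intro q hq
      rw [eH, if_neg hlt.ne]
      rcases hq.lt_or_eq with hq | rfl
      · simp [H₁, up, hq.le, hq.ne, hq.ne', show k + 1 ≠ q by omega, hy1]
      · simp [H₁, up, hy1]
    exact drift_le_of_le hZ p ((hU _ (by omega)).trans (key _ (by omega)))
      ((hU _ (by omega)).trans (key _ (by omega)))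
  · rw [eH, if_pos rfl, add_zero]
    rw [if_pos rfl, add_zero] at hi
    rcases le_or_gt (Z p) 199 with h199 | h199
    · have e2 : H₁ p (p - 1) (up Z (p - 1)) = 1 - (Z p + 1) / 400 := by
        have : min (Z p + 1) 200 = Z p + 1 := min_eq_left (by linarith)
        simp [H₁, up, show p + 1 ≠ p - 1 by omega, show p ≠ p - 1 by omega, hy1, this]
      refine (drift_mono hZ p (U₁_le_one (one_le_up hZ _)) (hU _ (by omega))).trans ?_
      rw [e2, hy1, min_eq_left (by linarith), mul_one, mul_sub, mul_one]
      have hs : 1 / (Z (p - 1) + 1) + Z (p - 1) / (Z (p - 1) + 1) = 1 := by field_simp; ring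
      have hm : Z p / 400 ≤ Z (p - 1) / (Z (p - 1) + 1) * ((Z p + 1) / 400) := by
        rw [div_mul_div_comm, div_le_div_iff₀ (by positivity) (by positivity)]
        nlinarith
      linarith
    · -- here the urn potential has become smaller than the initial one
      refine hV.trans ?_
      have hw1 : Z (p + 2) = 1 := by simp [hy1] at hr; linarith
      have e : V₁ p p Z = 2 / (Z (p - 1) + 1) + 70 / (Z p + 1) := by
        simp [V₁, S, hy1, hw1]
      have a : 2 / (Z (p - 1) + 1) ≤ 2 / 200 := by gcongr; linarith
      have b : 70 / (Z p + 1) ≤ 70 / 200 := by gcongr; linarith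
      have := min_le_right (Z p) 200
      rw [e]
      linarith

/-- `U₁` is a supermartingale from the first visit to `k` on. -/
lemma drift_U₁ {k p : ℤ} {Z : ℤ → ℝ} (hZ : ∀ i, 1 ≤ Z i) (h : Z (k + 3) = 1 → Inv₁ k p Z) :
    drift Z p (fun z => U₁ k z (up Z z)) ≤ U₁ k p Z := by
  by_cases h3 : Z (k + 3) = 1
  · rw [U₁, if_pos h3]
    exact le_min (drift_U₁_le_V₁ (h h3) h3) (drift_U₁_le_H₁ (h h3) h3)
  · rw [U₁, if_neg h3]
    exact drift_le_one hZ p fun z => U₁_le_one (one_le_up hZ z)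

/-! ### Two-sided potential -/

/-- Potential for the event of leaving `{-2, …, 2}`, before truncation. At `±2` the urn already
counts the coming return to `±1`. -/
noncomputable def V₂ (p : ℤ) (Z : ℤ → ℝ) : ℝ :=
  Q2 (Z (-1) + if p = -2 then 1 else 0) (Z 1 + if p = 2 then 1 else 0)
    + S p (Z 0) (Z 1) (Z 2) + S (-p) (Z 0) (Z (-1)) (Z (-2))

/-- An upper bound for the probability of ever reaching `3` or `-3`. -/
noncomputable def U₂ (p : ℤ) (Z : ℤ → ℝ) : ℝ :=
  if Z 3 = 1 ∧ Z (-3) = 1 then min 1 (V₂ p Z) else 1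

/-- Relations between occupation numbers that persist as long as `3` and `-3` have not been
visited. -/
structure Inv₂ (p : ℤ) (Z : ℤ → ℝ) : Prop where
  one_le : ∀ i, 1 ≤ Z i
  abs_le_two : |p| ≤ 2
  centre : Z 0 + (if p = 0 then 0 else 1) ≤ Z (-1) + Z 1 - 1
  right : Z 2 + (if p = 1 then 1 else 0) ≤ Z 1
  left : Z (-2) + (if p = -1 then 1 else 0) ≤ Z (-1)

lemma Inv₂.step {p q : ℤ} {Z : ℤ → ℝ} (h : Inv₂ p Z) (hq : |q - p| = 1)
    (h3 : up Z q 3 = 1) (h3' : up Z q (-3) = 1) : Inv₂ q (up Z q) := by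
  obtain ⟨hZ, hp, hc, hr, hl⟩ := h
  have hq3 : ∀ i, up Z q i = 1 → q ≠ i := by
    rintro i h rfl
    have := hZ q
    rw [up_self] at h
    linarith
  have a := hq3 _ h3
  have b := hq3 _ h3'
  have hL := hZ (-1)
  have hy := hZ 1
  rw [abs_le] at hp
  rw [abs_eq zero_le_one] at hq
  refine ⟨one_le_up hZ q, by rw [abs_le]; omega, ?_, ?_, ?_⟩
  · unfold up
    split_ifs at hc ⊢ <;> first | omega | linarith
  · unfold up
    split_ifs at hr ⊢ <;> first | omega | linarith
  · unfold up
    split_ifs at hl ⊢ <;> first | omega | linarith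

lemma Inv₂.neg {p : ℤ} {Z : ℤ → ℝ} (h : Inv₂ p Z) : Inv₂ (-p) (fun i => Z (-i)) := by
  obtain ⟨hZ, hp, hc, hr, hl⟩ := h
  refine ⟨fun i => hZ _, by rwa [abs_neg], ?_, ?_, ?_⟩
  · simp only [neg_neg, neg_zero, neg_eq_zero]; linarith
  · simpa only [neg_eq_iff_eq_neg] using hl
  · simpa using hr

lemma V₂_neg (p : ℤ) (Z : ℤ → ℝ) : V₂ (-p) (fun i => Z (-i)) = V₂ p Z := by
  unfold V₂
  rw [Q2_comm]
  simp only [neg_neg, neg_zero, neg_eq_iff_eq_neg]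
  ring

lemma U₂_neg (p : ℤ) (Z : ℤ → ℝ) : U₂ (-p) (fun i => Z (-i)) = U₂ p Z := by
  simp only [U₂, V₂_neg, neg_neg, and_comm]

lemma up_neg (Z : ℤ → ℝ) (q : ℤ) : up (fun i => Z (-i)) (-q) = fun i => up Z q (-i) := by
  funext i
  simp only [up, neg_eq_iff_eq_neg]

lemma drift_neg (Z : ℤ → ℝ) (p : ℤ) :
    drift (fun i => Z (-i)) (-p) (fun z => U₂ z (up (fun i => Z (-i)) z))
      = drift Z p (fun z => U₂ z (up Z z)) := by
  have h : ∀ z, U₂ (-z) (up (fun i => Z (-i)) (-z)) = U₂ z (up Z z) := by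
    intro z; rw [up_neg, U₂_neg]
  unfold drift
  rw [show -p + 1 = -(p - 1) by ring, show -p - 1 = -(p + 1) by ring]
  beta_reduce
  rw [h, h]
  simp only [neg_neg]
  rw [add_comm (Z (p + 1)) (Z (p - 1))]
  ring

lemma V₂_nonneg {p : ℤ} {Z : ℤ → ℝ} (hZ : ∀ i, 1 ≤ Z i) : 0 ≤ V₂ p Z := by
  have hpos : ∀ i, 0 < Z i := fun i => zero_lt_one.trans_le (hZ i)
  have a := S_nonneg p (hpos 0) (hpos 1) (hpos 2)
  have b := S_nonneg (-p) (hpos 0) (hpos (-1)) (hpos (-2))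
  have h1 := hpos 1
  have h2 := hpos (-1)
  have c : 0 ≤ Q2 (Z (-1) + if p = -2 then 1 else 0) (Z 1 + if p = 2 then 1 else 0) := by
    apply Q2_nonneg <;> split_ifs <;> positivity
  unfold V₂
  positivity

lemma U₂_le_one {p : ℤ} {Z : ℤ → ℝ} : U₂ p Z ≤ 1 := by
  unfold U₂
  split_ifs
  · exact min_le_left _ _
  · exact le_rfl

lemma U₂_nonneg {p : ℤ} {Z : ℤ → ℝ} (hZ : ∀ i, 1 ≤ Z i) : 0 ≤ U₂ p Z := by
  unfold U₂
  split_ifs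
  · exact le_min zero_le_one (V₂_nonneg hZ)
  · exact zero_le_one

lemma drift_U₂_of_nonneg {p : ℤ} {Z : ℤ → ℝ} (h : Inv₂ p Z) (hp0 : 0 ≤ p) (h3 : Z 3 = 1)
    (h3' : Z (-3) = 1) (hV : V₂ p Z < 1) :
    drift Z p (fun z => U₂ z (up Z z)) ≤ V₂ p Z := by
  obtain ⟨hZ, hp, hc, hr, hl⟩ := h
  have hpos : ∀ i, 0 < Z i := fun i => zero_lt_one.trans_le (hZ i)
  have hx := hZ 0
  have hL := hZ (-1)
  have hy := hZ 1
  have hw := hZ 2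
  have hu := hZ (-2)
  have hU : ∀ q, q ≠ 3 → q ≠ -3 → U₂ q (up Z q) ≤ V₂ q (up Z q) := by
    intro q hq hq'
    unfold U₂
    rw [if_pos ⟨by rw [up_of_ne Z (Ne.symm hq), h3], by rw [up_of_ne Z (Ne.symm hq'), h3']⟩]
    exact min_le_right _ _
  have hSl := S_nonneg (-p) (hpos 0) (hpos (-1)) (hpos (-2))
  have hSr := S_nonneg p (hpos 0) (hpos 1) (hpos 2)
  rw [abs_le] at hp
  obtain rfl | rfl | rfl : p = 0 ∨ p = 1 ∨ p = 2 := by omega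
  · have hQ : Q2 (Z (-1)) (Z 1) < 1 := by
      have : V₂ 0 Z = Q2 (Z (-1)) (Z 1) + S 0 (Z 0) (Z 1) (Z 2)
          + S (-0) (Z 0) (Z (-1)) (Z (-2)) := by simp [V₂]
      linarith
    have r1 := Q2_region (hpos _) (hpos _) hQ
    rw [Q2_comm] at hQ
    have r2 := Q2_region (hpos _) (hpos _) hQ
    have e : V₂ 0 Z = Q2 (Z (-1)) (Z 1) + 70 * Z 2 / (Z 0 + Z 2)
        + 70 * Z (-2) / (Z 0 + Z (-2)) := by simp [V₂, S]
    have e1 : V₂ (0 + 1) (up Z (0 + 1)) = Q2 (Z (-1)) (Z 1 + 1)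
        + (70 * Z 2 / (Z 0 + Z 2) + 10 * Z 2 / ((Z 0 + Z 2) * (Z 1 + 1)))
        + 70 * Z (-2) / (Z 0 + 1 + Z (-2)) := by simp [V₂, S, up]
    have e2 : V₂ (0 - 1) (up Z (0 - 1)) = Q2 (Z (-1) + 1) (Z 1)
        + 70 * Z 2 / (Z 0 + 1 + Z 2)
        + (70 * Z (-2) / (Z 0 + Z (-2)) + 10 * Z (-2) / ((Z 0 + Z (-2)) * (Z (-1) + 1))) := by
      simp [V₂, S, up]
    simp at hc hr hl
    refine (drift_mono hZ 0 (hU _ (by omega) (by omega)) (hU _ (by omega) (by omega))).trans ?_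
    rw [e1, e2, e, zero_add, zero_sub]
    have A := centre_ineq (L := Z (-1)) (x := Z 0) (y := Z 1) (w := Z 2)
      (hpos _) (hpos _) (hpos _) (hpos _) (by linarith)
    have A' := centre_ineq (L := Z 1) (x := Z 0) (y := Z (-1)) (w := Z (-2))
      (hpos _) (hpos _) (hpos _) (hpos _) (by linarith)
    rw [add_comm (Z 1) (Z (-1))] at A'
    have B := Q2_mart (hpos (-1)) (hpos 1)
    refine le_trans (le_of_eq ?_) (add_le_add (add_le_add B.le A) A')
    ring
  · have hwx : Z 2 + 1 ≤ Z 0 := by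
      refine S_lt_one (d := 1) (y := Z 1) (hpos _) (hpos _) hw rfl ?_
      refine lt_of_le_of_lt ?_ hV
      have := Q2_nonneg (hpos (-1)) (hpos 1)
      simp only [V₂, show ¬ ((1 : ℤ) = 2) by omega, show ¬ ((1 : ℤ) = -2) by omega, if_false,
        add_zero]
      linarith
    have e : V₂ 1 Z = Q2 (Z (-1)) (Z 1)
        + (70 * Z 2 / (Z 0 + Z 2) + 10 * Z 2 / ((Z 0 + Z 2) * Z 1))
        + 70 * Z (-2) / (Z 0 + 1 + Z (-2)) := by simp [V₂, S]
    have e1 : V₂ (1 + 1) (up Z (1 + 1)) = (Q2 (Z (-1)) (Z 1 + 1)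
        + (70 * (Z 2 + 1) / (Z 0 + (Z 2 + 1))
          + 10 * (Z 2 + 1) / ((Z 0 + (Z 2 + 1)) * (Z 1 + 1)) + 1 / (Z 1 + 1)))
        + 70 * Z (-2) / (Z 0 + 1 + Z (-2)) := by simp [V₂, S, up]
    have e2 : V₂ (1 - 1) (up Z (1 - 1)) = (Q2 (Z (-1)) (Z 1)
        + 70 * Z 2 / (Z 0 + 1 + Z 2)) + 70 * Z (-2) / (Z 0 + 1 + Z (-2)) := by
      simp [V₂, S, up]
    refine (drift_mono hZ 1 (hU _ (by omega) (by omega)) (hU _ (by omega) (by omega))).trans ?_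
    rw [e1, e2, e, show (1 : ℤ) + 1 = 2 by norm_num, show (1 : ℤ) - 1 = 0 by norm_num]
    have A := one_ineq (hpos 0) (hpos 1) (hpos 2) (Q2_incr (hpos (-1)) (hpos 1)) hwx
    have hs : Z 2 / (Z 0 + Z 2) + Z 0 / (Z 0 + Z 2) = 1 := by
      rw [← add_div, add_comm, div_self (by positivity)]
    refine le_trans (le_of_eq ?_) (add_le_add_left A _)
    linear_combination (70 * Z (-2) / (Z 0 + 1 + Z (-2))) * hs
  · have e : V₂ 2 Z = (Q2 (Z (-1)) (Z 1 + 1)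
        + (70 * Z 2 / (Z 0 + Z 2) + 10 * Z 2 / ((Z 0 + Z 2) * (Z 1 + 1)))
        + 70 * Z (-2) / (Z 0 + 1 + Z (-2))) + 1 / (Z 1 + 1) := by simp [V₂, S]; ring
    have e2 : V₂ (2 - 1) (up Z (2 - 1)) = Q2 (Z (-1)) (Z 1 + 1)
        + (70 * Z 2 / (Z 0 + Z 2) + 10 * Z 2 / ((Z 0 + Z 2) * (Z 1 + 1)))
        + 70 * Z (-2) / (Z 0 + 1 + Z (-2)) := by simp [V₂, S, up]
    have e2' : 0 ≤ V₂ (2 - 1) (up Z (2 - 1)) := V₂_nonneg (one_le_up hZ _)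
    refine (drift_mono hZ 2 U₂_le_one (hU _ (by omega) (by omega))).trans ?_
    rw [e, ← e2, show (2 : ℤ) + 1 = 3 by norm_num, h3, show Z (2 - 1) = Z 1 by norm_num]
    exact two_ineq (hpos 1) e2'

/-- `U₂` is a supermartingale as long as its invariant holds. -/
lemma drift_U₂ {p : ℤ} {Z : ℤ → ℝ} (hZ : ∀ i, 1 ≤ Z i)
    (h : Z 3 = 1 → Z (-3) = 1 → Inv₂ p Z) :
    drift Z p (fun z => U₂ z (up Z z)) ≤ U₂ p Z := by
  have hU1 : drift Z p (fun z => U₂ z (up Z z)) ≤ 1 := drift_le_one hZ p fun z => U₂_le_one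
  by_cases h3 : Z 3 = 1 ∧ Z (-3) = 1
  · rw [U₂, if_pos h3]
    refine le_min hU1 ?_
    rcases le_or_gt 1 (V₂ p Z) with hV | hV
    · exact hU1.trans hV
    · have hI := h h3.1 h3.2
      rcases le_total 0 p with hp | hp
      · exact drift_U₂_of_nonneg hI hp h3.1 h3.2 hV
      · rw [← drift_neg, ← V₂_neg]
        exact drift_U₂_of_nonneg hI.neg (by omega) h3.2 (by simpa using h3.1) (by rwa [V₂_neg])
  · rw [U₂, if_neg h3]
    exact hU1

end Potential

section Main

variable {Ω : Type*} {mΩ : MeasurableSpace Ω} {μ : Measure Ω} {ℱ : Filtration ℕ mΩ}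
  {X : ℕ → Ω → ℤ}

/-! ### Almost surely finite range -/

lemma lt_of_avoid {φ : ℕ → ℤ} (h0 : φ 0 = 0) (hnn : ∀ n, |φ (n + 1) - φ n| = 1) {k : ℤ}
    (hk : 0 < k) (hav : ∀ n, φ n ≠ k) (n : ℕ) : φ n < k := by
  induction n with
  | zero => omega
  | succ n ih =>
    have h1 := hnn n
    have h2 := hav (n + 1)
    rw [abs_eq zero_le_one] at h1
    omega

lemma occ_succ_apply (n : ℕ) (w : ℤ) (ω : Ω) :
    occ X (n + 1) w ω = up (fun w => occ X n w ω) (X (n + 1) ω) w := congrFun (occ_succ n ω) w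

lemma occ_succ_ne_one {n : ℕ} {w : ℤ} {ω : Ω} (h : occ X n w ω ≠ 1) : occ X (n + 1) w ω ≠ 1 := by
  rw [Ne, occ_eq_one_iff] at h ⊢
  exact fun h' => h fun i hi => h' i (by omega)

/-- Along a nearest-neighbour path, before the first visit to `k` nothing at or beyond `k` has been
visited, and from then on until the first visit to `k + 3` the invariant `Inv₁` holds. -/
lemma path_inv {ω : Ω} {k : ℤ} (hk : 0 < k) (h0 : X 0 ω = 0)
    (hnn : ∀ n, |X (n + 1) ω - X n ω| = 1) (n : ℕ) :
    (occ X n k ω = 1 → X n ω < k ∧ ∀ i, k ≤ i → occ X n i ω = 1) ∧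
    (occ X n k ω ≠ 1 → occ X n (k + 3) ω = 1 → Inv₁ k (X n ω) (fun w => occ X n w ω)) := by
  induction n with
  | zero =>
    have : ∀ i, k ≤ i → occ X 0 i ω = 1 := by
      intro i hi
      rw [occ_zero, up_of_ne _ (by omega)]
    exact ⟨fun _ => ⟨by omega, this⟩, fun h => absurd (this k le_rfl) h⟩
  | succ n ih =>
    have hs := hnn n
    have hs' := (abs_eq zero_le_one).1 hs
    by_cases hn : occ X n k ω = 1
    · obtain ⟨hlt, hone⟩ := ih.1 hn
      by_cases hhit : X (n + 1) ω = k
      · have e : occ X (n + 1) k ω = 2 := by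
          rw [occ_succ_apply, hhit, up_self, hn]; norm_num
        refine ⟨fun h => by rw [e] at h; norm_num at h, fun _ _ => ?_⟩
        have hXn : X n ω = k - 1 := by omega
        have hL := occ_self (X := X) n ω
        rw [hXn] at hL
        have hL' : occ X (n + 1) (k - 1) ω = occ X n (k - 1) ω := by
          rw [occ_succ_apply, up_of_ne _ (by omega)]
        have hy : ∀ i, k < i → occ X (n + 1) i ω = 1 := by
          intro i hi
          rw [occ_succ_apply, up_of_ne _ (by omega), hone i hi.le]
        have h1 := hy (k + 1) (by omega)
        have h2 := hy (k + 2) (by omega)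
        refine ⟨fun i => one_le_occ _ _ _, by omega, ?_, ?_, fun _ _ => ?_⟩
        · simp only [e, hL', h1, hhit, if_true]; linarith
        · simp [h1, h2, hhit]
        · simp only [e, hL', hhit, if_true]; linarith
      · have hone' : ∀ i, k ≤ i → occ X (n + 1) i ω = 1 := by
          intro i hi
          rw [occ_succ_apply, up_of_ne _ (by omega), hone i hi]
        exact ⟨fun _ => ⟨by omega, hone'⟩, fun h => absurd (hone' k le_rfl) h⟩
    · refine ⟨fun h => absurd h (occ_succ_ne_one hn), fun _ h3 => ?_⟩
      have h3' : occ X n (k + 3) ω = 1 := by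
        by_contra hc; exact occ_succ_ne_one hc h3
      have := (ih.2 hn h3').step hs (by rw [← occ_succ_apply]; exact h3)
      rwa [occ_succ]

lemma measurableSet_of_hist (hX : Adapted ℱ X) (n : ℕ) {A : Set Ω}
    (hA : ∀ ω ω', (∀ i ≤ n, X i ω = X i ω') → (ω ∈ A ↔ ω' ∈ A)) : MeasurableSet[ℱ n] A :=
  @measurableSet_setOfPred _ (ℱ n) (fun ω => ω ∈ A) |>.2
    (measurable_of_hist hX n fun ω ω' h => propext (hA ω ω' h))

lemma measurableSet_occ_ne (hX : Adapted ℱ X) (n : ℕ) (k : ℤ) :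
    MeasurableSet {ω | occ X n k ω ≠ 1} :=
  ℱ.le n _ (measurableSet_of_hist hX n fun ω ω' h => by
    simp only [Set.mem_ofPred_eq, occ_congr h])

/-- The mean of `U₁` on the event that `k` has been visited: it enters with value at most `199 / 200` at
the first visit to `k`, and does not increase afterwards. -/
lemma hit_potential [IsProbabilityMeasure μ] (hX : IsVRRW μ ℱ 0 X) {k : ℤ} (hk : 0 < k) (n : ℕ) :
    ∫⁻ ω, ENNReal.ofReal (if occ X n k ω = 1 then 0 else U₁ k (X n ω) (fun w => occ X n w ω)) ∂μ
      ≤ ENNReal.ofReal (199 / 200) * μ {ω | occ X n k ω ≠ 1} := by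
  induction n with
  | zero =>
    have : ∀ ω, occ X 0 k ω = 1 := fun ω => by
      rw [occ_zero, hX.2.1 ω, up_of_ne _ (by omega)]
    simp [this]
  | succ n ih =>
    let f : Ω → ℤ → ℝ := fun ω z =>
      if occ X n k ω = 1 then 0 else U₁ k z (up (fun w => occ X n w ω) z)
    have hstep := lintegral_step hX n f
      (fun z => measurable_of_hist hX.1 n fun ω ω' h => by simp only [f, occ_congr h])
      (fun ω z => by
        simp only [f]
        split_ifs
        · exact le_rfl
        · exact U₁_nonneg (one_le_up (fun i => one_le_occ _ _ _) z))
    have hA := measurableSet_occ_ne hX.1 n k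
    have hA' := measurableSet_occ_ne hX.1 (n + 1) k
    -- `D` is the event that `k` is visited for the first time at time `n + 1`
    let D : Set Ω := {ω | occ X (n + 1) k ω ≠ 1} \ {ω | occ X n k ω ≠ 1}
    have hD : MeasurableSet D := hA'.diff hA
    have hμ : μ {ω | occ X (n + 1) k ω ≠ 1} = μ {ω | occ X n k ω ≠ 1} + μ D := by
      rw [← measure_inter_add_sdiff {ω | occ X (n + 1) k ω ≠ 1} hA]
      congr 2
      exact Set.inter_eq_right.2 fun ω hω => occ_succ_ne_one hω
    have hle : ∀ᵐ ω ∂μ, ENNReal.ofReal (if occ X (n + 1) k ω = 1 then 0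
          else U₁ k (X (n + 1) ω) (fun w => occ X (n + 1) w ω))
        ≤ ENNReal.ofReal (f ω (X (n + 1) ω))
          + D.indicator (fun _ => ENNReal.ofReal (199 / 200)) ω := by
      filter_upwards [ae_nn hX] with ω hω
      by_cases h1 : occ X (n + 1) k ω = 1
      · simp [h1]
      by_cases h2 : occ X n k ω = 1
      · obtain ⟨hlt, hone⟩ := (path_inv hk (hX.2.1 ω) hω n).1 h2
        have hhit : X (n + 1) ω = k := by
          by_contra hc
          exact h1 (by rw [occ_succ_apply, up_of_ne _ (Ne.symm hc), h2])
        have hmem : ω ∈ D := ⟨h1, by simpa using h2⟩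
        rw [if_neg h1, Set.indicator_of_mem hmem]
        refine le_add_left (ENNReal.ofReal_le_ofReal ?_)
        rw [occ_succ, hhit]
        refine (U₁_le_H₁ ?_).trans ?_
        · rw [up_of_ne _ (by omega), hone _ (by omega)]
        · have e2 : (1 : ℝ) + 1 = 2 := by norm_num
          simp [H₁, up, hone (k + 1) (by omega), h2, e2]
          norm_num
      · simp only [f, if_neg h1, if_neg h2, occ_succ]
        exact le_self_add
    have hdr : ∀ᵐ ω ∂μ, ENNReal.ofReal (drift (fun w => occ X n w ω) (X n ω) (f ω))
        ≤ ENNReal.ofReal (if occ X n k ω = 1 then 0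
          else U₁ k (X n ω) (fun w => occ X n w ω)) := by
      filter_upwards [ae_nn hX] with ω hω
      apply ENNReal.ofReal_le_ofReal
      by_cases h2 : occ X n k ω = 1
      · simp [f, h2, drift]
      · simp only [f, if_neg h2]
        exact drift_U₁ (fun i => one_le_occ _ _ _) ((path_inv hk (hX.2.1 ω) hω n).2 h2)
    calc _ ≤ ∫⁻ ω, (ENNReal.ofReal (f ω (X (n + 1) ω))
          + D.indicator (fun _ => ENNReal.ofReal (199 / 200)) ω) ∂μ := lintegral_mono_ae hle
      _ = ∫⁻ ω, ENNReal.ofReal (f ω (X (n + 1) ω)) ∂μ + ENNReal.ofReal (199 / 200) * μ D := by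
        rw [lintegral_add_right _ (measurable_const.indicator hD), lintegral_indicator_const hD]
      _ ≤ ENNReal.ofReal (199 / 200) * μ {ω | occ X n k ω ≠ 1}
          + ENNReal.ofReal (199 / 200) * μ D := by
        gcongr
        rw [hstep]
        exact (lintegral_mono_ae hdr).trans ih
      _ = _ := by rw [hμ, mul_add]

/-- The event that the walk ever visits `k`. -/
def hit (X : ℕ → Ω → ℤ) (k : ℤ) : Set Ω := {ω | ∃ n, X n ω = k}

lemma hit_eq (k : ℤ) : hit X k = ⋃ n, {ω | occ X n k ω ≠ 1} := by
  ext ω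
  simp only [hit, Set.mem_ofPred_eq, Set.mem_iUnion, Ne, occ_eq_one_iff, not_forall, not_not]
  exact ⟨fun ⟨n, h⟩ => ⟨n, n, le_rfl, h⟩, fun ⟨_, n, _, h⟩ => ⟨n, h⟩⟩

lemma monotone_occ_ne (k : ℤ) : Monotone fun n => {ω | occ X n k ω ≠ 1} :=
  monotone_nat_of_le_succ fun _ _ h => occ_succ_ne_one h

/-- From its first visit to `k > 0`, whatever the past, the walk has probability at least `1/200`
of never reaching `k + 3`. -/
lemma measure_hit_le [IsProbabilityMeasure μ] (hX : IsVRRW μ ℱ 0 X) {k : ℤ} (hk : 0 < k) :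
    μ (hit X (k + 3)) ≤ ENNReal.ofReal (199 / 200) * μ (hit X k) := by
  rw [hit_eq (k + 3), (monotone_occ_ne (k + 3)).measure_iUnion]
  refine iSup_le fun n => ?_
  have h1 : μ {ω | occ X n (k + 3) ω ≠ 1} ≤ ∫⁻ ω, ENNReal.ofReal
      (if occ X n k ω = 1 then 0 else U₁ k (X n ω) (fun w => occ X n w ω)) ∂μ := by
    rw [← lintegral_indicator_one (measurableSet_occ_ne hX.1 n (k + 3))]
    refine lintegral_mono_ae ?_
    filter_upwards [ae_nn hX] with ω hω
    by_cases h3 : occ X n (k + 3) ω = 1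
    · simp [h3]
    · have hk1 : occ X n k ω ≠ 1 := fun h =>
        h3 (((path_inv hk (hX.2.1 ω) hω n).1 h).2 _ (by omega))
      simp [h3, hk1, U₁]
  refine (h1.trans (hit_potential hX hk n)).trans ?_
  gcongr
  rw [hit_eq]
  exact Set.subset_iUnion (fun n => {ω | occ X n k ω ≠ 1}) n

/-- The walk is almost surely bounded above: reaching `1 + 3 j` has probability at most
`(199 / 200) ^ j`. -/
lemma ae_bdd [IsProbabilityMeasure μ] (hX : IsVRRW μ ℱ 0 X) :
    ∀ᵐ ω ∂μ, ∃ k : ℤ, ∀ n, X n ω < k := by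
  have hpow : ∀ j : ℕ, μ (hit X (1 + 3 * j)) ≤ ENNReal.ofReal (199 / 200) ^ j := by
    intro j
    induction j with
    | zero => simpa using prob_le_one
    | succ j ih =>
      have := measure_hit_le hX (k := 1 + 3 * j) (by omega)
      rw [show (1 + 3 * ((j + 1 : ℕ) : ℤ)) = 1 + 3 * j + 3 by push_cast; ring, pow_succ']
      exact this.trans (by gcongr)
  have hr : ENNReal.ofReal (199 / 200) < 1 := by
    rw [ENNReal.ofReal_lt_one]; norm_num
  have hzero : μ (⋂ j : ℕ, hit X (1 + 3 * j)) = 0 := by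
    refine le_antisymm ?_ bot_le
    refine ge_of_tendsto' (ENNReal.tendsto_pow_atTop_nhds_zero_of_lt_one hr) fun j => ?_
    exact (measure_mono (Set.iInter_subset _ j)).trans (hpow j)
  filter_upwards [ae_nn hX, measure_eq_zero_iff_ae_notMem.1 hzero] with ω hω hn
  simp only [Set.mem_iInter, not_forall, hit, Set.mem_ofPred_eq, not_exists] at hn
  obtain ⟨j, hj⟩ := hn
  exact ⟨_, lt_of_avoid (hX.2.1 ω) hω (by omega) hj⟩

lemma ae_finite [IsProbabilityMeasure μ] (hX : IsVRRW μ ℱ 0 X) :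
    ∀ᵐ ω ∂μ, Set.Finite {k : ℤ | ∃ n, X n ω = k} := by
  filter_upwards [ae_bdd hX, ae_bdd hX.neg] with ω ⟨a, ha⟩ ⟨b, hb⟩
  refine (Set.finite_Icc (-b) a).subset ?_
  rintro k ⟨n, rfl⟩
  have h1 := ha n
  have h2 := hb n
  exact ⟨by omega, by omega⟩

/-! ### Range of size five -/

/-- The event that at time `n` the walk is at `p` with occupation numbers `Z`. -/
def stateEvent (X : ℕ → Ω → ℤ) (n : ℕ) (p : ℤ) (Z : ℤ → ℝ) : Set Ω :=
  {ω | X n ω = p ∧ ∀ w, occ X n w ω = Z w}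

lemma measurableSet_stateEvent (hX : Adapted ℱ X) (n : ℕ) (p : ℤ) (Z : ℤ → ℝ) :
    MeasurableSet[ℱ n] (stateEvent X n p Z) :=
  measurableSet_of_hist hX n fun ω ω' h => by
    simp only [stateEvent, Set.mem_ofPred_eq, occ_congr h, h n le_rfl]

/-- Each of the two possible steps from a state of positive probability leads to a state of positive
probability. -/
lemma stateEvent_step [IsProbabilityMeasure μ] (hX : IsVRRW μ ℱ 0 X) {n : ℕ} {p : ℤ} {Z : ℤ → ℝ}
    (h : 0 < μ (stateEvent X n p Z)) {q : ℤ} (hq : q = p + 1 ∨ q = p - 1) :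
    0 < μ (stateEvent X (n + 1) q (up Z q)) := by
  classical
  have hE := measurableSet_stateEvent hX.1 n p Z
  obtain ⟨ω₀, hω₀⟩ := nonempty_of_measure_ne_zero h.ne'
  have hZ : ∀ i, 1 ≤ Z i := fun i => by rw [← hω₀.2 i]; exact one_le_occ _ _ _
  let f : Ω → ℤ → ℝ := fun ω z => if ω ∈ stateEvent X n p Z ∧ z = q then 1 else 0
  have hstep := lintegral_step hX n f
    (fun z => measurable_of_hist hX.1 n fun ω ω' h => by
      simp only [f, stateEvent, Set.mem_ofPred_eq, occ_congr h, h n le_rfl]; congr)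
    (fun ω z => by simp only [f]; split_ifs <;> norm_num)
  let c : ℝ := Z q / (Z (p - 1) + Z (p + 1))
  have hc : 0 < c := by
    have h1 := hZ q
    have h2 := hZ (p - 1)
    have h3 := hZ (p + 1)
    positivity
  have hdr : ∀ ω, ENNReal.ofReal (drift (fun w => occ X n w ω) (X n ω) (f ω))
      = (stateEvent X n p Z).indicator (fun _ => ENNReal.ofReal c) ω := by
    intro ω
    by_cases hω : ω ∈ stateEvent X n p Z
    · have hne : p + 1 ≠ p - 1 := by omega
      rw [Set.indicator_of_mem hω]
      simp only [drift, f, hω, true_and, hω.1, hω.2, c]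
      rcases hq with rfl | rfl
      · simp [hne.symm]
      · simp [hne]
    · simp [hω, drift, f]
  simp_rw [hdr] at hstep
  rw [lintegral_indicator_const (ℱ.le n _ hE)] at hstep
  have hle : ∫⁻ ω, ENNReal.ofReal (f ω (X (n + 1) ω)) ∂μ
      ≤ μ (stateEvent X (n + 1) q (up Z q)) := by
    rw [← lintegral_indicator_one
      (ℱ.le (n + 1) _ (measurableSet_stateEvent hX.1 (n + 1) q (up Z q)))]
    refine lintegral_mono fun ω => ?_
    by_cases hω : ω ∈ stateEvent X n p Z ∧ X (n + 1) ω = q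
    · have : ω ∈ stateEvent X (n + 1) q (up Z q) := by
        refine ⟨hω.2, fun w => ?_⟩
        rw [occ_succ_apply, hω.2]
        simp only [up, hω.1.2]
      simp [f, hω, this]
    · simp [f, hω]
  refine lt_of_lt_of_le ?_ hle
  rw [hstep]
  exact ENNReal.mul_pos (by simpa using hc) h.ne'

/-- With positive probability, the walk visits `±2` once and then oscillates around `0`
arbitrarily many times. -/
lemma exists_state [IsProbabilityMeasure μ] (hX : IsVRRW μ ℱ 0 X) (M : ℕ) :
    ∃ n Z, 0 < μ (stateEvent X n 0 Z) ∧ Z 0 = 4 + 2 * M ∧ Z 1 = 3 + M ∧ Z (-1) = 3 + M ∧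
      Z 2 = 2 ∧ Z (-2) = 2 ∧ Z 3 = 1 ∧ Z (-3) = 1 := by
  induction M with
  | zero =>
    have h0 : 0 < μ (stateEvent X 0 0 (up (fun _ => 1) 0)) := by
      have : stateEvent X 0 0 (up (fun _ => 1) 0) = Set.univ := by
        ext ω
        simp [stateEvent, hX.2.1 ω, occ_zero]
      rw [this]; simp
    have h1 := stateEvent_step hX h0 (q := 1) (by omega)
    have h2 := stateEvent_step hX h1 (q := 2) (by omega)
    have h3 := stateEvent_step hX h2 (q := 1) (by omega)
    have h4 := stateEvent_step hX h3 (q := 0) (by omega)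
    have h5 := stateEvent_step hX h4 (q := -1) (by omega)
    have h6 := stateEvent_step hX h5 (q := -2) (by omega)
    have h7 := stateEvent_step hX h6 (q := -1) (by omega)
    have h8 := stateEvent_step hX h7 (q := 0) (by omega)
    refine ⟨_, _, h8, ?_⟩
    norm_num [up]
  | succ M ih =>
    obtain ⟨n, Z, h0, e0, e1, e1', e2, e2', e3, e3'⟩ := ih
    have h1 := stateEvent_step hX h0 (q := 1) (by omega)
    have h2 := stateEvent_step hX h1 (q := 0) (by omega)
    have h3 := stateEvent_step hX h2 (q := -1) (by omega)
    have h4 := stateEvent_step hX h3 (q := 0) (by omega)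
    refine ⟨_, _, h4, ?_⟩
    norm_num [up, e0, e1, e1', e2, e2', e3, e3']
    refine ⟨by ring, by ring⟩

lemma path_inv₂ {ω : Ω} {n : ℕ} (hnn : ∀ n, |X (n + 1) ω - X n ω| = 1)
    (h : Inv₂ (X n ω) (fun w => occ X n w ω)) (m : ℕ) :
    occ X (n + m) 3 ω = 1 → occ X (n + m) (-3) ω = 1 →
      Inv₂ (X (n + m) ω) (fun w => occ X (n + m) w ω) := by
  induction m with
  | zero => exact fun _ _ => h
  | succ m ih =>
    intro h3 h3'
    rw [← add_assoc] at h3 h3' ⊢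
    have a : occ X (n + m) 3 ω = 1 := by
      by_contra hc; exact occ_succ_ne_one hc h3
    have b : occ X (n + m) (-3) ω = 1 := by
      by_contra hc; exact occ_succ_ne_one hc h3'
    have := (ih a b).step (hnn (n + m)) (by rw [← occ_succ_apply]; exact h3)
      (by rw [← occ_succ_apply]; exact h3')
    rwa [occ_succ]

/-- From a given state, the mean of `U₂` does not increase. -/
lemma trap_potential [IsProbabilityMeasure μ] (hX : IsVRRW μ ℱ 0 X) {n : ℕ} {p : ℤ} {Z : ℤ → ℝ}
    (hI : Inv₂ p Z) {c : ℝ} (hc : U₂ p Z ≤ c) (m : ℕ) :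
    ∫⁻ ω, (stateEvent X n p Z).indicator
        (fun ω => ENNReal.ofReal (U₂ (X (n + m) ω) (fun w => occ X (n + m) w ω))) ω ∂μ
      ≤ ENNReal.ofReal c * μ (stateEvent X n p Z) := by
  classical
  have hE := measurableSet_stateEvent hX.1 n p Z
  induction m with
  | zero =>
    rw [← lintegral_indicator_const (ℱ.le n _ hE)]
    refine lintegral_mono fun ω => ?_
    by_cases hω : ω ∈ stateEvent X n p Z
    · have : (fun w => occ X n w ω) = Z := funext hω.2
      simp only [Set.indicator_of_mem hω, add_zero, this, hω.1]
      exact ENNReal.ofReal_le_ofReal hc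
    · simp [hω]
  | succ m ih =>
    refine le_trans ?_ ih
    let f : Ω → ℤ → ℝ := fun ω z =>
      if ω ∈ stateEvent X n p Z then U₂ z (up (fun w => occ X (n + m) w ω) z) else 0
    have hstep := lintegral_step hX (n + m) f
      (fun z => measurable_of_hist hX.1 (n + m) fun ω ω' h => by
        have h' : ∀ i ≤ n, X i ω = X i ω' := fun i hi => h i (by omega)
        simp only [f, stateEvent, Set.mem_ofPred_eq, occ_congr h, occ_congr h', h' n le_rfl]
        congr)
      (fun ω z => by
        simp only [f]
        split_ifs
        · exact U₂_nonneg (one_le_up (fun i => one_le_occ _ _ _) z)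
        · exact le_rfl)
    have e : ∀ ω, (stateEvent X n p Z).indicator (fun ω => ENNReal.ofReal
        (U₂ (X (n + (m + 1)) ω) (fun w => occ X (n + (m + 1)) w ω))) ω
        = ENNReal.ofReal (f ω (X (n + m + 1) ω)) := by
      intro ω
      by_cases hω : ω ∈ stateEvent X n p Z
      · simp [f, hω, ← add_assoc, occ_succ]
      · simp [f, hω]
    simp_rw [e]
    rw [hstep]
    refine lintegral_mono_ae ?_
    filter_upwards [ae_nn hX] with ω hnn
    by_cases hω : ω ∈ stateEvent X n p Z
    · rw [Set.indicator_of_mem hω]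
      refine ENNReal.ofReal_le_ofReal ?_
      simp only [f, hω, if_true]
      refine drift_U₂ (fun i => one_le_occ _ _ _) (path_inv₂ hnn ?_ m)
      rw [show (fun w => occ X n w ω) = Z from funext hω.2, hω.1]
      exact hI
    · simp [hω, f, drift]

lemma measure_range_five_pos [IsProbabilityMeasure μ] (hX : IsVRRW μ ℱ 0 X) :
    0 < μ {ω | Set.encard {k : ℤ | ∃ n, X n ω = k} = 5} := by
  obtain ⟨n, Z, hpos, e0, e1, e1', e2, e2', e3, e3'⟩ := exists_state hX 500
  obtain ⟨ω₀, hω₀⟩ := nonempty_of_measure_ne_zero hpos.ne'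
  have hZ : ∀ i, 1 ≤ Z i := fun i => by rw [← hω₀.2 i]; exact one_le_occ _ _ _
  set E := stateEvent X n 0 Z with hEdef
  have hI : Inv₂ 0 Z := by
    refine ⟨hZ, by norm_num, ?_, ?_, ?_⟩
    · norm_num [e0, e1, e1']
    · norm_num [e1, e2]
    · norm_num [e1', e2']
  have hU : U₂ 0 Z ≤ 1 / 2 := by
    rw [U₂, if_pos ⟨e3, e3'⟩]
    refine (min_le_right _ _).trans ?_
    norm_num [V₂, S, Q2, e0, e1, e1', e2, e2']
  -- `B m` is the event of having left `{-2, …, 2}` by time `n + m`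
  let B : ℕ → Set Ω := fun m => {ω | occ X (n + m) 3 ω ≠ 1} ∪ {ω | occ X (n + m) (-3) ω ≠ 1}
  have hBm : Monotone fun m => E ∩ B m := by
    refine monotone_nat_of_le_succ fun m => ?_
    refine Set.inter_subset_inter_right _ (Set.union_subset_union ?_ ?_) <;>
    exact fun ω hω => occ_succ_ne_one hω
  have hE := ℱ.le n _ (measurableSet_stateEvent hX.1 n 0 Z)
  have hB : ∀ m, μ (E ∩ B m) ≤ ENNReal.ofReal (1 / 2) * μ E := by
    intro m
    refine le_trans ?_ (trap_potential hX hI hU m)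
    rw [← lintegral_indicator_one (hE.inter ((measurableSet_occ_ne hX.1 _ _).union
      (measurableSet_occ_ne hX.1 _ _)))]
    refine lintegral_mono fun ω => ?_
    by_cases hω : ω ∈ E ∩ B m
    · have hn : ¬ (occ X (n + m) 3 ω = 1 ∧ occ X (n + m) (-3) ω = 1) := by
        rintro ⟨a, b⟩
        rcases hω.2 with h | h
        · exact h a
        · exact h b
      rw [Set.indicator_of_mem hω, Set.indicator_of_mem hω.1, U₂, if_neg hn]
      simp
    · rw [Set.indicator_of_notMem hω]
      exact bot_le
  have hhalf : μ (⋃ m, E ∩ B m) ≤ ENNReal.ofReal (1 / 2) * μ E := by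
    rw [hBm.measure_iUnion]
    exact iSup_le hB
  by_contra hcon
  have hzero : μ {ω | Set.encard {k : ℤ | ∃ n, X n ω = k} = 5} = 0 := by simpa using hcon
  have hsub : μ E ≤ μ (⋃ m, E ∩ B m) := by
    refine measure_mono_ae ?_
    filter_upwards [ae_nn hX, measure_eq_zero_iff_ae_notMem.1 hzero] with ω hnn h5 hω
    by_contra hB'
    apply h5
    have hvis : ∀ w, Z w ≠ 1 → ∃ i, X i ω = w := by
      intro w hw
      by_contra hc
      push Not at hc
      apply hw
      rw [← hω.2 w]
      exact (occ_eq_one_iff n w ω).2 fun i _ => hc i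
    have hav : ∀ i, X i ω ≠ 3 ∧ X i ω ≠ -3 := by
      intro i
      by_contra hc
      apply hB'
      refine Set.mem_iUnion.2 ⟨i, hω, ?_⟩
      rw [not_and_or, not_not, not_not] at hc
      rcases hc with hc | hc
      · exact Or.inl fun h => (occ_eq_one_iff _ _ _).1 h i (by omega) hc
      · exact Or.inr fun h => (occ_eq_one_iff _ _ _).1 h i (by omega) hc
    have hlt := lt_of_avoid (hX.2.1 ω) hnn (k := 3) (by norm_num) fun i => (hav i).1
    have hgt := lt_of_avoid (φ := fun i => - X i ω) (by simp [hX.2.1 ω])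
      (fun i => by rw [← abs_neg, ← hnn i]; congr 1; ring) (k := 3) (by norm_num)
      fun i h => (hav i).2 (by omega)
    have hset : {k : ℤ | ∃ n, X n ω = k} = ((Finset.Icc (-2) 2 : Finset ℤ) : Set ℤ) := by
      ext k
      simp only [Set.mem_ofPred_eq, Finset.coe_Icc, Set.mem_Icc]
      constructor
      · rintro ⟨i, rfl⟩
        have a := hlt i
        have b := hgt i
        omega
      · rintro ⟨a, b⟩
        apply hvis
        obtain rfl | rfl | rfl | rfl | rfl : k = -2 ∨ k = -1 ∨ k = 0 ∨ k = 1 ∨ k = 2 := by omega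
        · norm_num [e2']
        · norm_num [e1']
        · norm_num [e0]
        · norm_num [e1]
        · norm_num [e2]
    change Set.encard {k : ℤ | ∃ n, X n ω = k} = 5
    rw [hset, Set.encard_coe_eq_coe_finsetCard]
    rfl
  have hfin : μ E ≠ ⊤ := measure_ne_top _ _
  have hlt : ENNReal.ofReal (1 / 2) * μ E < 1 * μ E := by
    refine (ENNReal.mul_lt_mul_iff_left hpos.ne' hfin).2 ?_
    rw [ENNReal.ofReal_lt_one]; norm_num
  rw [one_mul] at hlt
  exact absurd (hsub.trans hhalf) (not_le.2 hlt)

end Main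

/-- **Theorem 1**: For VRRW on `ℤ` started at `0`, with positive probability the range has
exactly 5 points, and almost surely the range is finite. -/
theorem vrrw_range_five_and_finite
    {Ω : Type*} {mΩ : MeasurableSpace Ω} (μ : Measure Ω) [IsProbabilityMeasure μ]
    (ℱ : Filtration ℕ mΩ) (X : ℕ → Ω → ℤ) (hX : IsVRRW μ ℱ 0 X) :
    0 < μ {ω | Set.encard {k : ℤ | ∃ n, X n ω = k} = 5} ∧
      μ {ω | Set.Finite {k : ℤ | ∃ n, X n ω = k}} = 1 := by
  refine ⟨measure_range_five_pos hX, ?_⟩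
  rw [← measure_univ (μ := μ)]
  exact measure_congr (eventuallyEq_univ.2 (ae_finite hX))
end

section
/- Let X be a vertex-reinforced random walk on ℤ started at 0 and let R' be its essential range. Then P(|R'| ≤ 4) = 0; that is, almost surely at least 5 sites are visited infinitely often. -/
/-!
The proof works with the history of the walk, a list of vertices with the most recent one first.
A function `H` of the history is superharmonic (`VRRW.SupAt`) if its mean after one step does not
exceed its current value; a nonnegative superharmonic function, evaluated along the walk, is a
supermartingale, so it converges almost surely and its mean is bounded by its initial value.
Write `Z(w)` for the augmented occupation number of `w`, and call a vertex recurrent if it is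
visited infinitely often.

**A nonempty essential range has at least five elements** (`VRRW.ae_range_of_nonempty`). The steps
being `±1`, the essential range is an interval. If it has at most four elements and leftmost
element `l`, then `l - 1` and `l + 4` are visited finitely often. By the conditional Borel–Cantelli
lemma, `∑ 1 / Z(l + 1)` over the visits to `l` and `∑ 1 / Z(l + 2)` over the visits to `l + 3` both
converge. At `l + 1` the walk draws from a Pólya urn with contents `Z(l)` and `Z(l + 2)`, disturbed
only by the steps from `l + 3` to `l + 2`; the second series says that the disturbance is bounded,
and the superharmonic function `VRRW.urn` shows that `Z(l) + Z(l + 2) ≤ C Z(l)` eventually. Since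
`Z(l + 1) ≤ Z(l) + Z(l + 2)`, the first series dominates a multiple of `∑ 1 / Z(l)` over the visits
to `l`, which is a harmonic series: a contradiction.

**The essential range is nonempty** (`VRRW.ae_nonempty`). Otherwise the walk tends to `+∞` or `-∞`;
by reflection consider `+∞`. The function `VRRW.resist`, the sum of `1 / (Z(k) Z(k + 1))` over
`0 ≤ k < x` with `x` the current position, is superharmonic while the walk is positive. Its
convergence forces `Z(m - 1)`, at the time of the first visit to `m`, to tend to infinity with `m`.
Now fix `A`. If `Z(m - 1) ≥ A` at the first visit to `m`, the walk is trapped: an explicit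
superharmonic function (`VRRW.trap`), built from `Z(m) / (Z(m) + Z(m - 2))` and
`Z(m + 1) / Z(m - 1)`, shows that it ever reaches `m + 2` with probability at most `26 / A`. On the
event of escape the walk leaves the trap at `m` for all large `m`, so this event has probability at
most `26 / A` for every `A`.
-/

open MeasureTheory Filter Set

namespace VRRW

/-! ### Histories -/

/-- The history of the walk up to time `n`, most recent position first. -/
def hist {Ω : Type*} (X : ℕ → Ω → ℤ) : ℕ → Ω → List ℤ
  | 0, ω => [X 0 ω]
  | n + 1, ω => X (n + 1) ω :: hist X n ω

/-- The augmented occupation number of `w` in the history `l`. -/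
noncomputable def cnt (l : List ℤ) (w : ℤ) : ℝ := 1 + (l.count w : ℝ)

/-- Histories of nearest-neighbour paths started at `0`. The current position of a history is its
head `l.headI`. -/
inductive Valid : List ℤ → Prop
  | base : Valid [0]
  | right {l : List ℤ} : Valid l → Valid ((l.headI + 1) :: l)
  | left {l : List ℤ} : Valid l → Valid ((l.headI - 1) :: l)

/-- The mean of `H` after one step of the walk from the history `l`, multiplied by the
normalisation `Z(x - 1) + Z(x + 1)`. -/
noncomputable def wstep (H : List ℤ → ℝ) (l : List ℤ) : ℝ :=
  cnt l (l.headI + 1) * H ((l.headI + 1) :: l) + cnt l (l.headI - 1) * H ((l.headI - 1) :: l)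

/-- `H` is superharmonic at the history `l`. -/
def SupAt (H : List ℤ → ℝ) (l : List ℤ) : Prop :=
  wstep H l ≤ (cnt l (l.headI - 1) + cnt l (l.headI + 1)) * H l

lemma one_le_cnt (l : List ℤ) (w : ℤ) : 1 ≤ cnt l w := by
  unfold cnt
  have : (0 : ℝ) ≤ (l.count w : ℝ) := Nat.cast_nonneg _
  linarith

lemma cnt_pos (l : List ℤ) (w : ℤ) : 0 < cnt l w := by
  linarith [one_le_cnt l w]

lemma cnt_cons (x : ℤ) (l : List ℤ) (w : ℤ) :
    cnt (x :: l) w = cnt l w + if x = w then 1 else 0 := by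
  unfold cnt
  by_cases h : x = w
  · subst h; simp; ring
  · simp [h]

lemma cnt_cons_self (x : ℤ) (l : List ℤ) : cnt (x :: l) x = cnt l x + 1 := by
  simp [cnt_cons]

lemma cnt_cons_ne {x w : ℤ} (h : x ≠ w) (l : List ℤ) : cnt (x :: l) w = cnt l w := by
  simp [cnt_cons, h]

lemma cnt_le_cons (x : ℤ) (l : List ℤ) (w : ℤ) : cnt l w ≤ cnt (x :: l) w := by
  rw [cnt_cons]; split_ifs <;> linarith

lemma cnt_cons_le (x : ℤ) (l : List ℤ) (w : ℤ) : cnt (x :: l) w ≤ cnt l w + 1 := by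
  rw [cnt_cons]; split_ifs <;> linarith

/-- If both continuations of `l` have value at most `H l`, then `H` is superharmonic at `l`. -/
lemma SupAt.of_le {H : List ℤ → ℝ} {l : List ℤ}
    (hR : H ((l.headI + 1) :: l) ≤ H l) (hL : H ((l.headI - 1) :: l) ≤ H l) : SupAt H l := by
  unfold SupAt wstep
  have h1 := mul_le_mul_of_nonneg_left hR (cnt_pos l (l.headI + 1)).le
  have h2 := mul_le_mul_of_nonneg_left hL (cnt_pos l (l.headI - 1)).le
  linarith

lemma Valid.ne_nil {l : List ℤ} (h : Valid l) : l ≠ [] := by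
  cases h <;> simp

lemma finite_valid (n : ℕ) : {l : List ℤ | Valid l ∧ l.length = n + 1}.Finite := by
  induction n with
  | zero =>
    refine (Set.finite_singleton [0]).subset ?_
    rintro l ⟨h, hl⟩
    cases h with
    | base => simp
    | right h' => exact absurd (List.length_eq_zero_iff.1 (by simpa using hl)) h'.ne_nil
    | left h' => exact absurd (List.length_eq_zero_iff.1 (by simpa using hl)) h'.ne_nil
  | succ n ih =>
    refine ((ih.image (fun l => (l.headI + 1) :: l)).union
      (ih.image (fun l => (l.headI - 1) :: l))).subset ?_
    rintro l ⟨h, hl⟩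
    cases h with
    | base => simp at hl
    | right h' => exact Or.inl ⟨_, ⟨h', by simpa using hl⟩, rfl⟩
    | left h' => exact Or.inr ⟨_, ⟨h', by simpa using hl⟩, rfl⟩

section Walk

variable {Ω : Type*} {X : ℕ → Ω → ℤ}

lemma hist_length (n : ℕ) (ω : Ω) : (hist X n ω).length = n + 1 := by
  induction n with
  | zero => rfl
  | succ n ih => simp [hist, ih]

lemma hist_headI (n : ℕ) (ω : Ω) : (hist X n ω).headI = X n ω := by
  cases n <;> rfl

lemma occ_eq_cnt (n : ℕ) (w : ℤ) (ω : Ω) : occ X n w ω = cnt (hist X n ω) w := by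
  induction n with
  | zero => by_cases h : X 0 ω = w <;> simp [occ, cnt, hist, Finset.filter_singleton, h]
  | succ n ih =>
    rw [hist, cnt_cons, ← ih]
    unfold occ
    rw [Finset.range_add_one, Finset.filter_insert]
    split_ifs with h
    · rw [Finset.card_insert_of_notMem (by simp)]; push_cast; ring
    · simp

lemma valid_hist {ω : Ω} (h0 : X 0 ω = 0) (hn : ∀ n, |X (n + 1) ω - X n ω| = 1) (n : ℕ) :
    Valid (hist X n ω) := by
  induction n with
  | zero => rw [hist, h0]; exact Valid.base
  | succ n ih =>
    rw [hist]
    have := hn n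
    rcases (abs_eq (zero_le_one)).1 this with h | h
    · have e : X (n + 1) ω = (hist X n ω).headI + 1 := by rw [hist_headI]; linarith
      rw [e]; exact ih.right
    · have e : X (n + 1) ω = (hist X n ω).headI - 1 := by rw [hist_headI]; linarith
      rw [e]; exact ih.left

variable {mΩ : MeasurableSpace Ω} {μ : Measure Ω} {ℱ : Filtration ℕ mΩ}

lemma measurableSet_hist_eq (hX : Adapted ℱ X) (n : ℕ) (l : List ℤ) :
    MeasurableSet[ℱ n] {ω | hist X n ω = l} := by
  induction n generalizing l with
  | zero =>
    have : {ω | hist X 0 ω = l} = X 0 ⁻¹' {x | [x] = l} := by ext; simp [hist]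
    rw [this]
    exact hX 0 (MeasurableSet.of_discrete)
  | succ n ih =>
    cases l with
    | nil => simp [hist]
    | cons y t =>
      have : {ω | hist X (n + 1) ω = y :: t} = X (n + 1) ⁻¹' {y} ∩ {ω | hist X n ω = t} := by
        ext; simp [hist]
      rw [this]
      exact (hX (n + 1) (MeasurableSet.of_discrete)).inter (ℱ.mono (Nat.le_succ n) _ (ih t))

lemma measurableSet_hist (hX : Adapted ℱ X) (n : ℕ) (P : List ℤ → Prop) :
    MeasurableSet[ℱ n] {ω | P (hist X n ω)} := by
  have : {ω | P (hist X n ω)} = ⋃ l ∈ {l | P l}, {ω | hist X n ω = l} := by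
    ext; simp
  rw [this]
  exact MeasurableSet.biUnion (Set.to_countable _) fun l _ => measurableSet_hist_eq hX n l

lemma measurable_hist (hX : Adapted ℱ X) (n : ℕ) (H : List ℤ → ℝ) :
    Measurable[ℱ n] (fun ω => H (hist X n ω)) :=
  fun s _ => measurableSet_hist hX n (fun l => H l ∈ s)

variable [IsProbabilityMeasure μ]

lemma integrable_step (hX : Adapted ℱ X) (n : ℕ) (x : ℤ) :
    Integrable (fun ω => if X n ω = x then (1 : ℝ) else 0) μ := by
  have hm : Measurable (fun ω => if X n ω = x then (1 : ℝ) else 0) :=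
    Measurable.ite ((hX n).mono (ℱ.le n) le_rfl (measurableSet_singleton x))
      measurable_const measurable_const
  refine Integrable.of_bound hm.aestronglyMeasurable 1 (Eventually.of_forall fun ω => ?_)
  split_ifs <;> simp

lemma ae_step (hX : IsVRRW μ ℱ 0 X) : ∀ᵐ ω ∂μ, ∀ n, |X (n + 1) ω - X n ω| = 1 := by
  rw [ae_all_iff]
  intro n
  have key : ∀ x : ℤ, ∀ᵐ ω ∂μ, X (n + 1) ω = x → |x - X n ω| = 1 := by
    intro x
    set s : Set Ω := {ω | ¬ |x - X n ω| = 1} with hs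
    have hsm : MeasurableSet[ℱ n] s :=
      hX.1 n (MeasurableSet.of_discrete (s := {y | ¬ |x - y| = 1}))
    have hi := integrable_step (μ := μ) hX.1 (n + 1) x
    have h1 := setIntegral_condExp (ℱ.le n) hi hsm
    have h2 : ∫ ω in s, (μ[fun ω => if X (n + 1) ω = x then (1 : ℝ) else 0 | ℱ n]) ω ∂μ = 0 := by
      refine setIntegral_eq_zero_of_ae_eq_zero ?_
      filter_upwards [hX.2.2 n x] with ω hω hωs
      rw [hω, if_neg hωs]
    rw [h2] at h1
    have h3 := (setIntegral_eq_zero_iff_of_nonneg_ae (μ := μ) (s := s)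
      (f := fun ω => if X (n + 1) ω = x then (1 : ℝ) else 0)
      (Eventually.of_forall fun ω => by dsimp only; split_ifs <;> simp) hi.integrableOn).1 h1.symm
    rw [EventuallyEq, ae_restrict_iff' (ℱ.le n _ hsm)] at h3
    filter_upwards [h3] with ω hω hx
    by_contra hc
    have := hω hc
    simp [hx] at this
  filter_upwards [ae_all_iff.2 key] with ω hω
  exact hω _ rfl

lemma ae_valid (hX : IsVRRW μ ℱ 0 X) : ∀ᵐ ω ∂μ, ∀ n, Valid (hist X n ω) := by
  filter_upwards [ae_step hX] with ω hω n
  exact valid_hist (hX.2.1 ω) hω n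

lemma integrable_hist (hX : IsVRRW μ ℱ 0 X) (H : List ℤ → ℝ) (n : ℕ) :
    Integrable (fun ω => H (hist X n ω)) μ := by
  obtain ⟨C, hC⟩ := ((finite_valid n).image (fun l => |H l|)).bddAbove
  refine Integrable.of_bound
    ((measurable_hist hX.1 n H).mono (ℱ.le n) le_rfl).aestronglyMeasurable C ?_
  filter_upwards [ae_valid hX] with ω hω
  exact hC ⟨_, ⟨hω n, hist_length n ω⟩, rfl⟩

/-- The transition law of the walk, in terms of functions of the history. -/
lemma condExp_hist (hX : IsVRRW μ ℱ 0 X) (H : List ℤ → ℝ) (n : ℕ) :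
    μ[fun ω => H (hist X (n + 1) ω) | ℱ n] =ᵐ[μ] fun ω => wstep H (hist X n ω) /
      (cnt (hist X n ω) (X n ω - 1) + cnt (hist X n ω) (X n ω + 1)) := by
  classical
  set F : Finset (List ℤ) := (finite_valid n).toFinset with hF
  have hmem : ∀ᵐ ω ∂μ, hist X n ω ∈ F := by
    filter_upwards [ae_valid hX] with ω hω
    simpa [hF] using ⟨hω n, hist_length n ω⟩
  let ind : ℤ → Ω → ℝ := fun x ω => if X (n + 1) ω = x then (1 : ℝ) else 0
  let g : List ℤ → Ω → ℝ := fun l => H ((l.headI + 1) :: l) • ind (l.headI + 1) +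
    H ((l.headI - 1) :: l) • ind (l.headI - 1)
  have hind : ∀ x, Integrable (ind x) μ := fun x => integrable_step hX.1 (n + 1) x
  have hg : ∀ l, Integrable (g l) μ := fun l => ((hind _).smul _).add ((hind _).smul _)
  let f : List ℤ → Ω → ℝ := fun l => {ω | hist X n ω = l}.indicator (g l)
  have hfm : ∀ l, MeasurableSet[ℱ n] {ω | hist X n ω = l} := measurableSet_hist_eq hX.1 n
  have hf : ∀ l ∈ F, Integrable (f l) μ := fun l _ => (hg l).indicator (ℱ.le n _ (hfm l))
  have e1 : (fun ω => H (hist X (n + 1) ω)) =ᵐ[μ] ∑ l ∈ F, f l := by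
    filter_upwards [hmem, ae_step hX] with ω hω hs
    rw [Finset.sum_apply, Finset.sum_eq_single (hist X n ω)]
    · have hh := hist_headI (X := X) n ω
      simp only [f, g, ind, hist, Set.indicator, Set.mem_ofPred_eq, if_true, Pi.add_apply,
        Pi.smul_apply, smul_eq_mul, hh]
      rcases (abs_eq (zero_le_one)).1 (hs n) with h | h
      · have e : X (n + 1) ω = X n ω + 1 := by linarith
        have e' : X n ω + 1 ≠ X n ω - 1 := by omega
        simp [e, e']
      · have e : X (n + 1) ω = X n ω - 1 := by linarith
        have e' : X n ω - 1 ≠ X n ω + 1 := by omega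
        simp [e, e']
    · intro l _ hl
      simp [f, hl.symm]
    · intro h; exact absurd hω h
  have e2 : ∀ l, μ[f l | ℱ n] =ᵐ[μ] {ω | hist X n ω = l}.indicator
      (fun ω => wstep H l / (cnt l (l.headI - 1) + cnt l (l.headI + 1))) := by
    intro l
    refine (condExp_indicator (hg l) (hfm l)).trans ?_
    have a1 := condExp_add ((hind (l.headI + 1)).smul (H ((l.headI + 1) :: l)))
      ((hind (l.headI - 1)).smul (H ((l.headI - 1) :: l))) (ℱ n)
    have a2 := condExp_smul (μ := μ) (H ((l.headI + 1) :: l)) (ind (l.headI + 1)) (ℱ n)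
    have a3 := condExp_smul (μ := μ) (H ((l.headI - 1) :: l)) (ind (l.headI - 1)) (ℱ n)
    filter_upwards [a1, a2, a3, hX.2.2 n (l.headI + 1), hX.2.2 n (l.headI - 1)]
      with ω h1 h2 h3 h4 h5
    by_cases hl : hist X n ω = l
    · have hh := hist_headI (X := X) n ω
      simp only [Set.indicator, Set.mem_ofPred_eq, hl, if_true]
      rw [h1, Pi.add_apply, h2, h3, Pi.smul_apply, Pi.smul_apply, h4, h5]
      rw [hl] at hh
      simp only [occ_eq_cnt, hl, ← hh, wstep, smul_eq_mul]
      simp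
      ring
    · simp [Set.indicator, hl]
  refine (condExp_congr_ae e1).trans ((condExp_finsetSum hf _).trans ?_)
  have e3 : ∀ᵐ ω ∂μ, ∀ l, (μ[f l | ℱ n]) ω = {ω | hist X n ω = l}.indicator
      (fun ω => wstep H l / (cnt l (l.headI - 1) + cnt l (l.headI + 1))) ω :=
    ae_all_iff.2 e2
  filter_upwards [e3, hmem] with ω h1 h2
  rw [Finset.sum_apply, Finset.sum_eq_single (hist X n ω)]
  · rw [h1]
    simp [Set.indicator, hist_headI]
  · intro l _ hl
    rw [h1]; simp [Set.indicator, hl.symm]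
  · intro h; exact absurd h2 h

lemma supermartingale_hist (hX : IsVRRW μ ℱ 0 X) {H : List ℤ → ℝ}
    (hH : ∀ l, Valid l → SupAt H l) :
    Supermartingale (fun n ω => H (hist X n ω)) ℱ μ := by
  refine supermartingale_nat (fun n => (measurable_hist hX.1 n H).stronglyMeasurable)
    (integrable_hist hX H) fun n => ?_
  filter_upwards [condExp_hist hX H n, ae_valid hX] with ω h1 h2
  rw [h1, div_le_iff₀ (add_pos (cnt_pos _ _) (cnt_pos _ _)), mul_comm]
  have := hH _ (h2 n)
  unfold SupAt at this
  rwa [hist_headI] at this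

lemma integral_hist_le (hX : IsVRRW μ ℱ 0 X) {H : List ℤ → ℝ}
    (hH : ∀ l, Valid l → SupAt H l) (n : ℕ) :
    ∫ ω, H (hist X n ω) ∂μ ≤ H [0] := by
  have h := (supermartingale_hist hX hH).setIntegral_le (Nat.zero_le n) MeasurableSet.univ
  simp only [setIntegral_univ] at h
  refine h.trans (le_of_eq ?_)
  have : ∀ ω, hist X 0 ω = [0] := fun ω => by simp [hist, hX.2.1 ω]
  simp [this]

/-- Nonnegative superharmonic functions of the history converge along the walk. -/
lemma ae_tendsto_hist (hX : IsVRRW μ ℱ 0 X) {H : List ℤ → ℝ} (h0 : ∀ l, 0 ≤ H l)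
    (hH : ∀ l, Valid l → SupAt H l) :
    ∀ᵐ ω ∂μ, ∃ c, Tendsto (fun n => H (hist X n ω)) atTop (nhds c) := by
  have hs := (supermartingale_hist hX hH).neg
  have hb : ∀ n, eLpNorm ((-fun n ω => H (hist X n ω)) n) 1 μ ≤ ((H [0]).toNNReal : ENNReal) := by
    intro n
    rw [Pi.neg_apply, eLpNorm_neg, eLpNorm_one_eq_lintegral_enorm,
      ← ofReal_integral_norm_eq_lintegral_enorm (integrable_hist hX H n)]
    refine ENNReal.ofReal_le_ofReal ?_
    simp only [Real.norm_eq_abs, abs_of_nonneg (h0 _)]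
    exact integral_hist_le hX hH n
  filter_upwards [hs.exists_ae_tendsto_of_bdd hb] with ω ⟨c, hc⟩
  refine ⟨-c, ?_⟩
  simpa using hc.neg

/-- From time `k` on, the history has stayed in the set `A`. -/
def activeFrom (A : List ℤ → Prop) (k : ℕ) : List ℤ → Prop
  | [] => True
  | x :: l => activeFrom A k l ∧ (k ≤ l.length → A (x :: l))

open Classical in
/-- The variant of `ae_tendsto_hist` for a function that is only superharmonic from time `k` on, as
long as the history stays in the set `A`: it converges on the event that this never fails. -/
lemma ae_tendsto_hist_of_active (hX : IsVRRW μ ℱ 0 X) {H : List ℤ → ℝ} (h0 : ∀ l, 0 ≤ H l)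
    (A : List ℤ → Prop) (k : ℕ)
    (hA : ∀ l, Valid l → A l → SupAt (fun t => if t = l ∨ A t then H t else 0) l) :
    ∀ᵐ ω ∂μ, (∀ n, k ≤ n → A (hist X n ω)) →
      ∃ c, Tendsto (fun n => H (hist X n ω)) atTop (nhds c) := by
  obtain ⟨C, hC⟩ := ((finite_valid k).image H).bddAbove
  have hC' : ∀ l, Valid l → l.length = k + 1 → H l ≤ max C 0 := fun l hl hk =>
    (hC ⟨l, ⟨hl, hk⟩, rfl⟩).trans (le_max_left _ _)
  set G : List ℤ → ℝ := fun l => if l.length ≤ k then max C 0 else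
    if activeFrom A k l then H l else 0 with hG
  have hG0 : ∀ l, 0 ≤ G l := by
    intro l
    simp only [hG]
    split_ifs
    · exact le_max_right _ _
    · exact h0 l
    · exact le_rfl
  have hsup : ∀ l, Valid l → SupAt G l := by
    intro l hl
    rcases lt_trichotomy l.length k with hk | hk | hk
    · apply SupAt.of_le <;>
        simp only [hG, List.length_cons, if_pos hk.le, if_pos (Nat.succ_le_of_lt hk)] <;> exact le_rfl
    · have hc : ∀ y, Valid (y :: l) → G (y :: l) ≤ G l := by
        intro y hy
        simp only [hG, List.length_cons, if_pos hk.le, hk, Nat.not_succ_le_self, if_false]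
        split_ifs
        · exact hC' _ hy (by simp [hk])
        · exact le_max_right _ _
      exact SupAt.of_le (hc _ hl.right) (hc _ hl.left)
    · have hg : ∀ y, G (y :: l) = if activeFrom A k l ∧ A (y :: l) then H (y :: l) else 0 := by
        intro y
        have : ¬ l.length + 1 ≤ k := by omega
        simp [hG, this, activeFrom, hk.le]
      have hgl : G l = if activeFrom A k l then H l else 0 := by
        simp only [hG, if_neg (not_le.2 hk)]
      by_cases hact : activeFrom A k l
      · have hAl : A l := by
          cases l with
          | nil => exact absurd rfl hl.ne_nil
          | cons x t =>
            simp only [List.length_cons] at hk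
            exact hact.2 (by omega)
        have h := hA l hl hAl
        unfold SupAt wstep at h ⊢
        rw [hg, hg, hgl]
        have hne : ∀ y, y :: l ≠ l := fun y => List.cons_ne_self y l
        simpa [hact, hne] using h
      · apply SupAt.of_le <;> rw [hg, hgl] <;> simp [hact]
  filter_upwards [ae_tendsto_hist hX hG0 hsup] with ω ⟨c, hc⟩ hω
  refine ⟨c, hc.congr' ?_⟩
  filter_upwards [eventually_ge_atTop k] with n hn
  have hal : ∀ n, activeFrom A k (hist X n ω) := by
    intro n
    induction n with
    | zero =>
      refine ⟨trivial, fun h => ?_⟩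
      have := hω 0 (by simpa using h)
      simpa [hist] using this
    | succ n ih =>
      refine ⟨ih, fun h => ?_⟩
      rw [hist_length] at h
      exact hω (n + 1) h
  simp [hG, hist_length, hal n, show ¬ n + 1 ≤ k by omega]

/-- Lévy's conditional Borel–Cantelli lemma for the visits to `w`. -/
lemma ae_infinite_iff (hX : IsVRRW μ ℱ 0 X) (w : ℤ) :
    ∀ᵐ ω ∂μ, {n | X n ω = w}.Infinite ↔
      Tendsto (fun n => ∑ i ∈ Finset.range n, if |w - X i ω| = 1 then
        cnt (hist X i ω) w / (cnt (hist X i ω) (X i ω - 1) + cnt (hist X i ω) (X i ω + 1)) else 0)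
        atTop atTop := by
  have h := ae_mem_limsup_atTop_iff (ℱ := ℱ) μ (s := fun n => {ω | X n ω = w})
    (fun n => hX.1 n (measurableSet_singleton w))
  have h2 : ∀ᵐ ω ∂μ, ∀ n, _ := ae_all_iff.2 fun n => hX.2.2 n w
  filter_upwards [h, h2] with ω h1 h2
  rw [mem_limsup_iff_frequently_mem, Nat.frequently_atTop_iff_infinite] at h1
  rw [show {n | X n ω = w} = {n | ω ∈ {ω | X n ω = w}} from rfl, h1]
  have e : ∀ i, (μ[({ω | X (i + 1) ω = w} : Set Ω).indicator (1 : Ω → ℝ) | ℱ i]) ω =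
      if |w - X i ω| = 1 then cnt (hist X i ω) w /
        (cnt (hist X i ω) (X i ω - 1) + cnt (hist X i ω) (X i ω + 1)) else 0 := by
    intro i
    have : ({ω | X (i + 1) ω = w} : Set Ω).indicator (1 : Ω → ℝ) =
        fun ω => if X (i + 1) ω = w then (1 : ℝ) else 0 := by
      ext ω; simp [Set.indicator]
    rw [this, h2 i]
    simp only [occ_eq_cnt]
  simp only [e]

end Walk

end VRRW

namespace VRRW

/-! ### Counting visits along a path -/

/-- Every visit to `w`, except a visit at time `0`, is preceded by a visit to a neighbour of `w`,
and a current stay at a neighbour has not been used up yet. -/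
lemma Valid.count_le {l : List ℤ} (h : Valid l) (w : ℤ) :
    l.count w + (if l.headI = w - 1 ∨ l.headI = w + 1 then 1 else 0) ≤
      l.count (w - 1) + l.count (w + 1) + (if w = 0 then 1 else 0) := by
  induction h with
  | base =>
    simp only [List.count_singleton, List.headI, beq_iff_eq]
    grind
  | right h ih | left h ih =>
    simp only [List.count_cons, List.headI_cons, beq_iff_eq] at ih ⊢
    grind

lemma Valid.cnt_le {l : List ℤ} (h : Valid l) (w : ℤ) :
    cnt l w ≤ cnt l (w - 1) + cnt l (w + 1) := by
  have h1 : l.count w ≤ l.count (w - 1) + l.count (w + 1) + 1 := by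
    have := h.count_le w
    split_ifs at this <;> omega
  have h2 : (l.count w : ℝ) ≤ l.count (w - 1) + l.count (w + 1) + 1 := by exact_mod_cast h1
  unfold cnt
  linarith

lemma Valid.cnt_add_one_le {l : List ℤ} (h : Valid l) {w : ℤ} (hw : w ≠ 0) :
    cnt l w + 1 ≤ cnt l (w - 1) + cnt l (w + 1) := by
  have h1 : l.count w ≤ l.count (w - 1) + l.count (w + 1) := by
    have := h.count_le w
    rw [if_neg hw] at this
    omega
  have h2 : (l.count w : ℝ) ≤ l.count (w - 1) + l.count (w + 1) := by exact_mod_cast h1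
  unfold cnt
  linarith

lemma SupAt.restrict {H : List ℤ → ℝ} (h0 : ∀ l, 0 ≤ H l) {A : List ℤ → Prop} {l : List ℤ}
    (h : SupAt H l) : open Classical in SupAt (fun t => if t = l ∨ A t then H t else 0) l := by
  classical
  unfold SupAt wstep at h ⊢
  have hle : ∀ t, (if t = l ∨ A t then H t else 0) ≤ H t := fun t => by
    split_ifs
    · exact le_rfl
    · exact h0 t
  have h1 := mul_le_mul_of_nonneg_left (hle ((l.headI + 1) :: l)) (cnt_pos l (l.headI + 1)).le
  have h2 := mul_le_mul_of_nonneg_left (hle ((l.headI - 1) :: l)) (cnt_pos l (l.headI - 1)).le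
  simp only [true_or, if_true]
  exact (add_le_add h1 h2).trans h

/-! ### The urn at a vertex and the leftmost recurrent vertex -/

/-- The factor compensating the steps `v + 2 → v + 1`, which disturb the urn at `v`. -/
noncomputable def corr (v : ℤ) : List ℤ → ℝ
  | [] => 1
  | _ :: l => corr v l * if l.headI = v + 2 then 1 + 1 / cnt l (v + 1) else 1

/-- The compensated urn functional at `v`. With `a = Z(v - 1)` and `N = Z(v - 1) + Z(v + 1)`, the
quotient `(N - 1) / (a - 1)` is a martingale for draws from the Pólya urn at `v`. -/
noncomputable def urn (v : ℤ) (l : List ℤ) : ℝ :=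
  (cnt l (v - 1) + cnt l (v + 1) - 1) / (cnt l (v - 1) - 1) / corr v l

lemma corr_pos (v : ℤ) (l : List ℤ) : 0 < corr v l := by
  induction l with
  | nil => exact one_pos
  | cons x l ih =>
    rw [corr]
    have := cnt_pos l (v + 1)
    split_ifs <;> positivity

lemma corr_le_cons (v x : ℤ) (l : List ℤ) : corr v l ≤ corr v (x :: l) := by
  rw [corr]
  refine le_mul_of_one_le_right (corr_pos v l).le ?_
  have := cnt_pos l (v + 1)
  split_ifs
  · have : 0 < 1 / cnt l (v + 1) := by positivity
    linarith
  · exact le_rfl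

lemma urn_nonneg (v : ℤ) (l : List ℤ) : 0 ≤ urn v l := by
  have h1 := one_le_cnt l (v - 1)
  have h2 := one_le_cnt l (v + 1)
  exact div_nonneg (div_nonneg (by linarith) (by linarith)) (corr_pos v l).le

lemma urn_cons_le {v y : ℤ} {l : List ℤ} (hA : 2 ≤ cnt l (v - 1))
    (hy : y = v + 1 → l.headI = v + 2) : urn v (y :: l) ≤ urn v l := by
  have hb := cnt_pos l (v + 1)
  have hb1 := one_le_cnt l (v + 1)
  have hc := corr_pos v l
  have hc' := corr_pos v (y :: l)
  unfold urn
  by_cases h1 : y = v + 1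
  · have hh := hy h1
    subst h1
    rw [cnt_cons_self, cnt_cons_ne (by omega), corr, if_pos hh]
    have hk : cnt l (v - 1) + (cnt l (v + 1) + 1) - 1 ≤
        (cnt l (v - 1) + cnt l (v + 1) - 1) * (1 + 1 / cnt l (v + 1)) := by
      have h1 : 1 ≤ (cnt l (v - 1) + cnt l (v + 1) - 1) / cnt l (v + 1) := by
        rw [one_le_div hb]
        linarith
      rw [mul_add, mul_one, mul_one_div]
      linarith
    have ha : 0 < cnt l (v - 1) - 1 := by linarith
    rw [div_div, div_div, div_le_div_iff₀ (by positivity) (by positivity)]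
    have := mul_le_mul_of_nonneg_right hk (mul_pos ha hc).le
    linarith
  · by_cases h2 : y = v - 1
    · subst h2
      rw [cnt_cons_self, cnt_cons_ne (by omega)]
      refine div_le_div₀ (div_nonneg (by linarith) (by linarith)) ?_ hc (corr_le_cons _ _ _)
      rw [div_le_div_iff₀ (by linarith) (by linarith)]
      nlinarith
    · rw [cnt_cons_ne h1, cnt_cons_ne h2]
      exact div_le_div_of_nonneg_left (div_nonneg (by linarith) (by linarith)) hc
        (corr_le_cons _ _ _)

lemma urn_supAt {v : ℤ} {l : List ℤ} (hA : 2 ≤ cnt l (v - 1)) : SupAt (urn v) l := by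
  by_cases hx : l.headI = v
  · have hb := cnt_pos l (v + 1)
    have hc := corr_pos v l
    have e : ∀ y, corr v (y :: l) = corr v l := fun y => by
      rw [corr, if_neg (by omega), mul_one]
    unfold SupAt wstep urn
    rw [hx, e, e, cnt_cons_self, cnt_cons_self, cnt_cons_ne (by omega), cnt_cons_ne (by omega)]
    have h1 : cnt l (v - 1) - 1 ≠ 0 := by linarith
    have h2 : cnt l (v - 1) ≠ 0 := by linarith
    have h3 : cnt l (v - 1) + 1 - 1 ≠ 0 := by linarith
    refine le_of_eq ?_
    rw [show cnt l (v - 1) + 1 - 1 = cnt l (v - 1) by ring]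
    field_simp
    ring
  · exact SupAt.of_le (urn_cons_le hA (by omega)) (urn_cons_le hA (by omega))

section Walk

variable {Ω : Type*} {X : ℕ → Ω → ℤ}

lemma corr_hist_le (v : ℤ) (n : ℕ) (ω : Ω) :
    corr v (hist X n ω) ≤ 2 * Real.exp (∑ i ∈ Finset.range n,
      if X i ω = v + 2 then 1 / cnt (hist X i ω) (v + 1) else 0) := by
  induction n with
  | zero =>
    simp only [hist, corr, cnt, List.count_nil, Finset.range_zero, Finset.sum_empty, Real.exp_zero]
    split_ifs <;> norm_num
  | succ n ih =>
    rw [hist, corr, Finset.sum_range_succ, Real.exp_add, ← mul_assoc, hist_headI]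
    have := cnt_pos (hist X n ω) (v + 1)
    refine mul_le_mul ih ?_ (by split_ifs <;> positivity) (by positivity)
    split_ifs
    · rw [add_comm]; exact Real.add_one_le_exp _
    · simp

lemma cnt_hist_mono (ω : Ω) (w : ℤ) : Monotone fun n => cnt (hist X n ω) w :=
  monotone_nat_of_le_succ fun n => by rw [hist]; exact cnt_le_cons _ _ _

lemma cnt_hist_two_le {ω : Ω} {w : ℤ} {k n : ℕ} (hk : X k ω = w) (hn : k ≤ n) :
    2 ≤ cnt (hist X n ω) w := by
  refine le_trans ?_ (cnt_hist_mono (X := X) ω w hn)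
  have h1 := one_le_cnt
  cases k with
  | zero => simp only [hist, hk, cnt_cons_self]; linarith [h1 [] w]
  | succ k => simp only [hist, hk, cnt_cons_self]; linarith [h1 (hist X k ω) w]

lemma cnt_hist_unbounded {ω : Ω} {w : ℤ} (h : {n | X n ω = w}.Infinite) (K : ℕ) :
    ∃ n, (K : ℝ) ≤ cnt (hist X n ω) w := by
  obtain ⟨t, ht, hc⟩ := h.exists_subset_card_eq K
  refine ⟨t.sup id, ?_⟩
  rw [← occ_eq_cnt, occ]
  have : t ⊆ (Finset.range (t.sup id + 1)).filter (fun i => X i ω = w) := by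
    intro i hi
    rw [Finset.mem_filter, Finset.mem_range]
    exact ⟨Nat.lt_succ_of_le (Finset.le_sup (f := id) hi), ht hi⟩
  have h2 := Finset.card_le_card this
  rw [hc] at h2
  have h3 : (K : ℝ) ≤ _ := Nat.cast_le.2 h2
  linarith

lemma cnt_hist_bounded {ω : Ω} {w : ℤ} (h : ¬ {n | X n ω = w}.Infinite) :
    ∃ K : ℝ, 0 ≤ K ∧ ∀ n, cnt (hist X n ω) w ≤ K := by
  rw [Set.not_infinite] at h
  refine ⟨1 + h.toFinset.card, by positivity, fun n => ?_⟩
  rw [← occ_eq_cnt, occ]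
  have : (Finset.range (n + 1)).filter (fun i => X i ω = w) ⊆ h.toFinset := by
    intro i hi
    simpa using (Finset.mem_filter.1 hi).2
  have h3 : ((_ : ℕ) : ℝ) ≤ _ := Nat.cast_le.2 (Finset.card_le_card this)
  linarith

/-- The harmonic series along the visits to a recurrent vertex diverges. -/
lemma not_summable_inv_cnt {ω : Ω} {w : ℤ} (h : {n | X n ω = w}.Infinite) :
    ¬ Summable (fun i => if X i ω = w then 1 / cnt (hist X i ω) w else 0) := by
  intro hs
  set f : ℕ → ℝ := fun i => if X i ω = w then 1 / cnt (hist X i ω) w else 0 with hf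
  have hf0 : ∀ i, 0 ≤ f i := fun i => by
    have := cnt_pos (hist X i ω) w
    simp only [hf]; split_ifs <;> positivity
  have hlog : ∀ n, Real.log (cnt (hist X n ω) w) ≤ 2 * ∑ i ∈ Finset.range (n + 1), f i := by
    have step : ∀ l : List ℤ, Real.log (cnt (w :: l) w) ≤
        Real.log (cnt l w) + 2 * (1 / cnt (w :: l) w) := by
      intro l
      rw [cnt_cons_self]
      have h1 := one_le_cnt l w
      have h2 : Real.log ((cnt l w + 1) / cnt l w) ≤ (cnt l w + 1) / cnt l w - 1 :=
        Real.log_le_sub_one_of_pos (by positivity)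
      rw [Real.log_div (by positivity) (by positivity)] at h2
      have h3 : (cnt l w + 1) / cnt l w - 1 ≤ 2 * (1 / (cnt l w + 1)) := by
        rw [div_sub_one (by positivity), mul_one_div, div_le_div_iff₀ (by positivity) (by positivity)]
        linarith
      linarith
    intro n
    induction n with
    | zero =>
      rw [Finset.sum_range_succ, Finset.sum_range_zero, zero_add]
      by_cases hx : X 0 ω = w
      · simp only [hf, if_pos hx]
        have := step []
        simpa [hist, hx, cnt] using this
      · simp [hf, hx, hist, cnt]
    | succ n ih =>
      rw [Finset.sum_range_succ]
      by_cases hx : X (n + 1) ω = w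
      · simp only [hf, if_pos hx]
        have := step (hist X n ω)
        simp only [hist, hx]
        linarith
      · have e : f (n + 1) = 0 := by simp [hf, hx]
        rw [e, hist, cnt_cons_ne hx]
        linarith
  obtain ⟨K, hK⟩ := exists_nat_gt (Real.exp (2 * ∑' i, f i))
  obtain ⟨n, hn⟩ := cnt_hist_unbounded h K
  have h1 := hlog n
  have h2 := hs.sum_le_tsum (Finset.range (n + 1)) (fun i _ => hf0 i)
  have h3 : Real.log (cnt (hist X n ω) w) ≤ 2 * ∑' i, f i := by linarith
  rw [Real.log_le_iff_le_exp (cnt_pos _ _)] at h3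
  linarith

variable {mΩ : MeasurableSpace Ω} {μ : Measure Ω} {ℱ : Filtration ℕ mΩ} [IsProbabilityMeasure μ]

/-- If `v - 1` is recurrent and `v + 2` is visited rarely, the fraction of right draws in the urn
at `v` does not tend to one. -/
lemma ae_urn_bounded (hX : IsVRRW μ ℱ 0 X) : ∀ᵐ ω ∂μ, ∀ v : ℤ, {n | X n ω = v - 1}.Infinite →
    Summable (fun i => if X i ω = v + 2 then 1 / cnt (hist X i ω) (v + 1) else 0) →
    ∃ C : ℝ, 0 < C ∧ ∃ N, ∀ n, N ≤ n →
      cnt (hist X n ω) (v - 1) + cnt (hist X n ω) (v + 1) ≤ C * cnt (hist X n ω) (v - 1) := by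
  have h : ∀ᵐ ω ∂μ, ∀ v : ℤ, ∀ k : ℕ, (∀ n, k ≤ n → 2 ≤ cnt (hist X n ω) (v - 1)) →
      ∃ c, Tendsto (fun n => urn v (hist X n ω)) atTop (nhds c) :=
    ae_all_iff.2 fun v => ae_all_iff.2 fun k =>
      ae_tendsto_hist_of_active hX (urn_nonneg v) (fun l => 2 ≤ cnt l (v - 1)) k
        fun l _ hl => (urn_supAt hl).restrict (urn_nonneg v)
  filter_upwards [h] with ω hω v hv hs
  obtain ⟨k, hk⟩ := hv.nonempty
  have h2 : ∀ n, k ≤ n → 2 ≤ cnt (hist X n ω) (v - 1) := fun n hn => cnt_hist_two_le hk hn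
  obtain ⟨c, hc⟩ := hω v k h2
  have hev := hc.eventually (gt_mem_nhds (lt_add_one c))
  obtain ⟨N, hN⟩ := eventually_atTop.1 hev
  set S := ∑' i, if X i ω = v + 2 then 1 / cnt (hist X i ω) (v + 1) else 0 with hS
  have hcpos : 0 < c + 1 := lt_of_le_of_lt (urn_nonneg v _) (hN N le_rfl)
  refine ⟨(c + 1) * (2 * Real.exp S) + 1, by positivity, max N k, fun n hn => ?_⟩
  have h3 := hN n (le_trans (le_max_left _ _) hn)
  have h4 := h2 n (le_trans (le_max_right _ _) hn)
  have h5 : corr v (hist X n ω) ≤ 2 * Real.exp S := by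
    refine (corr_hist_le v n ω).trans (mul_le_mul_of_nonneg_left
      (Real.exp_le_exp.2 (hs.sum_le_tsum _ fun i _ => ?_)) zero_le_two)
    have := cnt_pos (hist X i ω) (v + 1)
    split_ifs <;> positivity
  unfold urn at h3
  rw [div_lt_iff₀ (corr_pos _ _), div_lt_iff₀ (by linarith)] at h3
  have h6 := mul_le_mul_of_nonneg_left h5 hcpos.le
  have h7 := mul_le_mul_of_nonneg_right h6 (show 0 ≤ cnt (hist X n ω) (v - 1) - 1 by linarith)
  have h8 : 0 < (c + 1) * (2 * Real.exp S) := by positivity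
  linarith

lemma term_nonneg (ω : Ω) (w : ℤ) (i : ℕ) : 0 ≤ if |w - X i ω| = 1 then
    cnt (hist X i ω) w / (cnt (hist X i ω) (X i ω - 1) + cnt (hist X i ω) (X i ω + 1)) else 0 := by
  have h1 := cnt_pos (hist X i ω) w
  have h2 := cnt_pos (hist X i ω) (X i ω - 1)
  have h3 := cnt_pos (hist X i ω) (X i ω + 1)
  split_ifs <;> positivity

/-- If `w` is not recurrent, then the walk rarely visits a neighbour `u` of `w`, compared with the
local time at the other neighbour `u'` of `u`. -/
lemma ae_summable_of_escape (hX : IsVRRW μ ℱ 0 X) : ∀ᵐ ω ∂μ, ∀ w u u' : ℤ,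
    ¬ {n | X n ω = w}.Infinite → ((w = u - 1 ∧ u' = u + 1) ∨ (w = u + 1 ∧ u' = u - 1)) →
    Summable (fun i => if X i ω = u then 1 / cnt (hist X i ω) u' else 0) := by
  filter_upwards [ae_all_iff.2 (ae_infinite_iff hX)] with ω hω w u u' hw hu
  obtain ⟨K, hK0, hK⟩ := cnt_hist_bounded hw
  have hs := hw
  rw [hω w, ← summable_iff_not_tendsto_nat_atTop_of_nonneg (term_nonneg ω w)] at hs
  refine Summable.of_nonneg_of_le (fun i => ?_) (fun i => ?_) (hs.mul_left (K + 1))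
  · have := cnt_pos (hist X i ω) u'
    split_ifs <;> positivity
  · by_cases hi : X i ω = u
    · have h1 := one_le_cnt (hist X i ω) u'
      have h2 := one_le_cnt (hist X i ω) w
      have h3 := hK i
      have key : 1 / cnt (hist X i ω) u' ≤
          (K + 1) * (cnt (hist X i ω) w / (cnt (hist X i ω) w + cnt (hist X i ω) u')) := by
        rw [mul_div_assoc', div_le_div_iff₀ (by linarith) (by linarith)]
        nlinarith [mul_nonneg (sub_nonneg.2 h1) (sub_nonneg.2 h2), mul_nonneg hK0 (sub_nonneg.2 h2),
          mul_nonneg (mul_nonneg hK0 (sub_nonneg.2 h2)) (sub_nonneg.2 h1),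
          mul_nonneg hK0 (sub_nonneg.2 h1)]
      rcases hu with ⟨rfl, rfl⟩ | ⟨rfl, rfl⟩
      · rw [if_pos hi, hi, if_pos (by simp)]
        exact key
      · rw [if_pos hi, hi, if_pos (by simp), add_comm (cnt _ (u - 1))]
        exact key
    · rw [if_neg hi]
      exact mul_nonneg (by linarith) (term_nonneg ω w i)

/-- If `l` is a leftmost recurrent vertex, then `l + 4` is recurrent: otherwise the walk visits `l`
rarely compared with `Z(l + 1)`, while `Z(l + 1)` is at most a multiple of `Z(l)`. -/
lemma ae_recurrent_of_leftmost (hX : IsVRRW μ ℱ 0 X) : ∀ᵐ ω ∂μ, ∀ l : ℤ,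
    {n | X n ω = l}.Infinite → ¬ {n | X n ω = l - 1}.Infinite → {n | X n ω = l + 4}.Infinite := by
  filter_upwards [ae_urn_bounded hX, ae_summable_of_escape hX, ae_valid hX]
    with ω hurn hesc hval l hl hl1
  by_contra hcon
  have h3 : Summable (fun i => if X i ω = l + 1 + 2 then 1 / cnt (hist X i ω) (l + 1 + 1) else 0) :=
    hesc (l + 4) _ _ hcon (Or.inr ⟨by ring, by ring⟩)
  obtain ⟨C, hC, N, hN⟩ := hurn (l + 1) (by rwa [add_sub_cancel_right]) h3
  have h4 := hesc (l - 1) l (l + 1) hl1 (Or.inl ⟨rfl, rfl⟩)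
  refine not_summable_inv_cnt hl ?_
  rw [← summable_nat_add_iff N]
  rw [← summable_nat_add_iff N] at h4
  refine Summable.of_nonneg_of_le (fun i => ?_) (fun i => ?_) (h4.mul_left C)
  · have := cnt_pos (hist X (i + N) ω) l
    split_ifs <;> positivity
  · split_ifs
    · have h5 := hN (i + N) (Nat.le_add_left _ _)
      have h6 := (hval (i + N)).cnt_le (l + 1)
      rw [add_sub_cancel_right] at h5 h6
      have h7 := cnt_pos (hist X (i + N) ω) l
      have h8 := cnt_pos (hist X (i + N) ω) (l + 1)
      rw [mul_one_div, div_le_div_iff₀ h7 h8]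
      linarith
    · simp

/-- The recurrent vertices form an interval. -/
lemma infinite_between {ω : Ω} (hs : ∀ n, |X (n + 1) ω - X n ω| = 1) {x y z : ℤ}
    (hxy : x ≤ y) (hyz : y ≤ z) (hx : {n | X n ω = x}.Infinite) (hz : {n | X n ω = z}.Infinite) :
    {n | X n ω = y}.Infinite := by
  rw [← Nat.frequently_atTop_iff_infinite, frequently_atTop] at *
  intro N
  obtain ⟨a, ha, hXa⟩ := hx N
  obtain ⟨b, hb, hXb⟩ := hz a
  by_contra hc
  push Not at hc
  have : ∀ n, a ≤ n → X n ω < y := by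
    intro n hn
    induction n, hn using Nat.le_induction with
    | base => exact lt_of_le_of_ne (hXa ▸ hxy) (hc a ha)
    | succ n hn ih =>
      have h1 := hc (n + 1) (by omega)
      rcases (abs_eq zero_le_one).1 (hs n) with h | h <;> omega
  have := this b hb
  omega

/-- Almost surely, a nonempty essential range has more than four elements. -/
lemma ae_range_of_nonempty (hX : IsVRRW μ ℱ 0 X) : ∀ᵐ ω ∂μ,
    {k : ℤ | {n : ℕ | X n ω = k}.Infinite}.Nonempty →
    ¬ Set.encard {k : ℤ | {n : ℕ | X n ω = k}.Infinite} ≤ 4 := by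
  filter_upwards [ae_recurrent_of_leftmost hX, ae_step hX] with ω h1 hs hne hle
  set R : Set ℤ := {k : ℤ | {n : ℕ | X n ω = k}.Infinite} with hR
  have hfin : R.Finite := Set.finite_of_encard_le_coe (k := 4) hle
  obtain ⟨l, hl, hmin⟩ := hfin.exists_minimal hne
  have hl1 : l - 1 ∉ R := fun h => by
    have := hmin h (by omega)
    omega
  have hl4 := h1 l hl hl1
  have hsub : (↑(Finset.Icc l (l + 4)) : Set ℤ) ⊆ R := by
    intro y hy
    rw [Finset.coe_Icc, Set.mem_Icc] at hy
    exact infinite_between hs hy.1 hy.2 hl hl4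
  have h5 := (Set.encard_le_encard hsub).trans hle
  rw [Set.encard_coe_eq_coe_finsetCard, Int.card_Icc] at h5
  have : (l + 4 + 1 - l).toNat = 5 := by omega
  rw [this] at h5
  exact absurd h5 (by decide)

end Walk

end VRRW

namespace VRRW

/-! ### Escape to the right forces long stays at the frontier -/

/-- A functional which is superharmonic as long as the walk stays positive, and which increases by
`1 / (2 Z(m - 1))` at the first visit to `m`. -/
noncomputable def resist (l : List ℤ) : ℝ :=
  ∑ k ∈ Finset.Ico 0 l.headI, 1 / (cnt l k * cnt l (k + 1))

lemma resist_nonneg (l : List ℤ) : 0 ≤ resist l :=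
  Finset.sum_nonneg fun k _ => by
    have := cnt_pos l k
    have := cnt_pos l (k + 1)
    positivity

lemma resist_right {l : List ℤ} (hx : 0 ≤ l.headI) : resist ((l.headI + 1) :: l) =
    resist l + 1 / (cnt l l.headI * (cnt l (l.headI + 1) + 1)) := by
  unfold resist
  have e : Finset.Ico 0 (l.headI + 1) = insert l.headI (Finset.Ico 0 l.headI) := by
    ext k
    simp only [Finset.mem_Ico, Finset.mem_insert]
    omega
  rw [List.headI_cons, e, Finset.sum_insert (by simp), cnt_cons_self, cnt_cons_ne (by omega),
    add_comm]
  congr 1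
  refine Finset.sum_congr rfl fun k hk => ?_
  rw [Finset.mem_Ico] at hk
  rw [cnt_cons_ne (by omega), cnt_cons_ne (by omega)]

lemma resist_left {l : List ℤ} (hx : 1 ≤ l.headI) : resist ((l.headI - 1) :: l) +
    1 / (cnt l (l.headI - 1) * cnt l l.headI) ≤ resist l := by
  unfold resist
  have e : Finset.Ico 0 l.headI = insert (l.headI - 1) (Finset.Ico 0 (l.headI - 1)) := by
    ext k
    simp only [Finset.mem_Ico, Finset.mem_insert]
    omega
  rw [List.headI_cons, e, Finset.sum_insert (by simp), sub_add_cancel, add_comm]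
  refine add_le_add_right (Finset.sum_le_sum fun k hk => ?_) _
  have h1 := cnt_pos l k
  have h2 := cnt_pos l (k + 1)
  exact one_div_le_one_div_of_le (by positivity)
    (mul_le_mul (cnt_le_cons _ _ _) (cnt_le_cons _ _ _) h2.le (h1.le.trans (cnt_le_cons _ _ _)))

lemma resist_supAt {l : List ℤ} (hx : 1 ≤ l.headI) : SupAt resist l := by
  unfold SupAt wstep
  have ha := cnt_pos l l.headI
  have hb := cnt_pos l (l.headI + 1)
  have hc := cnt_pos l (l.headI - 1)
  have h1 := mul_le_mul_of_nonneg_left (resist_left hx) hc.le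
  rw [resist_right (by omega), mul_add]
  rw [mul_add] at h1
  have e1 : cnt l (l.headI - 1) * (1 / (cnt l (l.headI - 1) * cnt l l.headI)) =
      1 / cnt l l.headI := by field_simp
  have e2 : cnt l (l.headI + 1) * (1 / (cnt l l.headI * (cnt l (l.headI + 1) + 1))) ≤
      1 / cnt l l.headI := by
    rw [mul_one_div, div_le_div_iff₀ (by positivity) ha]
    nlinarith
  linarith

section Walk

variable {Ω : Type*} {X : ℕ → Ω → ℤ} {mΩ : MeasurableSpace Ω} {μ : Measure Ω}
  {ℱ : Filtration ℕ mΩ} [IsProbabilityMeasure μ]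

/-- If the walk is eventually positive, then at the time `n` before a late first visit to a vertex
the current vertex has already been visited often. -/
lemma ae_frontier (hX : IsVRRW μ ℱ 0 X) : ∀ᵐ ω ∂μ, ∀ k : ℕ, (∀ n, k ≤ n → 1 ≤ X n ω) →
    ∀ A : ℝ, ∀ᶠ n in atTop, X (n + 1) ω = X n ω + 1 → cnt (hist X n ω) (X n ω + 1) = 1 →
      A ≤ cnt (hist X n ω) (X n ω) := by
  have h : ∀ᵐ ω ∂μ, ∀ k : ℕ, (∀ n, k ≤ n → 1 ≤ (hist X n ω).headI) →
      ∃ c, Tendsto (fun n => resist (hist X n ω)) atTop (nhds c) :=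
    ae_all_iff.2 fun k => ae_tendsto_hist_of_active hX resist_nonneg (fun l => 1 ≤ l.headI) k
      fun l _ hl => (resist_supAt hl).restrict resist_nonneg
  filter_upwards [h] with ω hω k hk A
  obtain ⟨c, hc⟩ := hω k (fun n hn => by rw [hist_headI]; exact hk n hn)
  have hd : Tendsto (fun n => resist (hist X (n + 1) ω) - resist (hist X n ω)) atTop (nhds 0) := by
    have := ((tendsto_add_atTop_iff_nat 1).2 hc).sub hc
    rwa [sub_self] at this
  have hA : (0 : ℝ) < 1 / (2 * (|A| + 1)) := by positivity
  filter_upwards [hd.eventually (gt_mem_nhds hA), eventually_ge_atTop k] with n hn hkn hstep h1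
  have hx := hk n hkn
  have e : hist X (n + 1) ω = ((hist X n ω).headI + 1) :: hist X n ω := by
    rw [hist_headI, ← hstep]; rfl
  rw [e, resist_right (by rw [hist_headI]; omega), hist_headI, h1, add_sub_cancel_left,
    one_div_lt_one_div (mul_pos (cnt_pos _ _) (by norm_num)) (by positivity)] at hn
  have := le_abs_self A
  linarith

end Walk

end VRRW

namespace VRRW

/-! ### The trap at the frontier -/

/-- The potential for the event that the walk escapes to the right of `m + 1` soon after its first
visit to `m`. The main terms are the proportion `Z(m) / (Z(m) + Z(m - 2))` in the urn at `m - 1`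
and a multiple of `Z(m + 1) / Z(m - 1)`; the other terms depend on the current position. -/
noncomputable def pot (m : ℤ) (l : List ℤ) : ℝ :=
  if l.headI ≤ m - 2 then
    cnt l m / (cnt l m + cnt l (m - 2)) + 9 * cnt l (m + 1) / (cnt l (m - 1) + 1)
  else if l.headI = m - 1 then
    cnt l m / (cnt l m + cnt l (m - 2)) + 9 * cnt l (m + 1) / cnt l (m - 1)
  else if l.headI = m then
    cnt l m / (cnt l m + cnt l (m - 2)) + 9 * cnt l (m + 1) / cnt l (m - 1) +
      3 * cnt l (m + 1) / (cnt l (m - 1) * cnt l m)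
  else if l.headI = m + 1 then
    cnt l m / (cnt l m + cnt l (m - 2)) + 9 * cnt l (m + 1) / cnt l (m - 1) +
      3 * cnt l (m + 1) / (cnt l (m - 1) * cnt l m) + 2 / cnt l m
  else 1 / 2

/-- The region in which `pot m` is superharmonic. -/
def Good (m : ℤ) (A : ℝ) (l : List ℤ) : Prop :=
  l.headI ≤ m + 1 ∧ cnt l (m + 2) = 1 ∧ cnt l m ≤ cnt l (m - 2) ∧
    cnt l (m + 1) ≤ cnt l (m - 1) ∧ A ≤ cnt l (m - 1)

lemma pot_of_le {m : ℤ} {l : List ℤ} (h : l.headI ≤ m - 2) : pot m l =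
    cnt l m / (cnt l m + cnt l (m - 2)) + 9 * cnt l (m + 1) / (cnt l (m - 1) + 1) := by
  rw [pot, if_pos h]

lemma pot_of_eq_sub_one {m : ℤ} {l : List ℤ} (h : l.headI = m - 1) : pot m l =
    cnt l m / (cnt l m + cnt l (m - 2)) + 9 * cnt l (m + 1) / cnt l (m - 1) := by
  rw [pot, if_neg (by omega), if_pos h]

lemma pot_of_eq {m : ℤ} {l : List ℤ} (h : l.headI = m) : pot m l =
    cnt l m / (cnt l m + cnt l (m - 2)) + 9 * cnt l (m + 1) / cnt l (m - 1) +
      3 * cnt l (m + 1) / (cnt l (m - 1) * cnt l m) := by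
  rw [pot, if_neg (by omega), if_neg (by omega), if_pos h]

lemma pot_of_eq_add_one {m : ℤ} {l : List ℤ} (h : l.headI = m + 1) : pot m l =
    cnt l m / (cnt l m + cnt l (m - 2)) + 9 * cnt l (m + 1) / cnt l (m - 1) +
      3 * cnt l (m + 1) / (cnt l (m - 1) * cnt l m) + 2 / cnt l m := by
  rw [pot, if_neg (by omega), if_neg (by omega), if_neg (by omega), if_pos h]

lemma pot_of_gt {m : ℤ} {l : List ℤ} (h : m + 1 < l.headI) : pot m l = 1 / 2 := by
  rw [pot, if_neg (by omega), if_neg (by omega), if_neg (by omega), if_neg (by omega)]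

lemma pot_lower {m : ℤ} {l : List ℤ} (hx : l.headI ≤ m + 1) :
    cnt l m / (cnt l m + cnt l (m - 2)) + 9 * cnt l (m + 1) / (cnt l (m - 1) + 1) ≤ pot m l := by
  have hp := cnt_pos l (m + 1)
  have hq := cnt_pos l m
  have hr := cnt_pos l (m - 1)
  have h1 : 9 * cnt l (m + 1) / (cnt l (m - 1) + 1) ≤ 9 * cnt l (m + 1) / cnt l (m - 1) :=
    div_le_div_of_nonneg_left (by positivity) hr (by linarith)
  have h2 : 0 ≤ 3 * cnt l (m + 1) / (cnt l (m - 1) * cnt l m) := by positivity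
  have h3 : 0 ≤ 2 / cnt l m := by positivity
  unfold pot
  split_ifs
  · exact le_rfl
  · linarith
  · linarith
  · linarith
  · omega

lemma pot_nonneg (m : ℤ) (l : List ℤ) : 0 ≤ pot m l := by
  by_cases hx : l.headI ≤ m + 1
  · refine le_trans ?_ (pot_lower hx)
    have hp := cnt_pos l (m + 1)
    have hq := cnt_pos l m
    have hr := cnt_pos l (m - 1)
    have hs := cnt_pos l (m - 2)
    positivity
  · rw [pot_of_gt (by omega)]
    norm_num

/-- Leaving `Good` in one step costs potential at least `1 / 2`. -/
lemma half_le_pot {m y : ℤ} {A : ℝ} {l : List ℤ} (hA : 21 ≤ A) (hl : Good m A l)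
    (hy : y = l.headI + 1 ∨ y = l.headI - 1) (h : ¬ Good m A (y :: l)) :
    1 / 2 ≤ pot m (y :: l) := by
  obtain ⟨hx, h2, h3, h4, h5⟩ := hl
  by_cases hy2 : y = m + 2
  · rw [pot_of_gt (by rw [List.headI_cons]; omega)]
  · refine le_trans ?_ (pot_lower (by rw [List.headI_cons]; omega))
    have hp := cnt_pos (y :: l) (m + 1)
    have hq := cnt_pos (y :: l) m
    have hr := cnt_pos (y :: l) (m - 1)
    have hs := cnt_pos (y :: l) (m - 2)
    have hr' : A ≤ cnt (y :: l) (m - 1) := h5.trans (cnt_le_cons _ _ _)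
    have hu : 0 ≤ cnt (y :: l) m / (cnt (y :: l) m + cnt (y :: l) (m - 2)) := by positivity
    have hv : 0 ≤ 9 * cnt (y :: l) (m + 1) / (cnt (y :: l) (m - 1) + 1) := by positivity
    by_cases h6 : cnt (y :: l) m ≤ cnt (y :: l) (m - 2)
    · by_cases h7 : cnt (y :: l) (m + 1) ≤ cnt (y :: l) (m - 1)
      · exact absurd ⟨by rw [List.headI_cons]; omega, by rw [cnt_cons_ne hy2, h2], h6, h7, hr'⟩ h
      · have : 1 / 2 ≤ 9 * cnt (y :: l) (m + 1) / (cnt (y :: l) (m - 1) + 1) := by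
          rw [div_le_div_iff₀ (by norm_num) (by linarith)]
          linarith
        linarith
    · have : 1 / 2 ≤ cnt (y :: l) m / (cnt (y :: l) m + cnt (y :: l) (m - 2)) := by
        rw [div_le_div_iff₀ (by norm_num) (by linarith)]
        linarith
      linarith

/-- The supermartingale inequality at `m + 1`. -/
lemma pot_ineq_one {p q r s : ℝ} (hp : 0 < p) (hq : 0 < q) (hr : 0 < r) (hs : 0 < s) :
    1 * (1 / 2) + q * ((q + 1) / (q + 1 + s) + 9 * p / r + 3 * p / (r * (q + 1))) ≤
      (q + 1) * (q / (q + s) + 9 * p / r + 3 * p / (r * q) + 2 / q) := by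
  have h1 : q * ((q + 1) / (q + 1 + s)) ≤ (q + 1) * (q / (q + s)) := by
    rw [mul_div_assoc', mul_div_assoc', mul_comm]
    exact div_le_div_of_nonneg_left (by positivity) (by positivity) (by linarith)
  have h2 : q * (9 * p / r) ≤ (q + 1) * (9 * p / r) :=
    mul_le_mul_of_nonneg_right (by linarith) (by positivity)
  have h3 : q * (3 * p / (r * (q + 1))) ≤ (q + 1) * (3 * p / (r * q)) :=
    mul_le_mul (by linarith) (div_le_div_of_nonneg_left (by positivity) (by positivity)
      (mul_le_mul_of_nonneg_left (by linarith) hr.le)) (by positivity) (by positivity)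
  have h4 : 1 / 2 ≤ (q + 1) * (2 / q) := by
    rw [mul_div_assoc', div_le_div_iff₀ (by norm_num) hq]
    linarith
  linarith

/-- The supermartingale inequality at `m`. -/
lemma pot_ineq_two {p q r u : ℝ} (hp : 0 < p) (hq : 0 < q) (hr : 21 ≤ r) (hqr : q ≤ 2 * r) :
    p * (u + 9 * (p + 1) / r + 3 * (p + 1) / (r * q) + 2 / q) + r * (u + 9 * p / (r + 1)) ≤
      (r + p) * (u + 9 * p / r + 3 * p / (r * q)) := by
  have hr0 : 0 < r := by linarith
  have key : 0 ≤ p * (1 / q - 3 / (r * q) - 9 / (r * (r + 1))) := by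
    refine mul_nonneg hp.le ?_
    have : 1 / q - 3 / (r * q) - 9 / (r * (r + 1)) =
        ((r - 3) * (r + 1) - 9 * q) / (r * (r + 1) * q) := by field_simp
    rw [this]
    exact div_nonneg (by nlinarith) (by positivity)
  have : (r + p) * (u + 9 * p / r + 3 * p / (r * q)) -
      (p * (u + 9 * (p + 1) / r + 3 * (p + 1) / (r * q) + 2 / q) + r * (u + 9 * p / (r + 1))) =
      p * (1 / q - 3 / (r * q) - 9 / (r * (r + 1))) := by
    field_simp
    ring
  linarith

/-- The supermartingale inequality at `m - 1`. -/
lemma pot_ineq_three {p q r s : ℝ} (hp : 0 < p) (hq : 0 < q) (hr : 21 ≤ r) (hs : 0 < s)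
    (hrs : r ≤ 2 * s) :
    q * ((q + 1) / (q + 1 + s) + 9 * p / r + 3 * p / (r * (q + 1))) +
      s * (q / (q + (s + 1)) + 9 * p / (r + 1)) ≤ (s + q) * (q / (q + s) + 9 * p / r) := by
  have hr0 : 0 < r := by linarith
  have e1 : q * ((q + 1) / (q + 1 + s)) + s * (q / (q + (s + 1))) = (s + q) * (q / (q + s)) := by
    rw [show q + 1 + s = q + (s + 1) by ring]
    field_simp
    ring
  have e2 : q * (3 * p / (r * (q + 1))) ≤ 3 * p / r := by
    rw [mul_div_assoc', div_le_div_iff₀ (by positivity) hr0]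
    have : 0 < p * r := by positivity
    nlinarith
  have e3 : 3 * p / r ≤ s * (9 * p / r) - s * (9 * p / (r + 1)) := by
    have : s * (9 * p / r) - s * (9 * p / (r + 1)) - 3 * p / r =
        3 * p * (3 * s - (r + 1)) / (r * (r + 1)) := by
      field_simp
      ring
    have h2 : 0 ≤ 3 * p * (3 * s - (r + 1)) / (r * (r + 1)) :=
      div_nonneg (mul_nonneg (by positivity) (by linarith)) (by positivity)
    linarith
  linarith

lemma pot_supAt {m : ℤ} {A : ℝ} {l : List ℤ} (hA : 21 ≤ A) (hv : Valid l) (hl : Good m A l) :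
    SupAt (pot m) l := by
  obtain ⟨hx, h2, h3, h4, h5⟩ := hl
  have hp := cnt_pos l (m + 1)
  have hq := cnt_pos l m
  have hr := cnt_pos l (m - 1)
  have hs := cnt_pos l (m - 2)
  have v1 := hv.cnt_le m
  have v2 := hv.cnt_le (m - 1)
  rw [sub_add_cancel, show m - 1 - 1 = m - 2 by ring] at v2
  rcases (show l.headI = m + 1 ∨ l.headI = m ∨ l.headI = m - 1 ∨ l.headI = m - 2 ∨
    l.headI ≤ m - 3 by omega) with h | h | h | h | h
  · unfold SupAt wstep
    rw [h, show m + 1 + 1 = m + 2 by ring, show m + 1 - 1 = m by ring, h2,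
      pot_of_gt (by rw [List.headI_cons]; omega), pot_of_eq (List.headI_cons ..),
      pot_of_eq_add_one h, cnt_cons_self, cnt_cons_ne (by omega), cnt_cons_ne (by omega),
      cnt_cons_ne (by omega)]
    exact pot_ineq_one hp hq hr hs
  · unfold SupAt wstep
    rw [h, pot_of_eq_add_one (List.headI_cons ..), pot_of_eq_sub_one (List.headI_cons ..),
      pot_of_eq h, cnt_cons_self, cnt_cons_self, cnt_cons_ne (by omega), cnt_cons_ne (by omega),
      cnt_cons_ne (by omega), cnt_cons_ne (by omega), cnt_cons_ne (by omega),
      cnt_cons_ne (by omega)]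
    exact pot_ineq_two hp hq (hA.trans h5) (by linarith)
  · unfold SupAt wstep
    rw [h, show m - 1 + 1 = m by ring, show m - 1 - 1 = m - 2 by ring,
      pot_of_eq (List.headI_cons ..), pot_of_le (List.headI_cons ..).le, pot_of_eq_sub_one h,
      cnt_cons_self, cnt_cons_self, cnt_cons_ne (by omega), cnt_cons_ne (by omega),
      cnt_cons_ne (by omega), cnt_cons_ne (by omega), cnt_cons_ne (by omega),
      cnt_cons_ne (by omega)]
    exact pot_ineq_three hp hq (hA.trans h5) hs (by linarith)
  · refine SupAt.of_le (le_of_eq ?_) (le_of_eq ?_)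
    · rw [h, show m - 2 + 1 = m - 1 by ring, pot_of_eq_sub_one (List.headI_cons ..),
        pot_of_le h.le, cnt_cons_self, cnt_cons_ne (by omega), cnt_cons_ne (by omega),
        cnt_cons_ne (by omega)]
    · rw [h, pot_of_le (by rw [List.headI_cons]; omega), pot_of_le h.le, cnt_cons_ne (by omega),
        cnt_cons_ne (by omega), cnt_cons_ne (by omega), cnt_cons_ne (by omega)]
  · have aux : ∀ y ≤ m - 2, pot m (y :: l) ≤ pot m l := fun y hy => by
      rw [pot_of_le (l := y :: l) hy, pot_of_le (by omega), cnt_cons_ne (w := m) (by omega),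
        cnt_cons_ne (w := m + 1) (by omega), cnt_cons_ne (w := m - 1) (by omega)]
      have := cnt_le_cons y l (m - 2)
      gcongr
    exact SupAt.of_le (aux _ (by omega)) (aux _ (by omega))

/-- The stages of the walk relative to the trap at `m`: before the first visit to `m`; after an
unfavourable first visit; after a favourable first visit, while the trap holds; after an escape. -/
inductive Stage
  | before
  | dead
  | alive
  | failed

open Classical in
/-- The stage reached by a path. -/
noncomputable def stage (m : ℤ) (A : ℝ) : List ℤ → Stage
  | [] => .before
  | x :: l => match stage m A l with
    | .before => if x = m then (if Good m A (m :: l) ∧ cnt l m = 1 ∧ cnt l (m + 1) = 1 then .alive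
        else .dead) else .before
    | .dead => .dead
    | .alive => if Good m A (x :: l) then .alive else .failed
    | .failed => .failed

/-- A nonnegative superharmonic function which is at least `1 / 2` after an escape from the trap
and at most `13 / A` at the start. -/
noncomputable def trap (m : ℤ) (A : ℝ) (l : List ℤ) : ℝ :=
  match stage m A l with
  | .before => 13 / A
  | .dead => 0
  | .alive => pot m l
  | .failed => 1 / 2

lemma stage_cons_of_before {m x : ℤ} {A : ℝ} {l : List ℤ} (h : stage m A l = .before) :
    open Classical in stage m A (x :: l) = if x = m then
      (if Good m A (m :: l) ∧ cnt l m = 1 ∧ cnt l (m + 1) = 1 then .alive else .dead)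
      else .before := by
  rw [stage, h]

lemma stage_cons_of_dead {m x : ℤ} {A : ℝ} {l : List ℤ} (h : stage m A l = .dead) :
    stage m A (x :: l) = .dead := by
  rw [stage, h]

lemma stage_cons_of_alive {m x : ℤ} {A : ℝ} {l : List ℤ} (h : stage m A l = .alive) :
    open Classical in stage m A (x :: l) = if Good m A (x :: l) then .alive else .failed := by
  rw [stage, h]

lemma stage_cons_of_failed {m x : ℤ} {A : ℝ} {l : List ℤ} (h : stage m A l = .failed) :
    stage m A (x :: l) = .failed := by
  rw [stage, h]

lemma good_of_alive {m : ℤ} {A : ℝ} {l : List ℤ} (h : stage m A l = .alive) : Good m A l := by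
  cases l with
  | nil => simp [stage] at h
  | cons x l =>
    rcases h' : stage m A l
    · rw [stage_cons_of_before h'] at h
      split_ifs at h with h1 h2
      rw [h1]
      exact h2.1
    · rw [stage_cons_of_dead h'] at h
      cases h
    · rw [stage_cons_of_alive h'] at h
      split_ifs at h with h1
      exact h1
    · rw [stage_cons_of_failed h'] at h
      cases h

lemma pot_entry {m : ℤ} {A : ℝ} {l : List ℤ} (hA : 21 ≤ A) (hl : Good m A (m :: l))
    (h1 : cnt l m = 1) (h2 : cnt l (m + 1) = 1) (h3 : cnt l (m - 1) ≤ cnt l (m - 2)) :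
    pot m (m :: l) ≤ 13 / A := by
  obtain ⟨-, -, -, -, h5⟩ := hl
  rw [cnt_cons_ne (by omega)] at h5
  rw [pot_of_eq (List.headI_cons ..), cnt_cons_self,
    cnt_cons_ne (by omega), cnt_cons_ne (by omega), cnt_cons_ne (by omega), h1, h2]
  have hA0 : 0 < A := by linarith
  have e1 : (1 + 1) / (1 + 1 + cnt l (m - 2)) ≤ 2 / A := by
    rw [div_le_div_iff₀ (by linarith) hA0]
    linarith
  have e2 : 9 * 1 / cnt l (m - 1) ≤ 9 / A := by
    rw [div_le_div_iff₀ (by linarith) hA0]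
    linarith
  have e3 : 3 * 1 / (cnt l (m - 1) * (1 + 1)) ≤ 2 / A := by
    rw [div_le_div_iff₀ (by linarith) hA0]
    linarith
  have e4 : 13 / A = 2 / A + 9 / A + 2 / A := by ring
  linarith

lemma trap_nonneg {m : ℤ} {A : ℝ} (hA : 21 ≤ A) (l : List ℤ) : 0 ≤ trap m A l := by
  unfold trap
  split
  · exact div_nonneg (by norm_num) (by linarith)
  · exact le_rfl
  · exact pot_nonneg m l
  · norm_num

end VRRW

namespace VRRW

lemma trap_supAt {m : ℤ} {A : ℝ} {l : List ℤ} (hA : 21 ≤ A) (hm : m ≠ 1) (hv : Valid l) :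
    SupAt (trap m A) l := by
  rcases h : stage m A l
  · have aux : ∀ x, trap m A (x :: l) ≤ trap m A l := by
      intro x
      have hA0 : 0 ≤ 13 / A := div_nonneg (by norm_num) (by linarith)
      unfold trap
      rw [stage_cons_of_before h, h]
      split_ifs with h1 h2
      · obtain ⟨h2, h3, h4⟩ := h2
        rw [h1]
        refine pot_entry hA h2 h3 h4 ?_
        have := hv.cnt_add_one_le (w := m - 1) (by omega)
        rw [sub_add_cancel, show m - 1 - 1 = m - 2 by ring, h3] at this
        linarith
      · exact hA0
      · exact le_rfl
    exact SupAt.of_le (aux _) (aux _)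
  · have aux : ∀ x, trap m A (x :: l) ≤ trap m A l := fun x => by
      unfold trap
      rw [stage_cons_of_dead h, h]
    exact SupAt.of_le (aux _) (aux _)
  · have hg := good_of_alive h
    have aux : ∀ x, (x = l.headI + 1 ∨ x = l.headI - 1) → trap m A (x :: l) ≤ pot m (x :: l) := by
      intro x hx
      unfold trap
      rw [stage_cons_of_alive h]
      split_ifs with h1
      · exact le_rfl
      · exact half_le_pot hA hg hx h1
    have e : trap m A l = pot m l := by
      unfold trap
      rw [h]
    have h1 := pot_supAt hA hv hg
    unfold SupAt wstep at h1 ⊢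
    rw [e]
    refine le_trans (add_le_add ?_ ?_) h1
    · exact mul_le_mul_of_nonneg_left (aux _ (Or.inl rfl)) (cnt_pos _ _).le
    · exact mul_le_mul_of_nonneg_left (aux _ (Or.inr rfl)) (cnt_pos _ _).le
  · have aux : ∀ x, trap m A (x :: l) ≤ trap m A l := fun x => by
      unfold trap
      rw [stage_cons_of_failed h, h]
    exact SupAt.of_le (aux _) (aux _)

lemma stage_of_cnt {m : ℤ} {A : ℝ} {l : List ℤ} (h : cnt l m = 1) : stage m A l = .before := by
  induction l with
  | nil => rfl
  | cons x l ih =>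
    have h1 := one_le_cnt l m
    rw [cnt_cons] at h
    by_cases hx : x = m
    · rw [if_pos hx] at h
      linarith
    · rw [if_neg hx, add_zero] at h
      rw [stage_cons_of_before (ih h), if_neg hx]

/-! ### The essential range is nonempty -/

section Walk

variable {Ω : Type*} {X : ℕ → Ω → ℤ}

lemma cnt_hist_eq_one {ω : Ω} {w : ℤ} {n : ℕ} (h : ∀ i, i ≤ n → X i ω ≠ w) :
    cnt (hist X n ω) w = 1 := by
  rw [← occ_eq_cnt, occ, Finset.filter_false_of_mem]
  · simp
  · intro i hi
    exact h i (Nat.lt_succ_iff.1 (Finset.mem_range.1 hi))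

/-- The reflection of a walk is a walk. -/
lemma isVRRW_neg {mΩ : MeasurableSpace Ω} {μ : Measure Ω} {ℱ : Filtration ℕ mΩ}
    (hX : IsVRRW μ ℱ 0 X) : IsVRRW μ ℱ 0 (fun n ω => - X n ω) := by
  obtain ⟨h1, h2, h3⟩ := hX
  have ho : ∀ n w ω, occ (fun n ω => - X n ω) n w ω = occ X n (-w) ω := fun n w ω => by
    unfold occ
    simp only [neg_eq_iff_eq_neg]
  refine ⟨fun n => (h1 n).neg, fun ω => by simp [h2 ω], fun n x => ?_⟩
  have := h3 n (-x)
  simp only [ho, neg_eq_iff_eq_neg]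
  refine this.trans (Eventually.of_forall fun ω => ?_)
  have e1 : |(-x) - X n ω| = |x - -X n ω| := by
    rw [← abs_neg]
    congr 1
    ring
  have e2 : - (- X n ω - 1) = X n ω + 1 := by ring
  have e3 : - (- X n ω + 1) = X n ω - 1 := by ring
  simp only [e1, e2, e3]
  rw [add_comm (occ X n (X n ω - 1) ω)]

variable {mΩ : MeasurableSpace Ω} {μ : Measure Ω} {ℱ : Filtration ℕ mΩ} [IsProbabilityMeasure μ]

/-- The walk escapes from the trap at `m` with small probability. -/
lemma measure_failed_le (hX : IsVRRW μ ℱ 0 X) {m : ℤ} (hm : 2 ≤ m) {A : ℝ} (hA : 21 ≤ A) :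
    μ {ω | ∃ n, stage m A (hist X n ω) = .failed} ≤ ENNReal.ofReal (26 / A) := by
  have hmono : Monotone fun n => {ω | stage m A (hist X n ω) = .failed} :=
    monotone_nat_of_le_succ fun n ω hω => by
      rw [Set.mem_ofPred_eq] at hω ⊢
      rw [hist, stage_cons_of_failed hω]
  have e : {ω | ∃ n, stage m A (hist X n ω) = .failed} =
      ⋃ n, {ω | stage m A (hist X n ω) = .failed} := by
    ext ω
    simp
  rw [e, hmono.measure_iUnion]
  refine iSup_le fun n => ?_
  have h1 := mul_meas_ge_le_integral_of_nonneg (μ := μ) (f := fun ω => trap m A (hist X n ω))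
    (Eventually.of_forall fun ω => trap_nonneg hA _) (integrable_hist hX _ n) (1 / 2)
  have h2 := integral_hist_le hX (H := trap m A) (fun l hl => trap_supAt hA (by omega) hl) n
  have h3 : trap m A [0] = 13 / A := by
    unfold trap
    rw [stage_of_cnt (by rw [cnt_cons_ne (by omega)]; simp [cnt])]
  have h4 : {ω | stage m A (hist X n ω) = .failed} ⊆
      {ω | (1 : ℝ) / 2 ≤ trap m A (hist X n ω)} := by
    intro ω hω
    rw [Set.mem_ofPred_eq] at hω ⊢
    unfold trap
    rw [hω]
  have h5 : μ.real {ω | (1 : ℝ) / 2 ≤ trap m A (hist X n ω)} ≤ 26 / A := by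
    have : 26 / A = 2 * (13 / A) := by ring
    linarith
  refine (measure_mono h4).trans ?_
  rw [← ENNReal.ofReal_toReal (measure_ne_top μ _)]
  exact ENNReal.ofReal_le_ofReal h5

/-- Escaping to the right means escaping from every trap far to the right. -/
lemma ae_failed_of_escape (hX : IsVRRW μ ℱ 0 X) {A : ℝ} (hA : 21 ≤ A) : ∀ᵐ ω ∂μ,
    (∃ k, ∀ n, k ≤ n → 1 ≤ X n ω) → (∀ m : ℤ, ∃ n, m ≤ X n ω) →
    ∃ M : ℕ, ∀ m : ℕ, M ≤ m → ∃ n, stage m A (hist X n ω) = .failed := by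
  filter_upwards [ae_frontier hX, ae_step hX, ae_valid hX] with ω hf hs hval ⟨k, hk⟩ hub
  have hstep : ∀ n, X (n + 1) ω = X n ω + 1 ∨ X (n + 1) ω = X n ω - 1 := fun n => by
    rcases (abs_eq zero_le_one).1 (hs n) with h | h <;> omega
  have h0 : X 0 ω = 0 := hX.2.1 ω
  have hle : ∀ n : ℕ, X n ω ≤ n := fun n => by
    induction n with
    | zero => simp [h0]
    | succ n ih =>
      have := hstep n
      push_cast
      omega
  obtain ⟨N, hN⟩ := eventually_atTop.1 (hf k hk A)
  refine ⟨N + 2, fun m hm => ?_⟩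
  classical
  obtain ⟨t, ht, hmin⟩ : ∃ t, (m : ℤ) ≤ X t ω ∧ ∀ i < t, X i ω < m :=
    ⟨Nat.find (hub m), Nat.find_spec (hub m), fun i hi => not_le.1 (Nat.find_min (hub m) hi)⟩
  obtain ⟨n, rfl⟩ : ∃ n, t = n + 1 := Nat.exists_eq_succ_of_ne_zero (by rintro rfl; omega)
  have hn := hmin n (Nat.lt_succ_self n)
  have hXn : X n ω = m - 1 := by have := hstep n; omega
  have hXn1 : X (n + 1) ω = m := by have := hstep n; omega
  have hone : ∀ w : ℤ, m ≤ w → cnt (hist X n ω) w = 1 := fun w hw =>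
    cnt_hist_eq_one fun i hi => by have := hmin i (by omega); omega
  have hr : A ≤ cnt (hist X n ω) (m - 1) := by
    have := hN n (by have := hle n; omega) (by omega) (hone _ (by omega))
    rwa [hXn] at this
  have hrs : cnt (hist X n ω) (m - 1) ≤ cnt (hist X n ω) (m - 2) := by
    have := (hval n).cnt_add_one_le (w := (m : ℤ) - 1) (by omega)
    rw [sub_add_cancel, show (m : ℤ) - 1 - 1 = m - 2 by ring, hone m le_rfl] at this
    linarith
  have hgood : Good m A ((m : ℤ) :: hist X n ω) := by
    refine ⟨by rw [List.headI_cons]; omega, ?_, ?_, ?_, ?_⟩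
    · rw [cnt_cons_ne (by omega), hone _ (by omega)]
    · rw [cnt_cons_self, cnt_cons_ne (by omega), hone _ le_rfl]
      linarith
    · rw [cnt_cons_ne (by omega), cnt_cons_ne (by omega), hone _ (by omega)]
      linarith
    · rwa [cnt_cons_ne (by omega)]
  have halive : stage m A (hist X (n + 1) ω) = .alive := by
    rw [hist, hXn1, stage_cons_of_before (stage_of_cnt (hone m le_rfl)), if_pos rfl,
      if_pos ⟨hgood, hone _ le_rfl, hone _ (by omega)⟩]
  have hlate : ∀ j, n + 1 ≤ j →
      stage m A (hist X j ω) = .alive ∨ stage m A (hist X j ω) = .failed := by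
    intro j hj
    induction j, hj using Nat.le_induction with
    | base => exact Or.inl halive
    | succ j hj ih =>
      rw [hist]
      rcases ih with h | h
      · rw [stage_cons_of_alive h]
        split_ifs
        · exact Or.inl rfl
        · exact Or.inr rfl
      · exact Or.inr (stage_cons_of_failed h)
  obtain ⟨j, hj⟩ := hub (m + 2)
  have hjn : n + 1 ≤ j := by
    by_contra hc
    have := hmin j (by omega)
    omega
  refine ⟨j, (hlate j hjn).resolve_left fun h => ?_⟩
  have := (good_of_alive h).1
  rw [hist_headI] at this
  omega

/-- The walk does not escape to the right. -/
lemma ae_not_escape (hX : IsVRRW μ ℱ 0 X) : ∀ᵐ ω ∂μ,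
    ¬ ((∃ k, ∀ n, k ≤ n → 1 ≤ X n ω) ∧ ∀ m : ℤ, ∃ n, m ≤ X n ω) := by
  rw [ae_iff]
  simp only [not_not]
  set E : Set Ω := {ω | (∃ k, ∀ n, k ≤ n → 1 ≤ X n ω) ∧ ∀ m : ℤ, ∃ n, m ≤ X n ω} with hE
  have key : ∀ A : ℝ, 21 ≤ A → μ E ≤ ENNReal.ofReal (26 / A) := by
    intro A hA
    set S : ℕ → Set Ω := fun M =>
      {ω | ∀ m : ℕ, M ≤ m → ∃ n, stage m A (hist X n ω) = .failed} with hS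
    have hmono : Monotone S := fun M M' hM ω hω m hm => hω m (hM.trans hm)
    have h1 : μ E ≤ μ (⋃ M, S M) := by
      refine measure_mono_ae ?_
      filter_upwards [ae_failed_of_escape hX hA] with ω hω hωE
      obtain ⟨M, hM⟩ := hω hωE.1 hωE.2
      exact Set.mem_iUnion.2 ⟨M, hM⟩
    rw [hmono.measure_iUnion] at h1
    refine h1.trans (iSup_le fun M => ?_)
    refine (measure_mono fun ω hω => ?_).trans
      (measure_failed_le hX (m := ((M + 2 : ℕ) : ℤ)) (by omega) hA)
    exact hω (M + 2) (by omega)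
  by_contra hne
  have hpos : 0 < (μ E).toReal := ENNReal.toReal_pos hne (measure_ne_top μ E)
  have h2 := key (21 + 26 / (μ E).toReal) (by linarith [div_pos (show (0 : ℝ) < 26 by norm_num) hpos])
  have h3 := ENNReal.toReal_le_of_le_ofReal (by positivity) h2
  rw [le_div_iff₀ (by positivity), mul_add, mul_div_cancel₀ _ hpos.ne'] at h3
  linarith

lemma unbounded_of_empty {Y : ℕ → ℤ} (h : ∀ w, ¬ {n | Y n = w}.Infinite) {k : ℕ}
    (hk : ∀ n, k ≤ n → 1 ≤ Y n) (m : ℤ) : ∃ n, m ≤ Y n := by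
  by_contra hc
  push Not at hc
  have hfin : (⋃ w ∈ Finset.Icc 1 m, {n | Y n = w}).Finite :=
    Set.Finite.biUnion (Finset.finite_toSet _) fun w _ => Set.not_infinite.1 (h w)
  refine (Set.Ici_infinite k) (hfin.subset fun n hn => ?_)
  simp only [Set.mem_iUnion]
  exact ⟨Y n, Finset.mem_Icc.2 ⟨hk n hn, (hc n).le⟩, rfl⟩

/-- Some vertex is visited infinitely often. -/
lemma ae_nonempty (hX : IsVRRW μ ℱ 0 X) : ∀ᵐ ω ∂μ,
    {k : ℤ | {n : ℕ | X n ω = k}.Infinite}.Nonempty := by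
  filter_upwards [ae_not_escape hX, ae_not_escape (isVRRW_neg hX), ae_step hX] with ω h1 h2 hs
  by_contra hc
  have hR : ∀ w, ¬ {n | X n ω = w}.Infinite := fun w hw => hc ⟨w, hw⟩
  obtain ⟨b, hb⟩ := (Set.not_infinite.1 (hR 0)).bddAbove
  have hne : ∀ n, b + 1 ≤ n → X n ω ≠ 0 := fun n hn h => by
    have : n ≤ b := hb h
    omega
  rcases lt_or_gt_of_ne (hne (b + 1) le_rfl) with h | h
  · have hk : ∀ n, b + 1 ≤ n → 1 ≤ - X n ω := by
      intro n hn
      induction n, hn using Nat.le_induction with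
      | base => omega
      | succ n hn ih =>
        have := hne (n + 1) (by omega)
        rcases (abs_eq zero_le_one).1 (hs n) with h | h <;> omega
    refine h2 ⟨⟨b + 1, hk⟩, fun m => unbounded_of_empty (fun w hw => hR (-w) ?_) hk m⟩
    simpa only [neg_eq_iff_eq_neg] using hw
  · have hk : ∀ n, b + 1 ≤ n → 1 ≤ X n ω := by
      intro n hn
      induction n, hn using Nat.le_induction with
      | base => omega
      | succ n hn ih =>
        have := hne (n + 1) (by omega)
        rcases (abs_eq zero_le_one).1 (hs n) with h | h <;> omega
    exact h1 ⟨⟨b + 1, hk⟩, fun m => unbounded_of_empty hR hk m⟩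

end Walk

end VRRW

/-- **Theorem 2**: For VRRW on `ℤ` started at `0`, almost surely at least 5 sites are
visited infinitely often: the essential range `R' = {k : Xₙ = k infinitely often}` has
`P(|R'| ≤ 4) = 0`. -/
theorem vrrw_essential_range_at_least_five
    {Ω : Type*} {mΩ : MeasurableSpace Ω} (μ : Measure Ω) [IsProbabilityMeasure μ]
    (ℱ : Filtration ℕ mΩ) (X : ℕ → Ω → ℤ) (hX : IsVRRW μ ℱ 0 X) :
    μ {ω | Set.encard {k : ℤ | {n : ℕ | X n ω = k}.Infinite} ≤ 4} = 0 := by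
  rw [← compl_compl {ω | Set.encard {k : ℤ | {n : ℕ | X n ω = k}.Infinite} ≤ 4}, ← mem_ae_iff]
  filter_upwards [VRRW.ae_range_of_nonempty hX, VRRW.ae_nonempty hX] with ω h1 h2
  exact h1 h2
end

section
/- Let (X_n, Y_n) be a generalized urn process with parameters (a, 0, 0, 1) where a > 1; that is, at each step, with probability X_n/(X_n+Y_n) one has (X_{n+1},Y_{n+1}) = (X_n + a, Y_n), and with probability Y_n/(X_n+Y_n) one has (X_{n+1},Y_{n+1}) = (X_n, Y_n + 1). Then X_n / Y_n^a converges almost surely to a random limit lying in (0, ∞). -/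
/-!
The proof compares `log (Xₙ / Yₙ ^ a)` with a martingale. Put
`ξₙ = (Xₙ₊₁ - Xₙ) / Xₙ - a (Yₙ₊₁ - Yₙ) / Yₙ`, which equals `a / Xₙ` when `X` is reinforced and
`-a / Yₙ` when `Y` is. The transition probabilities give `E[ξₙ | ℱₙ] = 0`.

The increments `ξₙ` are pathwise square summable: since `X` moves by steps of size `a` and `Y` by
steps of size `1`, `∑ ξₙ²` is dominated by `∑ a² / (X₀ + k a)² + ∑ a² / (Y₀ + k)²`, and when
`X₀, Y₀ ≥ ε` this is bounded by a constant depending only on `a` and `ε`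
(`sq_urnIncrement_le` is the telescoping form of this bound). Hence, after restriction to the
`ℱ₀`-event `{X₀, Y₀ ≥ ε}`, the partial sums of `ξ` form an `L²`-bounded martingale and converge
almost surely (`ae_tendsto_sum_of_sq_sum_le`); letting `ε → 0` covers the whole space without any
integrability assumption on `X₀, Y₀`.

Finally `|log (1 + u) - u| ≤ u²` for `u ≥ 0` shows that the increments of `log (Xₙ / Yₙ ^ a)`
differ from `ξₙ` by at most `ξₙ²`, so `log (Xₙ / Yₙ ^ a)` converges to a finite limit, and
exponentiating gives a limit in `(0, ∞)`.
-/

open MeasureTheory Filter Set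

open scoped Classical in
/-- Generalized urn process with real parameters `(a, b, c, d)`: an adapted process
`(Xₙ, Yₙ)` of positive reals such that, conditionally on `ℱ n`, with probability
`Xₙ/(Xₙ+Yₙ)` the step is `(Xₙ+a, Yₙ+b)` and with probability `Yₙ/(Xₙ+Yₙ)` it is
`(Xₙ+c, Yₙ+d)`. -/
def IsUrn {Ω : Type*} {mΩ : MeasurableSpace Ω} (μ : Measure Ω)
    (ℱ : Filtration ℕ mΩ) (a b c d : ℝ) (X Y : ℕ → Ω → ℝ) : Prop :=
  Adapted ℱ X ∧ Adapted ℱ Y ∧ (∀ n ω, 0 < X n ω) ∧ (∀ n ω, 0 < Y n ω) ∧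
    (∀ n ω, (X (n + 1) ω = X n ω + a ∧ Y (n + 1) ω = Y n ω + b) ∨
      (X (n + 1) ω = X n ω + c ∧ Y (n + 1) ω = Y n ω + d)) ∧
    (∀ n, (μ[fun ω => if X (n + 1) ω = X n ω + a ∧ Y (n + 1) ω = Y n ω + b
        then (1 : ℝ) else 0 | ℱ n]) =ᵐ[μ] fun ω => X n ω / (X n ω + Y n ω)) ∧
    (∀ n, (μ[fun ω => if X (n + 1) ω = X n ω + c ∧ Y (n + 1) ω = Y n ω + d
        then (1 : ℝ) else 0 | ℱ n]) =ᵐ[μ] fun ω => Y n ω / (X n ω + Y n ω))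

/-- Almost sure convergence of a martingale with bounded increments `D n` whose quadratic
variation is bounded by a constant: it is bounded in `L²`, by orthogonality of the increments. -/
lemma ae_tendsto_sum_of_sq_sum_le {Ω : Type*} {mΩ : MeasurableSpace Ω} (μ : Measure Ω)
    [IsProbabilityMeasure μ] (ℱ : Filtration ℕ mΩ) (D : ℕ → Ω → ℝ)
    (hm : ∀ n, Measurable[ℱ (n + 1)] (D n)) (B : ℝ) (hB : ∀ n ω, |D n ω| ≤ B)
    (hc : ∀ n, μ[D n | ℱ n] =ᵐ[μ] 0) (C : ℝ)
    (hC : ∀ n ω, ∑ i ∈ Finset.range n, D i ω ^ 2 ≤ C) :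
    ∀ᵐ ω ∂μ, ∃ l : ℝ, Tendsto (fun n => ∑ i ∈ Finset.range n, D i ω) atTop (nhds l) := by
  set M : ℕ → Ω → ℝ := fun n ω => ∑ i ∈ Finset.range n, D i ω with hM
  have hMm : ∀ n, Measurable[ℱ n] (M n) := fun n =>
    Finset.measurable_fun_sum _ fun i hi =>
      (hm i).mono (ℱ.mono (Finset.mem_range.1 hi)) le_rfl
  have hMm' : ∀ n, Measurable (M n) := fun n => (hMm n).mono (ℱ.le n) le_rfl
  have hDm' : ∀ n, Measurable (D n) := fun n => (hm n).mono (ℱ.le _) le_rfl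
  have hMB : ∀ n ω, |M n ω| ≤ n * B := fun n ω => by
    calc |M n ω| ≤ ∑ i ∈ Finset.range n, |D i ω| := Finset.abs_sum_le_sum_abs _ _
      _ ≤ ∑ i ∈ Finset.range n, B := Finset.sum_le_sum fun i _ => hB i ω
      _ = n * B := by simp
  have hint : ∀ (f : Ω → ℝ) (K : ℝ), Measurable f → (∀ ω, |f ω| ≤ K) → Integrable f μ :=
    fun f K hf hK => Integrable.of_bound hf.aestronglyMeasurable K (.of_forall hK)
  have hMi : ∀ n, Integrable (M n) μ := fun n => hint _ _ (hMm' n) (hMB n)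
  have hDi : ∀ n, Integrable (D n) μ := fun n => hint _ _ (hDm' n) (hB n)
  have hMDi : ∀ n, Integrable (M n * D n) μ := fun n =>
    hint _ (n * B * B) ((hMm' n).mul (hDm' n)) fun ω => by
      rw [Pi.mul_apply, abs_mul]
      exact mul_le_mul (hMB n ω) (hB n ω) (abs_nonneg _) ((abs_nonneg _).trans (hMB n ω))
  have hM2i : ∀ n, Integrable (fun ω => M n ω ^ 2) μ := fun n =>
    hint _ ((n * B) ^ 2) ((hMm' n).pow_const 2) fun ω => by
      rw [abs_pow]; exact pow_le_pow_left₀ (abs_nonneg _) (hMB n ω) 2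
  have hD2i : ∀ n, Integrable (fun ω => D n ω ^ 2) μ := fun n =>
    hint _ (B ^ 2) ((hDm' n).pow_const 2) fun ω => by
      rw [abs_pow]; exact pow_le_pow_left₀ (abs_nonneg _) (hB n ω) 2
  have hsucc : ∀ n ω, M (n + 1) ω = M n ω + D n ω := fun n ω => Finset.sum_range_succ _ _
  have hmart : Martingale M ℱ μ := by
    refine martingale_of_condExp_sub_eq_zero_nat (fun n => (hMm n).stronglyMeasurable) hMi
      fun n => ?_
    have : M (n + 1) - M n = D n := by ext ω; simp [hsucc]
    rw [this]; exact hc n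
  have horth : ∀ n, ∫ ω, (M n * D n) ω ∂μ = 0 := fun n => by
    rw [← integral_condExp (ℱ.le n)]
    refine integral_eq_zero_of_ae ?_
    filter_upwards [condExp_mul_of_stronglyMeasurable_left (hMm n).stronglyMeasurable
      (hMDi n) (hDi n), hc n] with ω h1 h2
    rw [h1, Pi.mul_apply, h2]; simp
  have hvar : ∀ n, ∫ ω, M n ω ^ 2 ∂μ = ∫ ω, ∑ i ∈ Finset.range n, D i ω ^ 2 ∂μ := by
    intro n
    rw [integral_finsetSum _ fun i _ => hD2i i]
    induction n with
    | zero => simp [hM]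
    | succ n ih =>
      rw [Finset.sum_range_succ, ← ih]
      have : ∀ ω, M (n + 1) ω ^ 2 = (M n ω ^ 2 + 2 * (M n * D n) ω) + D n ω ^ 2 := fun ω => by
        rw [hsucc, Pi.mul_apply]; ring
      simp_rw [this]
      have hi : Integrable (fun ω => M n ω ^ 2 + 2 * (M n * D n) ω) μ :=
        (hM2i n).add ((hMDi n).const_mul 2)
      rw [integral_add hi (hD2i n),
        integral_add (hM2i n) ((hMDi n).const_mul 2), integral_const_mul, horth]
      ring
  have hL2 : ∀ n, ∫ ω, M n ω ^ 2 ∂μ ≤ C := fun n => by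
    rw [hvar]
    calc _ ≤ ∫ _, C ∂μ := integral_mono (integrable_finsetSum _ fun i _ => hD2i i)
          (integrable_const _) fun ω => hC n ω
      _ = C := by simp
  have hL1 : ∀ n, eLpNorm (M n) 1 μ ≤ (1 + C).toNNReal := fun n => by
    rw [eLpNorm_one_eq_lintegral_enorm, ← ofReal_integral_norm_eq_lintegral_enorm (hMi n)]
    refine ENNReal.ofReal_le_ofReal ?_
    calc ∫ ω, ‖M n ω‖ ∂μ ≤ ∫ ω, (1 + M n ω ^ 2) ∂μ :=
          integral_mono (hMi n).norm ((integrable_const _).add (hM2i n)) fun ω => by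
            simp only [Real.norm_eq_abs]
            nlinarith [sq_abs (M n ω), sq_nonneg (|M n ω| - 1), abs_nonneg (M n ω)]
      _ = 1 + ∫ ω, M n ω ^ 2 ∂μ := by
          rw [integral_add (integrable_const _) (hM2i n)]; simp
      _ ≤ 1 + C := by linarith [hL2 n]
  filter_upwards [hmart.submartingale.ae_tendsto_limitProcess hL1] with ω hω
  exact ⟨_, hω⟩

/-- The martingale increment of the urn when the state moves from `(x, y)` to `(x', y')`. -/
noncomputable def urnIncrement (a x y x' y' : ℝ) : ℝ := (x' - x) / x - a * (y' - y) / y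

/-- The elementary transitions of the urn with parameters `(a, 0, 0, 1)`. -/
def UrnStep (a x y x' y' : ℝ) : Prop := (x' = x + a ∧ y' = y) ∨ (x' = x ∧ y' = y + 1)

/-- Telescoping bound for the squared increments: `1/x - 1/(x+a) = a/(x(x+a))`, and
`x + a ≤ (1 + a/ε) x` as soon as `x ≥ ε`; similarly for `y`. -/
lemma sq_urnIncrement_le {a ε x y x' y' : ℝ} (ha : 1 < a) (hε : 0 < ε) (hx : ε ≤ x) (hy : ε ≤ y)
    (h : UrnStep a x y x' y') :
    urnIncrement a x y x' y' ^ 2 ≤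
      (a * (1 + a / ε) / x + a ^ 2 * (1 + 1 / ε) / y) -
        (a * (1 + a / ε) / x' + a ^ 2 * (1 + 1 / ε) / y') := by
  have hx0 : 0 < x := hε.trans_le hx
  have hy0 : 0 < y := hε.trans_le hy
  have ha0 : 0 < a := by linarith
  have key : ∀ s z : ℝ, 0 < s → ε ≤ z → s / z ^ 2 ≤ (1 + s / ε) * (1 / z - 1 / (z + s)) := by
    intro s z hs hz
    have hz0 : 0 < z := hε.trans_le hz
    have e : (1 + s / ε) * (1 / z - 1 / (z + s)) - s / z ^ 2
        = s ^ 2 * (z - ε) / (ε * z ^ 2 * (z + s)) := by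
      field_simp; ring
    have : 0 ≤ s ^ 2 * (z - ε) / (ε * z ^ 2 * (z + s)) :=
      div_nonneg (mul_nonneg (sq_nonneg _) (by linarith)) (by positivity)
    linarith
  rcases h with ⟨rfl, rfl⟩ | ⟨rfl, rfl⟩
  · have := mul_le_mul_of_nonneg_left (key a x ha0 hx) ha0.le
    calc urnIncrement a x y' (x + a) y' ^ 2 = a * (a / x ^ 2) := by
          unfold urnIncrement; field_simp; ring
      _ ≤ _ := this
      _ = _ := by ring
  · have := mul_le_mul_of_nonneg_left (key 1 y one_pos hy) (sq_nonneg a)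
    calc urnIncrement a x' y x' (y + 1) ^ 2 = a ^ 2 * (1 / y ^ 2) := by
          unfold urnIncrement; field_simp; ring
      _ ≤ _ := this
      _ = _ := by ring

/-- The martingale increment agrees with the increment of `log x - a log y` to second order. -/
lemma abs_log_sub_urnIncrement_le {a x y x' y' : ℝ} (ha : 1 < a) (hx : 0 < x) (hy : 0 < y)
    (h : UrnStep a x y x' y') :
    |((Real.log x' - a * Real.log y') - (Real.log x - a * Real.log y)) -
      urnIncrement a x y x' y'| ≤ urnIncrement a x y x' y' ^ 2 := by
  have ha0 : 0 < a := by linarith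
  have key : ∀ s z : ℝ, 0 < s → 0 < z →
      Real.log (z + s) - Real.log z ≤ s / z ∧
        s / z - (s / z) ^ 2 ≤ Real.log (z + s) - Real.log z := by
    intro s z hs hz
    have hu : 0 < s / z := by positivity
    have e : Real.log (z + s) - Real.log z = Real.log (1 + s / z) := by
      rw [← Real.log_div (by positivity) hz.ne']; congr 1; field_simp
    rw [e]
    set u := s / z
    constructor
    · linarith [Real.log_le_sub_one_of_pos (show 0 < 1 + u by linarith)]
    · have h1 := Real.one_sub_inv_le_log_of_pos (show 0 < 1 + u by linarith)
      have h2 : 1 - (1 + u)⁻¹ - (u - u ^ 2) = u ^ 3 / (1 + u) := by field_simp; ring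
      have h3 : 0 ≤ u ^ 3 / (1 + u) := by positivity
      linarith
  rcases h with ⟨rfl, rfl⟩ | ⟨rfl, rfl⟩
  · obtain ⟨h1, h2⟩ := key a x ha0 hx
    have e : urnIncrement a x y' (x + a) y' = a / x := by unfold urnIncrement; simp
    rw [e, abs_le]
    constructor <;> nlinarith [sq_nonneg (a / x)]
  · obtain ⟨h1, h2⟩ := key 1 y one_pos hy
    have e : urnIncrement a x' y x' (y + 1) = -(a * (1 / y)) := by
      unfold urnIncrement; simp [div_eq_mul_inv]
    rw [e]
    set v := 1 / y
    have h3 := mul_le_mul_of_nonneg_left h1 ha0.le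
    have h4 := mul_le_mul_of_nonneg_left h2 ha0.le
    -- the error term is `a v²`, and `a ≤ a²`
    have h5 : a * v ^ 2 ≤ (-(a * v)) ^ 2 := by
      nlinarith [sq_nonneg v, mul_nonneg ha0.le (sq_nonneg v)]
    rw [abs_le]
    constructor <;> nlinarith [sq_nonneg (a * v)]

theorem UrnStep.le {a x y x' y' : ℝ} (ha : 1 < a) (h : UrnStep a x y x' y') :
    x ≤ x' ∧ y ≤ y' := by
  rcases h with ⟨rfl, rfl⟩ | ⟨rfl, rfl⟩ <;> constructor <;> linarith

/-- Deterministic part of the argument: along a single trajectory, convergence of the martingale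
forces convergence of `Xₙ / Yₙ ^ a` to a positive limit. -/
lemma tendsto_ratio_of_tendsto_sum {a ε C : ℝ} (ha : 1 < a) (hε : 0 < ε) (x y : ℕ → ℝ)
    (hx : ∀ n, ε ≤ x n) (hy : ∀ n, ε ≤ y n)
    (hC : ∀ n, ∑ i ∈ Finset.range n, urnIncrement a (x i) (y i) (x (i + 1)) (y (i + 1)) ^ 2 ≤ C)
    (hs : ∀ n, UrnStep a (x n) (y n) (x (n + 1)) (y (n + 1))) (l : ℝ)
    (hl : Tendsto (fun n => ∑ i ∈ Finset.range n,
      urnIncrement a (x i) (y i) (x (i + 1)) (y (i + 1))) atTop (nhds l)) :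
    ∃ L : ℝ, 0 < L ∧ Tendsto (fun n => x n / y n ^ a) atTop (nhds L) := by
  set ξ : ℕ → ℝ := fun i => urnIncrement a (x i) (y i) (x (i + 1)) (y (i + 1)) with hξ
  set g : ℕ → ℝ := fun n => Real.log (x n) - a * Real.log (y n) with hg
  have hx0 : ∀ n, 0 < x n := fun n => hε.trans_le (hx n)
  have hy0 : ∀ n, 0 < y n := fun n => hε.trans_le (hy n)
  have hsum : Summable fun n => (g (n + 1) - g n) - ξ n := by
    have h2 : Summable fun n => ξ n ^ 2 := summable_of_sum_range_le (fun n => sq_nonneg _) hC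
    refine Summable.of_norm_bounded h2 fun n => ?_
    exact abs_log_sub_urnIncrement_le ha (hx0 n) (hy0 n) (hs n)
  have hlim := ((hsum.hasSum.tendsto_sum_nat).add hl).add_const (g 0)
  set c := (∑' n, ((g (n + 1) - g n) - ξ n)) + l + g 0
  have hgl : Tendsto g atTop (nhds c) := by
    refine hlim.congr fun n => ?_
    have : ∀ i, (g (i + 1) - g i - ξ i) + ξ i = g (i + 1) - g i := fun i => by ring
    rw [← Finset.sum_add_distrib, Finset.sum_congr rfl fun i _ => this i,
      Finset.sum_range_sub]
    ring
  refine ⟨Real.exp c, Real.exp_pos c, (Real.continuous_exp.tendsto c |>.comp hgl).congr fun n => ?_⟩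
  simp only [hg, Function.comp_apply]
  rw [Real.exp_sub, Real.exp_log (hx0 n), mul_comm a, Real.rpow_def_of_pos (hy0 n)]

/-- The increment has zero conditional mean on any `ℱ n`-event where `X n` and `Y n` are bounded
below; there `a / X n` and `a / Y n` are bounded, so they can be pulled out of the conditional
expectation of the step indicators. -/
lemma condExp_urnIncrement {Ω : Type*} {mΩ : MeasurableSpace Ω} (μ : Measure Ω)
    [IsProbabilityMeasure μ] (ℱ : Filtration ℕ mΩ) (a : ℝ) (ha : 1 < a)
    (X Y : ℕ → Ω → ℝ) (hXY : IsUrn μ ℱ a 0 0 1 X Y) (ε : ℝ) (hε : 0 < ε) (n : ℕ) (A : Set Ω)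
    (hA : MeasurableSet[ℱ n] A) (hAε : ∀ ω ∈ A, ε ≤ X n ω ∧ ε ≤ Y n ω) :
    μ[A.indicator fun ω => urnIncrement a (X n ω) (Y n ω) (X (n + 1) ω) (Y (n + 1) ω) | ℱ n]
      =ᵐ[μ] 0 := by
  obtain ⟨hX, hY, hX0, hY0, hstep, hcX, hcY⟩ := hXY
  have ha0 : 0 < a := by linarith
  -- The step indicators are multiples of the increments of `X` and `Y`.
  set I : Ω → ℝ := fun ω => (X (n + 1) ω - X n ω) / a with hI
  set J : Ω → ℝ := fun ω => Y (n + 1) ω - Y n ω with hJ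
  have hIc : μ[I | ℱ n] =ᵐ[μ] fun ω => X n ω / (X n ω + Y n ω) := by
    refine EventuallyEq.trans ?_ (hcX n)
    refine Eq.eventuallyEq (congrArg (fun f => μ[f | ℱ n]) ?_)
    ext ω
    simp only [hI]
    rcases hstep n ω with ⟨h1, h2⟩ | ⟨h1, h2⟩
    · rw [if_pos ⟨h1, h2⟩, h1]; field_simp; ring
    · rw [if_neg (by rintro ⟨h3, -⟩; linarith), h1]; simp
  have hJc : μ[J | ℱ n] =ᵐ[μ] fun ω => Y n ω / (X n ω + Y n ω) := by
    refine EventuallyEq.trans ?_ (hcY n)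
    refine Eq.eventuallyEq (congrArg (fun f => μ[f | ℱ n]) ?_)
    ext ω
    simp only [hJ]
    rcases hstep n ω with ⟨h1, h2⟩ | ⟨h1, h2⟩
    · rw [if_neg (by rintro ⟨h3, -⟩; linarith), h2]; simp
    · rw [if_pos ⟨h1, h2⟩, h2]; simp
  have hXm : ∀ k, Measurable (X k) := fun k => (hX k).mono (ℱ.le k) le_rfl
  have hYm : ∀ k, Measurable (Y k) := fun k => (hY k).mono (ℱ.le k) le_rfl
  have hIm : Measurable I := ((hXm _).sub (hXm _)).div_const a
  have hJm : Measurable J := (hYm _).sub (hYm _)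
  have hI1 : ∀ ω, |I ω| ≤ 1 := fun ω => by
    simp only [hI]
    rcases hstep n ω with ⟨h1, h2⟩ | ⟨h1, h2⟩ <;> rw [h1] <;> simp [ha0.ne']
  have hJ1 : ∀ ω, |J ω| ≤ 1 := fun ω => by
    simp only [hJ]
    rcases hstep n ω with ⟨h1, h2⟩ | ⟨h1, h2⟩ <;> rw [h2] <;> simp
  set F : Ω → ℝ := A.indicator fun ω => a / X n ω with hF
  set G : Ω → ℝ := A.indicator fun ω => a / Y n ω with hG
  have hFm : Measurable[ℱ n] F := Measurable.indicator (measurable_const.div (hX n)) hA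
  have hGm : Measurable[ℱ n] G := Measurable.indicator (measurable_const.div (hY n)) hA
  have hbd : ∀ z : Ω → ℝ, (∀ ω ∈ A, ε ≤ z ω) →
      ∀ ω, |A.indicator (fun ω => a / z ω) ω| ≤ a / ε := by
    intro z hz ω
    by_cases h : ω ∈ A
    · have := hz ω h
      rw [indicator_of_mem h, abs_of_nonneg (div_nonneg ha0.le (hε.le.trans this))]
      gcongr
    · rw [indicator_of_notMem h, abs_zero]; positivity
  have hint : ∀ (f : Ω → ℝ) (K : ℝ), Measurable f → (∀ ω, |f ω| ≤ K) → Integrable f μ :=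
    fun f K hf hK => Integrable.of_bound hf.aestronglyMeasurable K (.of_forall hK)
  have hmul : ∀ f g : Ω → ℝ, Measurable f → Measurable g → (∀ ω, |f ω| ≤ a / ε) →
      (∀ ω, |g ω| ≤ 1) → Integrable (f * g) μ := fun f g hf hg hf1 hg1 =>
    hint _ (a / ε * 1) (hf.mul hg) fun ω => by
      rw [Pi.mul_apply, abs_mul]
      exact mul_le_mul (hf1 ω) (hg1 ω) (abs_nonneg _) (by positivity)
  have hFI := hmul F I (hFm.mono (ℱ.le n) le_rfl) hIm (hbd _ fun ω h => (hAε ω h).1) hI1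
  have hGJ := hmul G J (hGm.mono (ℱ.le n) le_rfl) hJm (hbd _ fun ω h => (hAε ω h).2) hJ1
  have heq : (A.indicator fun ω =>
      urnIncrement a (X n ω) (Y n ω) (X (n + 1) ω) (Y (n + 1) ω)) = F * I - G * J := by
    ext ω
    by_cases h : ω ∈ A
    · have := hX0 n ω
      have := hY0 n ω
      simp only [hF, hG, hI, hJ, Pi.sub_apply, Pi.mul_apply, indicator_of_mem h, urnIncrement]
      field_simp
    · simp [hF, hG, indicator_of_notMem h]
  rw [heq]
  filter_upwards [condExp_sub hFI hGJ (ℱ n),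
    condExp_mul_of_stronglyMeasurable_left hFm.stronglyMeasurable hFI (hint _ 1 hIm hI1),
    condExp_mul_of_stronglyMeasurable_left hGm.stronglyMeasurable hGJ (hint _ 1 hJm hJ1),
    hIc, hJc] with ω h1 h2 h3 h4 h5
  rw [h1, Pi.sub_apply, h2, h3, Pi.mul_apply, Pi.mul_apply, h4, h5]
  by_cases h : ω ∈ A
  · have := hX0 n ω
    have := hY0 n ω
    simp only [hF, hG, indicator_of_mem h, Pi.zero_apply]
    field_simp
    ring
  · simp [hF, hG, indicator_of_notMem h]

/-- **Theorem (urn 1)**: For the generalized urn process with parameters `(a, 0, 0, 1)`,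
`a > 1`, the ratio `Xₙ / Yₙ^a` converges almost surely to a random limit in `(0, ∞)`. -/
theorem urn_ratio_converges
    {Ω : Type*} {mΩ : MeasurableSpace Ω} (μ : Measure Ω) [IsProbabilityMeasure μ]
    (ℱ : Filtration ℕ mΩ) (a : ℝ) (ha : 1 < a)
    (X Y : ℕ → Ω → ℝ) (hXY : IsUrn μ ℱ a 0 0 1 X Y) :
    ∀ᵐ ω ∂μ, ∃ L : ℝ, 0 < L ∧
      Tendsto (fun n => X n ω / Y n ω ^ a) atTop (nhds L) := by
  have hXY' := hXY
  obtain ⟨hX, hY, hX0, hY0, hstep, -, -⟩ := hXY'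
  have ha0 : 0 < a := by linarith
  have hs : ∀ n ω, UrnStep a (X n ω) (Y n ω) (X (n + 1) ω) (Y (n + 1) ω) := fun n ω => by
    simpa [UrnStep] using hstep n ω
  -- It suffices to treat the events `{X₀, Y₀ ≥ 1/(k+1)}`, which exhaust the space.
  suffices H : ∀ k : ℕ, ∀ᵐ ω ∂μ, 1 / ((k : ℝ) + 1) ≤ X 0 ω → 1 / ((k : ℝ) + 1) ≤ Y 0 ω →
      ∃ L : ℝ, 0 < L ∧ Tendsto (fun n => X n ω / Y n ω ^ a) atTop (nhds L) by
    filter_upwards [ae_all_iff.2 H] with ω hω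
    obtain ⟨k, hk⟩ := exists_nat_one_div_lt (lt_min (hX0 0 ω) (hY0 0 ω))
    exact hω k (hk.le.trans (min_le_left _ _)) (hk.le.trans (min_le_right _ _))
  intro k
  set ε : ℝ := 1 / ((k : ℝ) + 1)
  have hε : 0 < ε := by positivity
  set A : Set Ω := {ω | ε ≤ X 0 ω ∧ ε ≤ Y 0 ω} with hAdef
  have hA0 : MeasurableSet[ℱ 0] A :=
    (measurableSet_le measurable_const (hX 0)).inter (measurableSet_le measurable_const (hY 0))
  have hAε : ∀ n, ∀ ω ∈ A, ε ≤ X n ω ∧ ε ≤ Y n ω := by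
    intro n ω hω
    induction n with
    | zero => exact hω
    | succ n ih =>
      have := (hs n ω).le ha
      exact ⟨ih.1.trans this.1, ih.2.trans this.2⟩
  set D : ℕ → Ω → ℝ := fun n => A.indicator fun ω =>
    urnIncrement a (X n ω) (Y n ω) (X (n + 1) ω) (Y (n + 1) ω) with hD
  set C : ℝ := a * (1 + a / ε) / ε + a ^ 2 * (1 + 1 / ε) / ε with hCdef
  have hC0 : 0 ≤ C := by positivity
  have hC : ∀ n ω, ∑ i ∈ Finset.range n, D i ω ^ 2 ≤ C := by
    intro n ω
    by_cases h : ω ∈ A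
    · set V : ℕ → ℝ := fun i => a * (1 + a / ε) / X i ω + a ^ 2 * (1 + 1 / ε) / Y i ω with hV
      calc ∑ i ∈ Finset.range n, D i ω ^ 2 ≤ ∑ i ∈ Finset.range n, (V i - V (i + 1)) := by
            refine Finset.sum_le_sum fun i _ => ?_
            simp only [hD, indicator_of_mem h]
            exact sq_urnIncrement_le ha hε (hAε i ω h).1 (hAε i ω h).2 (hs i ω)
        _ = V 0 - V n := Finset.sum_range_sub' _ _
        _ ≤ V 0 := by
            have := hX0 n ω
            have := hY0 n ω
            have : 0 ≤ V n := by positivity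
            linarith
        _ ≤ C := by
            obtain ⟨h1, h2⟩ := h
            simp only [hV, hCdef]
            gcongr
    · simpa [hD, indicator_of_notMem h] using hC0
  have hB : ∀ n ω, |D n ω| ≤ 1 + C := by
    intro n ω
    have h1 := hC (n + 1) ω
    rw [Finset.sum_range_succ] at h1
    have h2 : 0 ≤ ∑ i ∈ Finset.range n, D i ω ^ 2 := Finset.sum_nonneg fun i _ => sq_nonneg _
    nlinarith [sq_abs (D n ω), sq_nonneg (|D n ω| - 1), abs_nonneg (D n ω)]
  have hDm : ∀ n, Measurable[ℱ (n + 1)] (D n) := by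
    intro n
    have h1 : Measurable[ℱ (n + 1)] (X n) := (hX n).mono (ℱ.mono n.le_succ) le_rfl
    have h2 : Measurable[ℱ (n + 1)] (Y n) := (hY n).mono (ℱ.mono n.le_succ) le_rfl
    refine Measurable.indicator ?_ (ℱ.mono (Nat.zero_le _) _ hA0)
    exact (((hX (n + 1)).sub h1).div h1).sub ((((hY (n + 1)).sub h2).const_mul a).div h2)
  have hDc : ∀ n, μ[D n | ℱ n] =ᵐ[μ] 0 := fun n =>
    condExp_urnIncrement μ ℱ a ha X Y hXY ε hε n A (ℱ.mono (Nat.zero_le _) _ hA0) (hAε n)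
  filter_upwards [ae_tendsto_sum_of_sq_sum_le μ ℱ D hDm _ hB hDc C hC] with ω ⟨l, hl⟩ h1 h2
  have hω : ω ∈ A := ⟨h1, h2⟩
  have hC' := fun n => hC n ω
  simp only [hD, indicator_of_mem hω] at hl hC'
  exact tendsto_ratio_of_tendsto_sum ha hε (fun n => X n ω) (fun n => Y n ω)
    (fun n => (hAε n ω hω).1) (fun n => (hAε n ω hω).2) hC' (fun n => hs n ω) l hl
end
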